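/- arXiv:1309.1974 — 3 statements merged into one kernel-verified Lean document; each statement's English description precedes it below -/
import Mathlib

section
/- Let 1 ≤ n < α, p = 2n/(n+α), q = 2n/(n−α). Let p₁ ∈ (0, 2n/(n+α)) and s ∈ (n/(n−α), 0) satisfy 1/p₁ + 1/s − 1 = (n−α)/(2n). Suppose f ∈ L^p(ℝⁿ) is a nonnegative radially symmetric function satisfying f(x) ≤ ε|x|^{−n/p} for all x ≠ 0, for some ε > 0. Then there exists a constant C_n > 0, independent of f and ε, such that ‖I_α f‖_{L^q(ℝⁿ)} ≥ C_n · ε^{1 − p/p₁} · ‖f‖_{L^p(ℝⁿ)}^{p/p₁}. -/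
open MeasureTheory ENNReal

/-- The Riesz-type integral operator `I_α f(x) = ∫_{ℝⁿ} f(y) |x-y|^(α-n) dy` for `α > n`,
valued in `ℝ≥0∞`. -/
noncomputable def rieszNeg (n : ℕ) (α : ℝ) (f : EuclideanSpace ℝ (Fin n) → ℝ)
    (x : EuclideanSpace ℝ (Fin n)) : ℝ≥0∞ :=
  ∫⁻ y, ENNReal.ofReal (f y * dist x y ^ (α - n))

/-!
Let `d` be the dimension, `a = α - d > 0`, `dμ(x) = ‖x‖⁻ᵈ dx` and `ρ(x, y) = ‖x - y‖ / √(‖x‖ ‖y‖)`.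
By the choice of `p` and `q`, the substitution `F(x) = ‖x‖ ^ (d / p) f(x)` turns the pointwise
bound on `f` into `F ≤ ε`, preserves the `L^p` norm, and turns `I_α f` into
`T F(x) = ∫ F(y) ρ(x, y) ^ a dμ(y)` without changing the `L^q` norm, the norms of `F` and `T F`
being taken with respect to `μ`.

For `0 < β < d` the integrals `∫ ρ(x, y) ^ (-β) dμ(y)` are bounded uniformly in `x`. Split
`ρ ^ a = ρ ^ (aθ) ρ ^ (a(1-θ))`. Since `F ^ p ≤ ε ^ (p - p₁) F ^ p₁`, Hölder's inequality with
exponents `1 / p₁` and `1 / (1 - p₁)` gives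
`∫ F ^ p ρ(x, ·) ^ (a p₁ θ) dμ ≤ C ε ^ (p - p₁) T F(x) ^ p₁`. With `m = -q / p₁`, interpolating the
weights of `F ^ p` between `ρ ^ (a p₁ θ)` and `ρ ^ (a q θ)` then yields
`T F(x) ^ q ‖F‖_p ^ (p (m + 1)) ≤ C' ε ^ ((p - p₁) m) ∫ F ^ p ρ(x, ·) ^ (a q θ) dμ`,
and integrating in `x` bounds `∫ (T F) ^ q dμ` from above, that is, `‖T F‖_q` from below.
-/

open Module
open scoped NNReal

section ENNRealPowers

variable {x y : ℝ≥0∞}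

lemma ennreal_rpow_le_rpow_of_nonpos {z : ℝ} (h : x ≤ y) (hz : z ≤ 0) : y ^ z ≤ x ^ z := by
  rw [← neg_neg z, ENNReal.rpow_neg y, ENNReal.rpow_neg x, ENNReal.inv_le_inv]
  exact ENNReal.rpow_le_rpow h (neg_nonneg.mpr hz)

lemma ennreal_rpow_neg_le_mul_rpow_neg {c : ℝ≥0∞} (hc0 : c ≠ 0) (hct : c ≠ ∞) (h : y ≤ c * x)
    {z : ℝ} (hz : 0 ≤ z) : x ^ (-z) ≤ c ^ z * y ^ (-z) :=
  calc x ^ (-z) = c ^ z * (c * x) ^ (-z) := by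
        have hmul : (c * x) ^ (-z) = c ^ (-z) * x ^ (-z) := by
          simp [ENNReal.mul_rpow_eq_ite, hc0, hct]
        rw [hmul, ← mul_assoc, ← ENNReal.rpow_add _ _ hc0 hct, add_neg_cancel,
          ENNReal.rpow_zero, one_mul]
    _ ≤ c ^ z * y ^ (-z) := by
        gcongr c ^ z * ?_
        exact ennreal_rpow_le_rpow_of_nonpos h (neg_nonpos.mpr hz)

lemma ennreal_rpow_le_rpow_sub_mul_rpow {r p : ℝ} (hr : 0 ≤ r) (hrp : r ≤ p) (h : x ≤ y) :
    x ^ p ≤ y ^ (p - r) * x ^ r :=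
  calc x ^ p = x ^ (p - r) * x ^ r := by
        rw [← ENNReal.rpow_add_of_nonneg _ _ (sub_nonneg.mpr hrp) hr, sub_add_cancel]
    _ ≤ y ^ (p - r) * x ^ r := by gcongr

end ENNRealPowers

section ReverseHolder

variable {Y : Type*} [MeasurableSpace Y] {ν : Measure Y}

lemma lintegral_rpow_mul_rpow_le {F k : Y → ℝ≥0∞} (hF : AEMeasurable F ν)
    (hk : AEMeasurable k ν) (hk0 : ∀ᵐ y ∂ν, k y ≠ 0) (hkt : ∀ᵐ y ∂ν, k y ≠ ∞)
    {r : ℝ} (hr0 : 0 ≤ r) (hr1 : r < 1) (θ : ℝ) :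
    ∫⁻ y, F y ^ r * k y ^ (r * θ) ∂ν ≤
      (∫⁻ y, F y * k y ∂ν) ^ r * (∫⁻ y, k y ^ (-(r * (1 - θ) / (1 - r))) ∂ν) ^ (1 - r) := by
  have h1r : 0 < 1 - r := sub_pos.mpr hr1
  refine le_of_eq_of_le (lintegral_congr_ae ?_) (ENNReal.lintegral_mul_norm_pow_le
    (hF.mul hk) (hk.pow_const _) hr0 h1r.le (add_sub_cancel r 1))
  filter_upwards [hk0, hkt] with y h0 ht
  have hexp : r * θ = r + -(r * (1 - θ) / (1 - r)) * (1 - r) := by field_simp; ring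
  simp only [Pi.mul_apply]
  rw [ENNReal.mul_rpow_of_nonneg _ _ hr0, mul_assoc, ← ENNReal.rpow_mul,
    ← ENNReal.rpow_add _ _ h0 ht, ← hexp]

lemma lintegral_rpow_add_one_le {g h : Y → ℝ≥0∞} (hg : AEMeasurable g ν) (hh : AEMeasurable h ν)
    (hh0 : ∀ᵐ y ∂ν, h y ≠ 0) (hht : ∀ᵐ y ∂ν, h y ≠ ∞) {m : ℝ} (hm : 0 ≤ m) :
    (∫⁻ y, g y ∂ν) ^ (m + 1) ≤ (∫⁻ y, g y * h y ∂ν) ^ m * ∫⁻ y, g y * h y ^ (-m) ∂ν := by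
  have hm1 : 0 < m + 1 := by positivity
  have hsum : m / (m + 1) + 1 / (m + 1) = 1 := by field_simp
  have holder := ENNReal.lintegral_mul_norm_pow_le (hg.mul hh) (hg.mul (hh.pow_const (-m)))
    (p := m / (m + 1)) (q := 1 / (m + 1)) (by positivity) (by positivity) hsum
  have hfactor : ∀ᵐ y ∂ν, g y =
      (g y * h y) ^ (m / (m + 1)) * (g y * h y ^ (-m)) ^ (1 / (m + 1)) := by
    filter_upwards [hh0, hht] with y h0 ht
    rw [ENNReal.mul_rpow_of_nonneg _ _ (by positivity),
      ENNReal.mul_rpow_of_nonneg _ _ (by positivity), mul_mul_mul_comm,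
      ← ENNReal.rpow_add_of_nonneg _ _ (by positivity) (by positivity), hsum, ENNReal.rpow_one,
      ← ENNReal.rpow_mul, ← ENNReal.rpow_add _ _ h0 ht,
      show m / (m + 1) + -m * (1 / (m + 1)) = 0 by ring, ENNReal.rpow_zero, mul_one]
  calc (∫⁻ y, g y ∂ν) ^ (m + 1)
      ≤ ((∫⁻ y, g y * h y ∂ν) ^ (m / (m + 1)) *
          (∫⁻ y, g y * h y ^ (-m) ∂ν) ^ (1 / (m + 1))) ^ (m + 1) := by
        gcongr
        exact (lintegral_congr_ae hfactor).trans_le holder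
    _ = (∫⁻ y, g y * h y ∂ν) ^ m * ∫⁻ y, g y * h y ^ (-m) ∂ν := by
        rw [ENNReal.mul_rpow_of_nonneg _ _ hm1.le, ← ENNReal.rpow_mul, ← ENNReal.rpow_mul,
          div_mul_cancel₀ _ hm1.ne', div_mul_cancel₀ _ hm1.ne', ENNReal.rpow_one]

lemma lintegral_rpow_mul_rpow_le_of_le {F k : Y → ℝ≥0∞} (hF : AEMeasurable F ν)
    (hk : AEMeasurable k ν) (hk0 : ∀ᵐ y ∂ν, k y ≠ 0) (hkt : ∀ᵐ y ∂ν, k y ≠ ∞)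
    {M A : ℝ≥0∞} (hFM : ∀ᵐ y ∂ν, F y ≤ M) {p r : ℝ} (hr0 : 0 ≤ r) (hr1 : r < 1) (hrp : r ≤ p)
    (θ : ℝ) (hA : ∫⁻ y, k y ^ (-(r * (1 - θ) / (1 - r))) ∂ν ≤ A) :
    ∫⁻ y, F y ^ p * k y ^ (r * θ) ∂ν ≤ M ^ (p - r) * A ^ (1 - r) * (∫⁻ y, F y * k y ∂ν) ^ r := by
  have h1r : 0 ≤ 1 - r := sub_nonneg.mpr hr1.le
  calc ∫⁻ y, F y ^ p * k y ^ (r * θ) ∂ν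
      ≤ ∫⁻ y, M ^ (p - r) * (F y ^ r * k y ^ (r * θ)) ∂ν := by
        refine lintegral_mono_ae (hFM.mono fun y hy ↦ ?_)
        rw [← mul_assoc]
        gcongr
        exact ennreal_rpow_le_rpow_sub_mul_rpow hr0 hrp hy
    _ = M ^ (p - r) * ∫⁻ y, F y ^ r * k y ^ (r * θ) ∂ν :=
        lintegral_const_mul'' _ ((hF.pow_const _).mul (hk.pow_const _))
    _ ≤ M ^ (p - r) * ((∫⁻ y, F y * k y ∂ν) ^ r * A ^ (1 - r)) := by
        gcongr
        exact (lintegral_rpow_mul_rpow_le hF hk hk0 hkt hr0 hr1 θ).trans (by gcongr)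
    _ = M ^ (p - r) * A ^ (1 - r) * (∫⁻ y, F y * k y ∂ν) ^ r := by ring

lemma lintegral_mul_rpow_mul_lintegral_rpow_le {F k : Y → ℝ≥0∞} (hF : AEMeasurable F ν)
    (hk : AEMeasurable k ν) (hk0 : ∀ᵐ y ∂ν, k y ≠ 0) (hkt : ∀ᵐ y ∂ν, k y ≠ ∞)
    {M A : ℝ≥0∞} (hFM : ∀ᵐ y ∂ν, F y ≤ M) {p q r : ℝ} (hr0 : 0 < r) (hr1 : r < 1) (hrp : r ≤ p)
    (hq : q ≤ 0) (θ : ℝ) (hA : ∫⁻ y, k y ^ (-(r * (1 - θ) / (1 - r))) ∂ν ≤ A) :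
    (∫⁻ y, F y * k y ∂ν) ^ q * (∫⁻ y, F y ^ p ∂ν) ^ (-q / r + 1) ≤
      (M ^ (p - r) * A ^ (1 - r)) ^ (-q / r) * ∫⁻ y, F y ^ p * k y ^ (q * θ) ∂ν := by
  have hm : 0 ≤ -q / r := div_nonneg (neg_nonneg.mpr hq) hr0.le
  set H := ∫⁻ y, F y * k y ∂ν
  set D := M ^ (p - r) * A ^ (1 - r)
  set J := ∫⁻ y, F y ^ p * k y ^ (q * θ) ∂ν
  have interpolation : (∫⁻ y, F y ^ p ∂ν) ^ (-q / r + 1) ≤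
      (∫⁻ y, F y ^ p * k y ^ (r * θ) ∂ν) ^ (-q / r) * J := by
    have h0 : ∀ᵐ y ∂ν, k y ^ (r * θ) ≠ 0 := by
      filter_upwards [hk0, hkt] with y h0 ht
      exact (ENNReal.rpow_pos (pos_iff_ne_zero.mpr h0) ht).ne'
    have ht : ∀ᵐ y ∂ν, k y ^ (r * θ) ≠ ∞ := by
      filter_upwards [hk0, hkt] with y h0 ht using ENNReal.rpow_ne_top_of_ne_zero h0 ht
    convert lintegral_rpow_add_one_le (hF.pow_const p) (hk.pow_const (r * θ)) h0 ht hm using 5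
    rw [← ENNReal.rpow_mul]
    congr 1
    field_simp
  calc H ^ q * (∫⁻ y, F y ^ p ∂ν) ^ (-q / r + 1)
      ≤ H ^ q * ((D * H ^ r) ^ (-q / r) * J) := by
        gcongr
        exact interpolation.trans (by
          gcongr
          exact lintegral_rpow_mul_rpow_le_of_le hF hk hk0 hkt hFM hr0.le hr1 hrp θ hA)
    _ = (H ^ q * (H ^ q)⁻¹) * (D ^ (-q / r) * J) := by
        rw [ENNReal.mul_rpow_of_nonneg _ _ hm, ← ENNReal.rpow_mul, mul_div_cancel₀ _ hr0.ne',
          ENNReal.rpow_neg]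
        ring
    _ ≤ D ^ (-q / r) * J := mul_le_of_le_one_left' (ENNReal.mul_inv_le_one _)

end ReverseHolder

section KernelOperator

variable {X Y : Type*} [MeasurableSpace X] [MeasurableSpace Y] {μ : Measure X} {ν : Measure Y}
  [SFinite μ] [SFinite ν]

lemma lintegral_kernel_rpow_mul_lintegral_rpow_le {F : Y → ℝ≥0∞} {K : X → Y → ℝ≥0∞}
    (hF : Measurable F) (hK : Measurable (Function.uncurry K))
    (hK0 : ∀ᵐ x ∂μ, ∀ᵐ y ∂ν, K x y ≠ 0) (hKt : ∀ᵐ x ∂μ, ∀ᵐ y ∂ν, K x y ≠ ∞)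
    {M A B : ℝ≥0∞} (hFM : ∀ᵐ y ∂ν, F y ≤ M) {p q r : ℝ} (hr0 : 0 < r) (hr1 : r < 1) (hrp : r ≤ p)
    (hq : q ≤ 0) (θ : ℝ) (hN0 : ∫⁻ y, F y ^ p ∂ν ≠ 0) (hNt : ∫⁻ y, F y ^ p ∂ν ≠ ∞)
    (hA : ∀ᵐ x ∂μ, ∫⁻ y, K x y ^ (-(r * (1 - θ) / (1 - r))) ∂ν ≤ A)
    (hB : ∀ᵐ y ∂ν, ∫⁻ x, K x y ^ (q * θ) ∂μ ≤ B) :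
    (∫⁻ x, (∫⁻ y, F y * K x y ∂ν) ^ q ∂μ) * (∫⁻ y, F y ^ p ∂ν) ^ (-q / r) ≤
      (M ^ (p - r) * A ^ (1 - r)) ^ (-q / r) * B := by
  set N := ∫⁻ y, F y ^ p ∂ν
  set D := M ^ (p - r) * A ^ (1 - r)
  have hKxy : Measurable fun z : X × Y ↦ K z.1 z.2 := hK
  have hH : Measurable fun x ↦ ∫⁻ y, F y * K x y ∂ν :=
    Measurable.lintegral_prod_right' (f := fun z : X × Y ↦ F z.2 * K z.1 z.2) (by fun_prop)
  have hFK : Measurable fun z : X × Y ↦ F z.2 ^ p * K z.1 z.2 ^ (q * θ) := by fun_prop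
  have tonelli : ∫⁻ x, ∫⁻ y, F y ^ p * K x y ^ (q * θ) ∂ν ∂μ ≤ B * N :=
    calc ∫⁻ x, ∫⁻ y, F y ^ p * K x y ^ (q * θ) ∂ν ∂μ
        = ∫⁻ y, ∫⁻ x, F y ^ p * K x y ^ (q * θ) ∂μ ∂ν := lintegral_lintegral_swap hFK.aemeasurable
      _ ≤ ∫⁻ y, B * F y ^ p ∂ν := by
          refine lintegral_mono_ae (hB.mono fun y hy ↦ ?_)
          rw [lintegral_const_mul _ (hK.of_uncurry_right.pow_const _), mul_comm]
          gcongr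
      _ = B * N := lintegral_const_mul _ (hF.pow_const p)
  have key : (∫⁻ x, (∫⁻ y, F y * K x y ∂ν) ^ q ∂μ) * N ^ (-q / r) * N ≤ D ^ (-q / r) * B * N :=
    calc (∫⁻ x, (∫⁻ y, F y * K x y ∂ν) ^ q ∂μ) * N ^ (-q / r) * N
        = ∫⁻ x, (∫⁻ y, F y * K x y ∂ν) ^ q * N ^ (-q / r + 1) ∂μ := by
          rw [lintegral_mul_const _ (hH.pow_const q), ENNReal.rpow_add _ _ hN0 hNt,
            ENNReal.rpow_one, mul_assoc]
      _ ≤ ∫⁻ x, D ^ (-q / r) * ∫⁻ y, F y ^ p * K x y ^ (q * θ) ∂ν ∂μ := by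
          refine lintegral_mono_ae ?_
          filter_upwards [hK0, hKt, hA] with x h0 ht hAx
          exact lintegral_mul_rpow_mul_lintegral_rpow_le hF.aemeasurable
            hK.of_uncurry_left.aemeasurable h0 ht hFM hr0 hr1 hrp hq θ hAx
      _ = D ^ (-q / r) * ∫⁻ x, ∫⁻ y, F y ^ p * K x y ^ (q * θ) ∂ν ∂μ :=
          lintegral_const_mul _ hFK.lintegral_prod_right'
      _ ≤ D ^ (-q / r) * B * N := by
          rw [mul_assoc]
          gcongr
  exact (ENNReal.mul_le_mul_iff_left hN0 hNt).mp key

theorem le_lintegral_kernel_rpow_rpow {F : Y → ℝ≥0∞} {K : X → Y → ℝ≥0∞}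
    (hF : Measurable F) (hK : Measurable (Function.uncurry K))
    (hK0 : ∀ᵐ x ∂μ, ∀ᵐ y ∂ν, K x y ≠ 0) (hKt : ∀ᵐ x ∂μ, ∀ᵐ y ∂ν, K x y ≠ ∞)
    {M A B : ℝ≥0} (hM0 : M ≠ 0) (hA0 : A ≠ 0) (hB0 : B ≠ 0) (hFM : ∀ᵐ y ∂ν, F y ≤ M)
    {p q r : ℝ} (hr0 : 0 < r) (hr1 : r < 1) (hrp : r ≤ p) (hq : q < 0) (θ : ℝ)
    (hNt : ∫⁻ y, F y ^ p ∂ν ≠ ∞)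
    (hA : ∀ᵐ x ∂μ, ∫⁻ y, K x y ^ (-(r * (1 - θ) / (1 - r))) ∂ν ≤ A)
    (hB : ∀ᵐ y ∂ν, ∫⁻ x, K x y ^ (q * θ) ∂μ ≤ B) :
    ((A ^ (-((1 - r) / r)) * B ^ (1 / q) : ℝ≥0) : ℝ≥0∞) * M ^ (1 - p / r) *
        (∫⁻ y, F y ^ p ∂ν) ^ (1 / r) ≤
      (∫⁻ x, (∫⁻ y, F y * K x y ∂ν) ^ q ∂μ) ^ (1 / q) := by
  rcases eq_or_ne (∫⁻ y, F y ^ p ∂ν) 0 with hN | hN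
  · rw [hN, ENNReal.zero_rpow_of_pos (one_div_pos.mpr hr0), mul_zero]
    exact bot_le
  have hq1 : 1 / q ≤ 0 := (one_div_neg.mpr hq).le
  have bound := lintegral_kernel_rpow_mul_lintegral_rpow_le hF hK hK0 hKt hFM hr0 hr1 hrp hq.le θ
    hN hNt hA hB
  lift ∫⁻ y, F y ^ p ∂ν to ℝ≥0 using hNt with N
  replace hN : N ≠ 0 := ENNReal.coe_ne_zero.mp hN
  have hNm : N ^ (-q / r) ≠ 0 := (NNReal.rpow_pos (pos_iff_ne_zero.mpr hN)).ne'
  have constant_eq : ((M ^ (p - r) * A ^ (1 - r)) ^ (-q / r) * B / N ^ (-q / r)) ^ (1 / q) =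
      A ^ (-((1 - r) / r)) * B ^ (1 / q) * M ^ (1 - p / r) * N ^ (1 / r) := by
    rw [NNReal.div_rpow, NNReal.mul_rpow, ← NNReal.rpow_mul, ← NNReal.rpow_mul,
      show -q / r * (1 / q) = -(1 / r) by field_simp [hq.ne], NNReal.mul_rpow, ← NNReal.rpow_mul,
      ← NNReal.rpow_mul, NNReal.rpow_neg N, div_inv_eq_mul,
      show (p - r) * -(1 / r) = 1 - p / r by field_simp; ring,
      show (1 - r) * -(1 / r) = -((1 - r) / r) by ring]
    ring
  rw [← ENNReal.coe_rpow_of_ne_zero hM0, ← ENNReal.coe_rpow_of_ne_zero hA0, ← ENNReal.coe_mul,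
    ← ENNReal.coe_rpow_of_ne_zero hN, ← ENNReal.coe_rpow_of_ne_zero (by positivity),
    ← ENNReal.coe_mul, ← ENNReal.le_div_iff_mul_le (by simp [hNm]) (by simp),
    ← ENNReal.coe_div hNm] at bound
  refine le_of_eq_of_le ?_ (ennreal_rpow_le_rpow_of_nonpos bound hq1)
  rw [← ENNReal.coe_rpow_of_ne_zero hM0, ← ENNReal.coe_rpow_of_ne_zero hN,
    ← ENNReal.coe_rpow_of_ne_zero (by positivity), constant_eq]
  norm_cast

end KernelOperator

section RieszComposition

variable {E : Type*} [NormedAddCommGroup E] [NormedSpace ℝ E] [FiniteDimensional ℝ E]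
  [MeasurableSpace E] [BorelSpace E] (ν : Measure E) [ν.IsAddHaarMeasure]

lemma lintegral_eq_mul_lintegral_comp_smul {R : ℝ} (hR : 0 < R) {f : E → ℝ≥0∞}
    (hf : Measurable f) :
    ∫⁻ z, f z ∂ν = ENNReal.ofReal R ^ (finrank ℝ E : ℝ) * ∫⁻ z, f (R • z) ∂ν := by
  rw [← lintegral_map hf (measurable_const_smul R), Measure.map_addHaar_smul ν hR.ne',
    lintegral_smul_measure, smul_eq_mul, ← mul_assoc, abs_of_pos (by positivity),
    ENNReal.ofReal_inv_of_pos (by positivity), ENNReal.rpow_natCast, ENNReal.ofReal_pow hR.le,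
    ENNReal.mul_inv_cancel (by positivity) (by finiteness), one_mul]

lemma lintegral_ball_enorm_rpow_lt_top [Nontrivial E] {t : ℝ} (ht : t < finrank ℝ E) :
    ∫⁻ z in Metric.ball 0 1, ‖z‖ₑ ^ (-t) ∂ν < ∞ := by
  have integrable : IntegrableOn (fun z ↦ ‖z‖ ^ (-t)) (Metric.ball 0 1) ν :=
    integrableOn_ball_of_norm_le_rpow finrank_pos ht (C := 1)
      (ae_of_all _ fun z ↦ by rw [one_mul, Real.norm_of_nonneg (by positivity)])
      (measurable_norm.pow_const _).aestronglyMeasurable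
  refine lt_of_eq_of_lt (lintegral_congr_ae ?_) integrable.2
  filter_upwards [ae_restrict_of_ae (Measure.ae_ne ν 0)] with z hz
  rw [← ofReal_norm z, ENNReal.ofReal_rpow_of_pos (norm_pos_iff.mpr hz),
    Real.enorm_of_nonneg (by positivity)]

lemma lintegral_one_add_enorm_rpow_lt_top {s : ℝ} (hs : finrank ℝ E < s) :
    ∫⁻ z, (1 + ‖z‖ₑ) ^ (-s) ∂ν < ∞ := by
  convert finite_integral_one_add_norm (μ := ν) hs with z
  rw [← ENNReal.ofReal_rpow_of_pos (by positivity), ENNReal.ofReal_add zero_le_one (norm_nonneg z),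
    ENNReal.ofReal_one, ofReal_norm]

lemma lintegral_one_add_enorm_rpow_mul_enorm_rpow_lt_top [Nontrivial E] {s t : ℝ} (hs : 0 ≤ s)
    (ht0 : 0 ≤ t) (ht : t < finrank ℝ E) (hst : finrank ℝ E < s + t) :
    ∫⁻ z, (1 + ‖z‖ₑ) ^ (-s) * ‖z‖ₑ ^ (-t) ∂ν < ∞ := by
  rw [← lintegral_add_compl _ (measurableSet_ball (x := (0 : E)) (ε := 1)), ENNReal.add_lt_top]
  constructor
  · calc ∫⁻ z in Metric.ball 0 1, (1 + ‖z‖ₑ) ^ (-s) * ‖z‖ₑ ^ (-t) ∂ν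
        ≤ ∫⁻ z in Metric.ball 0 1, ‖z‖ₑ ^ (-t) ∂ν := by
          refine lintegral_mono fun z ↦ mul_le_of_le_one_left' ?_
          simpa using ennreal_rpow_le_rpow_of_nonpos (le_self_add (a := 1) (b := ‖z‖ₑ))
            (neg_nonpos.mpr hs)
      _ < ∞ := lintegral_ball_enorm_rpow_lt_top ν ht
  · calc ∫⁻ z in (Metric.ball 0 1)ᶜ, (1 + ‖z‖ₑ) ^ (-s) * ‖z‖ₑ ^ (-t) ∂ν
        ≤ ∫⁻ z in (Metric.ball 0 1)ᶜ, 2 ^ t * (1 + ‖z‖ₑ) ^ (-(s + t)) ∂ν := by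
          refine setLIntegral_mono (by fun_prop) fun z hz ↦ ?_
          have hz1 : 1 ≤ ‖z‖ₑ := by
            simpa [← ofReal_norm, ENNReal.one_le_ofReal] using hz
          have h2 : 1 + ‖z‖ₑ ≤ 2 * ‖z‖ₑ := by rw [two_mul]; gcongr
          calc (1 + ‖z‖ₑ) ^ (-s) * ‖z‖ₑ ^ (-t)
              ≤ (1 + ‖z‖ₑ) ^ (-s) * (2 ^ t * (1 + ‖z‖ₑ) ^ (-t)) := by
                gcongr
                exact ennreal_rpow_neg_le_mul_rpow_neg two_ne_zero ofNat_ne_top h2 ht0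
            _ = 2 ^ t * (1 + ‖z‖ₑ) ^ (-(s + t)) := by
                rw [neg_add, ENNReal.rpow_add _ _ (by positivity) (by finiteness)]
                ring
      _ ≤ 2 ^ t * ∫⁻ z, (1 + ‖z‖ₑ) ^ (-(s + t)) ∂ν := by
          rw [lintegral_const_mul _ (by fun_prop)]
          gcongr
          exact Measure.restrict_le_self
      _ < ∞ := ENNReal.mul_lt_top (by finiteness) (lintegral_one_add_enorm_rpow_lt_top ν hst)

lemma lintegral_add_enorm_rpow_mul_enorm_rpow {c : ℝ≥0∞} (hc0 : c ≠ 0) (hct : c ≠ ∞) (s t : ℝ) :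
    ∫⁻ z, (c + ‖z‖ₑ) ^ (-s) * ‖z‖ₑ ^ (-t) ∂ν =
      c ^ (finrank ℝ E - s - t) * ∫⁻ z, (1 + ‖z‖ₑ) ^ (-s) * ‖z‖ₑ ^ (-t) ∂ν := by
  have hR : 0 < c.toReal := ENNReal.toReal_pos hc0 hct
  have hscale (z : E) : (c + ‖c.toReal • z‖ₑ) ^ (-s) * ‖c.toReal • z‖ₑ ^ (-t) =
      c ^ (-s - t) * ((1 + ‖z‖ₑ) ^ (-s) * ‖z‖ₑ ^ (-t)) := by
    rw [enorm_smul, Real.enorm_of_nonneg hR.le, ENNReal.ofReal_toReal hct, ← mul_one_add,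
      ENNReal.mul_rpow_of_ne_top hct (by finiteness),
      ENNReal.mul_rpow_of_ne_top hct (by finiteness), sub_eq_add_neg, ENNReal.rpow_add _ _ hc0 hct]
    ring
  rw [lintegral_eq_mul_lintegral_comp_smul ν hR (by fun_prop), ENNReal.ofReal_toReal hct]
  simp_rw [hscale]
  rw [lintegral_const_mul _ (by fun_prop), ← mul_assoc, ← ENNReal.rpow_add _ _ hc0 hct,
    sub_sub, neg_sub_left, sub_eq_add_neg, add_comm t s]

lemma ennreal_rpow_neg_mul_rpow_neg_le_add {u v c : ℝ≥0∞} (hc : c ≤ u + v) {s t : ℝ}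
    (hs : 0 ≤ s) (ht : 0 ≤ t) :
    u ^ (-s) * v ^ (-t) ≤
      3 ^ s * ((c + v) ^ (-s) * v ^ (-t)) + 3 ^ t * ((c + u) ^ (-t) * u ^ (-s)) := by
  have dominated {a b : ℝ≥0∞} {e : ℝ} (he : 0 ≤ e) (hab : b ≤ a) (hcab : c ≤ a + b) :
      a ^ (-e) ≤ 3 ^ e * (c + b) ^ (-e) := by
    refine ennreal_rpow_neg_le_mul_rpow_neg three_ne_zero ofNat_ne_top ?_ he
    calc c + b ≤ a + a + a := by gcongr; exact hcab.trans (by gcongr)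
      _ = 3 * a := by ring
  rcases le_total v u with h | h
  · refine le_add_right ?_
    rw [← mul_assoc]
    gcongr
    exact dominated hs h hc
  · refine le_add_left ?_
    rw [← mul_assoc, mul_comm]
    gcongr
    exact dominated ht h (add_comm u v ▸ hc)

lemma exists_lintegral_enorm_sub_rpow_mul_enorm_rpow_le [Nontrivial E] {s t : ℝ}
    (hs : s < finrank ℝ E) (ht : t < finrank ℝ E) (hst : finrank ℝ E < s + t) :
    ∃ A : ℝ≥0, ∀ x : E, x ≠ 0 →
      ∫⁻ y, ‖x - y‖ₑ ^ (-s) * ‖y‖ₑ ^ (-t) ∂ν ≤ A * ‖x‖ₑ ^ (finrank ℝ E - s - t) := by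
  have hs0 : 0 ≤ s := by linarith
  have ht0 : 0 ≤ t := by linarith
  have finite_st := lintegral_one_add_enorm_rpow_mul_enorm_rpow_lt_top ν hs0 ht0 ht hst
  have finite_ts :=
    lintegral_one_add_enorm_rpow_mul_enorm_rpow_lt_top ν ht0 hs0 hs (add_comm s t ▸ hst)
  set I := ∫⁻ z, (1 + ‖z‖ₑ) ^ (-s) * ‖z‖ₑ ^ (-t) ∂ν
  set J := ∫⁻ z, (1 + ‖z‖ₑ) ^ (-t) * ‖z‖ₑ ^ (-s) ∂ν
  have htop : 3 ^ s * I + 3 ^ t * J ≠ ∞ := by finiteness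
  refine ⟨(3 ^ s * I + 3 ^ t * J).toNNReal, fun x hx ↦ ?_⟩
  have hx0 : ‖x‖ₑ ≠ 0 := enorm_ne_zero.mpr hx
  calc ∫⁻ y, ‖x - y‖ₑ ^ (-s) * ‖y‖ₑ ^ (-t) ∂ν
      ≤ ∫⁻ y, (3 ^ s * ((‖x‖ₑ + ‖y‖ₑ) ^ (-s) * ‖y‖ₑ ^ (-t)) +
          3 ^ t * ((‖x‖ₑ + ‖x - y‖ₑ) ^ (-t) * ‖x - y‖ₑ ^ (-s))) ∂ν := by
        refine lintegral_mono fun y ↦ ennreal_rpow_neg_mul_rpow_neg_le_add ?_ hs0 ht0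
        simpa using enorm_add_le (x - y) y
    _ = 3 ^ s * ∫⁻ z, (‖x‖ₑ + ‖z‖ₑ) ^ (-s) * ‖z‖ₑ ^ (-t) ∂ν +
          3 ^ t * ∫⁻ z, (‖x‖ₑ + ‖z‖ₑ) ^ (-t) * ‖z‖ₑ ^ (-s) ∂ν := by
        rw [lintegral_add_left (by fun_prop), lintegral_const_mul _ (by fun_prop),
          lintegral_const_mul _ (by fun_prop),
          lintegral_sub_left_eq_self (fun z ↦ (‖x‖ₑ + ‖z‖ₑ) ^ (-t) * ‖z‖ₑ ^ (-s)) x]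
    _ = (3 ^ s * I + 3 ^ t * J).toNNReal * ‖x‖ₑ ^ (finrank ℝ E - s - t) := by
        rw [lintegral_add_enorm_rpow_mul_enorm_rpow ν hx0 enorm_ne_top,
          lintegral_add_enorm_rpow_mul_enorm_rpow ν hx0 enorm_ne_top, ENNReal.coe_toNNReal htop,
          sub_right_comm _ t s]
        ring

end RieszComposition

section ConformalKernel

variable {E : Type*} [NormedAddCommGroup E]

lemma enorm_rpow_mul_enorm_rpow_neg {x : E} (hx : x ≠ 0) (b : ℝ) :
    ‖x‖ₑ ^ b * ‖x‖ₑ ^ (-b) = 1 := by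
  rw [← ENNReal.rpow_add _ _ (enorm_ne_zero.mpr hx) enorm_ne_top, add_neg_cancel,
    ENNReal.rpow_zero]

lemma mul_enorm_rpow_le_of_le_mul_enorm_rpow_neg {x : E} (hx : x ≠ 0) {u c : ℝ≥0∞} {b : ℝ}
    (h : u ≤ c * ‖x‖ₑ ^ (-b)) : u * ‖x‖ₑ ^ b ≤ c :=
  calc u * ‖x‖ₑ ^ b ≤ c * ‖x‖ₑ ^ (-b) * ‖x‖ₑ ^ b := by gcongr
    _ = c := by rw [mul_assoc, mul_comm (‖x‖ₑ ^ (-b)), enorm_rpow_mul_enorm_rpow_neg hx, mul_one]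

/-- The distance `‖x - y‖ / √(‖x‖ ‖y‖)`, a symmetric kernel invariant under simultaneous dilations
of `x` and `y`. -/
noncomputable def scaledDist (x y : E) : ℝ≥0∞ := ‖x - y‖ₑ / (‖x‖ₑ * ‖y‖ₑ) ^ (1 / 2 : ℝ)

lemma scaledDist_comm (x y : E) : scaledDist x y = scaledDist y x := by
  rw [scaledDist, scaledDist, enorm_sub_rev, mul_comm ‖x‖ₑ]

lemma scaledDist_rpow {x y : E} (hx : x ≠ 0) (hy : y ≠ 0) (z : ℝ) :
    scaledDist x y ^ z = ‖x - y‖ₑ ^ z * (‖x‖ₑ ^ (-(z / 2)) * ‖y‖ₑ ^ (-(z / 2))) := by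
  have hxy : (‖x‖ₑ * ‖y‖ₑ) ^ (-(1 / 2) : ℝ) ≠ ∞ :=
    ENNReal.rpow_ne_top_of_ne_zero (by simp [hx, hy]) (by finiteness)
  rw [scaledDist, div_eq_mul_inv, ← ENNReal.rpow_neg,
    ENNReal.mul_rpow_of_ne_top enorm_ne_top hxy, ← ENNReal.rpow_mul,
    ENNReal.mul_rpow_of_ne_top enorm_ne_top enorm_ne_top,
    show -(1 / 2) * z = -(z / 2) by ring]

lemma scaledDist_ne_top {x y : E} (hx : x ≠ 0) (hy : y ≠ 0) : scaledDist x y ≠ ∞ :=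
  ENNReal.div_ne_top enorm_ne_top (by simp [hx, hy])

lemma scaledDist_ne_zero {x y : E} (hxy : x ≠ y) : scaledDist x y ≠ 0 :=
  ENNReal.div_ne_zero.mpr ⟨enorm_ne_zero.mpr (sub_ne_zero.mpr hxy), by finiteness⟩

variable [MeasurableSpace E]

lemma measurable_scaledDist [BorelSpace E] [SecondCountableTopology E] :
    Measurable (Function.uncurry (scaledDist (E := E))) := by
  unfold scaledDist Function.uncurry
  fun_prop

variable [NormedSpace ℝ E]

/-- The measure `‖x‖⁻ᵈ dν(x)`, where `d` is the dimension: if `ν` is a Haar measure, it is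
invariant under dilations. -/
noncomputable def dilationMeasure (ν : Measure E) : Measure E :=
  ν.withDensity fun x ↦ ‖x‖ₑ ^ (-finrank ℝ E : ℝ)

instance (ν : Measure E) [SFinite ν] : SFinite (dilationMeasure ν) := by
  unfold dilationMeasure
  infer_instance

lemma dilationMeasure_absolutelyContinuous (ν : Measure E) : dilationMeasure ν ≪ ν :=
  withDensity_absolutelyContinuous ν _

lemma lintegral_dilationMeasure [BorelSpace E] (ν : Measure E) {f : E → ℝ≥0∞} (hf : Measurable f) :
    ∫⁻ x, f x ∂dilationMeasure ν = ∫⁻ x, ‖x‖ₑ ^ (-finrank ℝ E : ℝ) * f x ∂ν :=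
  lintegral_withDensity_eq_lintegral_mul ν (by fun_prop) hf

variable [BorelSpace E] [FiniteDimensional ℝ E] [Nontrivial E] (ν : Measure E)
  [ν.IsAddHaarMeasure]

lemma ae_dilationMeasure_ne (x : E) : ∀ᵐ y ∂dilationMeasure ν, y ≠ x :=
  (dilationMeasure_absolutelyContinuous ν).ae_le (Measure.ae_ne ν x)

lemma exists_lintegral_scaledDist_rpow_neg_le {β : ℝ} (hβ0 : 0 < β) (hβ : β < finrank ℝ E) :
    ∃ A : ℝ≥0, A ≠ 0 ∧ ∀ x : E, x ≠ 0 → ∫⁻ y, scaledDist x y ^ (-β) ∂dilationMeasure ν ≤ A := by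
  obtain ⟨A, hA⟩ := exists_lintegral_enorm_sub_rpow_mul_enorm_rpow_le ν (s := β)
    (t := finrank ℝ E - β / 2) hβ (by linarith) (by linarith)
  refine ⟨A + 1, by positivity, fun x hx ↦ ?_⟩
  have hexp : finrank ℝ E - β - (finrank ℝ E - β / 2) = -(β / 2) := by ring
  calc ∫⁻ y, scaledDist x y ^ (-β) ∂dilationMeasure ν
      = ∫⁻ y, ‖x‖ₑ ^ (β / 2) *
          (‖x - y‖ₑ ^ (-β) * ‖y‖ₑ ^ (-(finrank ℝ E - β / 2))) ∂ν := by
        rw [lintegral_dilationMeasure ν (measurable_scaledDist.of_uncurry_left.pow_const _)]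
        refine lintegral_congr_ae ((Measure.ae_ne ν 0).mono fun y hy ↦ ?_)
        have hy0 : ‖y‖ₑ ≠ 0 := enorm_ne_zero.mpr hy
        beta_reduce
        rw [scaledDist_rpow hx hy, neg_sub, sub_eq_add_neg (β / 2),
          ENNReal.rpow_add _ _ hy0 enorm_ne_top, neg_div, neg_neg]
        ring
    _ = ‖x‖ₑ ^ (β / 2) *
          ∫⁻ y, ‖x - y‖ₑ ^ (-β) * ‖y‖ₑ ^ (-(finrank ℝ E - β / 2)) ∂ν :=
        lintegral_const_mul _ (by fun_prop)
    _ ≤ ‖x‖ₑ ^ (β / 2) * (A * ‖x‖ₑ ^ (-(β / 2))) := by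
        gcongr
        exact (hA x hx).trans_eq (by rw [hexp])
    _ = A := by
        rw [mul_left_comm, enorm_rpow_mul_enorm_rpow_neg hx, mul_one]
    _ ≤ (A + 1 : ℝ≥0) := by exact_mod_cast le_self_add

lemma lintegral_dilationMeasure_mul_enorm_rpow {f : E → ℝ≥0∞} (hf : Measurable f) {p : ℝ}
    (hp : 0 < p) :
    ∫⁻ x, (f x * ‖x‖ₑ ^ (finrank ℝ E / p)) ^ p ∂dilationMeasure ν = ∫⁻ x, f x ^ p ∂ν := by
  rw [lintegral_dilationMeasure ν (by fun_prop)]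
  refine lintegral_congr_ae ((Measure.ae_ne ν 0).mono fun x hx ↦ ?_)
  beta_reduce
  rw [ENNReal.mul_rpow_of_nonneg _ _ hp.le, ← ENNReal.rpow_mul, div_mul_cancel₀ _ hp.ne',
    mul_comm, mul_assoc, enorm_rpow_mul_enorm_rpow_neg hx, mul_one]

end ConformalKernel

section RieszPotential

variable {E : Type*} [NormedAddCommGroup E] [MeasurableSpace E]

/-- The Riesz-type potential with kernel `‖x - y‖ ^ a`, the operator `I_α` with `a = α - d` on a
`d`-dimensional space. -/
noncomputable def rieszPotential (ν : Measure E) (a : ℝ) (f : E → ℝ≥0∞) (x : E) : ℝ≥0∞ :=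
  ∫⁻ y, f y * ‖x - y‖ₑ ^ a ∂ν

lemma rieszPotential_ofReal (ν : Measure E) {f : E → ℝ} (hf : ∀ x, 0 ≤ f x) {a : ℝ} (ha : 0 ≤ a)
    (x : E) :
    rieszPotential ν a (fun y ↦ ENNReal.ofReal (f y)) x =
      ∫⁻ y, ENNReal.ofReal (f y * dist x y ^ a) ∂ν := by
  refine lintegral_congr fun y ↦ ?_
  rw [ENNReal.ofReal_mul (hf y), ← ENNReal.ofReal_rpow_of_nonneg dist_nonneg ha, ← edist_dist,
    edist_eq_enorm_sub]

variable [NormedSpace ℝ E] [FiniteDimensional ℝ E] [Nontrivial E] [BorelSpace E] (ν : Measure E)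
  [ν.IsAddHaarMeasure]

lemma rieszPotential_eq_mul_lintegral_scaledDist {f : E → ℝ≥0∞} (hf : Measurable f) (a : ℝ) {x : E}
    (hx : x ≠ 0) :
    rieszPotential ν a f x = ‖x‖ₑ ^ (a / 2) *
      ∫⁻ y, f y * ‖y‖ₑ ^ (finrank ℝ E + a / 2) * scaledDist x y ^ a ∂dilationMeasure ν := by
  have hmeas : Measurable fun y ↦ scaledDist x y ^ a :=
    measurable_scaledDist.of_uncurry_left.pow_const a
  rw [lintegral_dilationMeasure ν (by fun_prop), ← lintegral_const_mul _ (by fun_prop)]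
  refine lintegral_congr_ae ((Measure.ae_ne ν 0).mono fun y hy ↦ ?_)
  have hy0 : ‖y‖ₑ ≠ 0 := enorm_ne_zero.mpr hy
  beta_reduce
  calc f y * ‖x - y‖ₑ ^ a
      = f y * ‖x - y‖ₑ ^ a * (‖x‖ₑ ^ (a / 2) * ‖x‖ₑ ^ (-(a / 2))) *
          (‖y‖ₑ ^ (finrank ℝ E : ℝ) * ‖y‖ₑ ^ (-finrank ℝ E : ℝ)) *
          (‖y‖ₑ ^ (a / 2) * ‖y‖ₑ ^ (-(a / 2))) := by
        rw [enorm_rpow_mul_enorm_rpow_neg hx, enorm_rpow_mul_enorm_rpow_neg hy,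
          enorm_rpow_mul_enorm_rpow_neg hy, mul_one, mul_one, mul_one]
    _ = ‖x‖ₑ ^ (a / 2) * (‖y‖ₑ ^ (-finrank ℝ E : ℝ) *
          (f y * ‖y‖ₑ ^ (finrank ℝ E + a / 2) * scaledDist x y ^ a)) := by
        rw [scaledDist_rpow hx hy, ENNReal.rpow_add _ _ hy0 enorm_ne_top]
        ring

lemma lintegral_rieszPotential_rpow {f : E → ℝ≥0∞} (hf : Measurable f) {a : ℝ} (ha : a ≠ 0) :
    ∫⁻ x, rieszPotential ν a f x ^ (-(2 * finrank ℝ E / a)) ∂ν =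
      ∫⁻ x, (∫⁻ y, f y * ‖y‖ₑ ^ (finrank ℝ E + a / 2) * scaledDist x y ^ a ∂dilationMeasure ν) ^
        (-(2 * finrank ℝ E / a)) ∂dilationMeasure ν := by
  have hmeas : Measurable fun z : E × E ↦ scaledDist z.1 z.2 ^ a :=
    measurable_scaledDist.pow_const a
  have hmeas_integral : Measurable fun x ↦
      ∫⁻ y, f y * ‖y‖ₑ ^ (finrank ℝ E + a / 2) * scaledDist x y ^ a ∂dilationMeasure ν :=
    Measurable.lintegral_prod_right'
      (f := fun z : E × E ↦ f z.2 * ‖z.2‖ₑ ^ (finrank ℝ E + a / 2) * scaledDist z.1 z.2 ^ a)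
      (by fun_prop)
  rw [lintegral_dilationMeasure ν (by fun_prop)]
  refine lintegral_congr_ae ((Measure.ae_ne ν 0).mono fun x hx ↦ ?_)
  have hxa : ‖x‖ₑ ^ (a / 2) ≠ 0 :=
    (ENNReal.rpow_pos (enorm_pos.mpr hx) enorm_ne_top).ne'
  have hxa' : ‖x‖ₑ ^ (a / 2) ≠ ∞ :=
    ENNReal.rpow_ne_top_of_ne_zero (enorm_ne_zero.mpr hx) enorm_ne_top
  beta_reduce
  rw [rieszPotential_eq_mul_lintegral_scaledDist ν hf a hx, ENNReal.mul_rpow_eq_ite,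
    if_neg (by simp [hxa, hxa']), ← ENNReal.rpow_mul,
    show a / 2 * -(2 * finrank ℝ E / a) = -finrank ℝ E by field_simp]

end RieszPotential

section LiebType

-- At `θ = 1 / 2` the last inequality is equivalent to `hr`, so it persists slightly below.
lemma exists_kernel_splitting_exponent {d a r : ℝ} (hd : 0 < d) (ha : 0 < a) (hr0 : 0 < r)
    (hr : r < 2 * d / (2 * d + a)) :
    ∃ θ, 0 < θ ∧ θ < 1 / 2 ∧ 0 < a * (r * (1 - θ) / (1 - r)) ∧
      a * (r * (1 - θ) / (1 - r)) < d := by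
  have h1r : 0 < 1 - r :=
    sub_pos.mpr (hr.trans ((div_lt_one (by positivity)).mpr (by linarith)))
  have hlower : 1 - d * (1 - r) / (a * r) < 1 / 2 := by
    rw [lt_div_iff₀ (by positivity)] at hr
    rw [sub_lt_comm, lt_div_iff₀ (by positivity)]
    linarith
  obtain ⟨θ, hθ, hθ2⟩ := exists_between (max_lt one_half_pos hlower)
  obtain ⟨hθ0, hθ1⟩ := max_lt_iff.mp hθ
  refine ⟨θ, hθ0, hθ2, ?_, ?_⟩
  · have : 0 < 1 - θ := by linarith
    positivity
  · rw [sub_lt_comm, lt_div_iff₀ (by positivity)] at hθ1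
    rw [mul_div_assoc', div_lt_iff₀ h1r]
    linarith

variable {E : Type*} [NormedAddCommGroup E] [NormedSpace ℝ E] [FiniteDimensional ℝ E]
  [Nontrivial E] [MeasurableSpace E] [BorelSpace E] (ν : Measure E) [ν.IsAddHaarMeasure]

theorem exists_le_lintegral_rieszPotential_rpow {a p q r : ℝ} (ha : 0 < a)
    (hp : p = 2 * finrank ℝ E / (2 * finrank ℝ E + a)) (hq : q = -(2 * finrank ℝ E / a))
    (hr0 : 0 < r) (hrp : r < p) :
    ∃ C : ℝ≥0, C ≠ 0 ∧ ∀ ε : ℝ≥0, ε ≠ 0 → ∀ f : E → ℝ≥0∞, Measurable f →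
      ∫⁻ x, f x ^ p ∂ν ≠ ∞ → (∀ᵐ x ∂ν, f x ≤ ε * ‖x‖ₑ ^ (-(finrank ℝ E / p))) →
      C * ε ^ (1 - p / r) * (∫⁻ x, f x ^ p ∂ν) ^ (1 / r) ≤
        (∫⁻ x, rieszPotential ν a f x ^ q ∂ν) ^ (1 / q) := by
  have hd : 0 < (finrank ℝ E : ℝ) := by exact_mod_cast finrank_pos
  have hp0 : 0 < p := hr0.trans hrp
  have hp1 : p < 1 := by rw [hp, div_lt_one (by positivity)]; linarith
  have hq0 : q < 0 := by rw [hq, neg_lt_zero]; positivity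
  have hdp : finrank ℝ E / p = finrank ℝ E + a / 2 := by rw [hp]; field_simp
  have hr1 : r < 1 := hrp.trans hp1
  obtain ⟨θ, hθ0, hθ2, hβ0, hβ⟩ := exists_kernel_splitting_exponent hd ha hr0 (hp ▸ hrp)
  obtain ⟨A, hA0, hA⟩ := exists_lintegral_scaledDist_rpow_neg_le ν hβ0 hβ
  obtain ⟨B, hB0, hB⟩ := exists_lintegral_scaledDist_rpow_neg_le ν (β := 2 * finrank ℝ E * θ)
    (by positivity) (by nlinarith)
  have hne := ae_dilationMeasure_ne ν
  refine ⟨A ^ (-((1 - r) / r)) * B ^ (1 / q), by positivity, fun ε hε f hf hfp hfε ↦ ?_⟩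
  rw [hq, lintegral_rieszPotential_rpow ν hf ha.ne', ← hq, ← hdp,
    ← lintegral_dilationMeasure_mul_enorm_rpow ν hf hp0]
  refine le_lintegral_kernel_rpow_rpow (by fun_prop) (measurable_scaledDist.pow_const a) ?_ ?_ hε
    hA0 hB0 ?_ hr0 hr1 hrp.le hq0 θ ?_ ?_ ?_
  · filter_upwards [hne 0] with x hx
    filter_upwards [hne 0, hne x] with y hy hyx
    exact (ENNReal.rpow_pos (pos_iff_ne_zero.mpr (scaledDist_ne_zero hyx.symm))
      (scaledDist_ne_top hx hy)).ne'
  · filter_upwards [hne 0] with x hx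
    filter_upwards [hne 0] with y hy
    exact ENNReal.rpow_ne_top_of_nonneg ha.le (scaledDist_ne_top hx hy)
  · filter_upwards [dilationMeasure_absolutelyContinuous ν hfε, hne 0] with x hfx hx
    exact mul_enorm_rpow_le_of_le_mul_enorm_rpow_neg hx hfx
  · rwa [lintegral_dilationMeasure_mul_enorm_rpow ν hf hp0]
  · filter_upwards [hne 0] with x hx
    simpa only [← ENNReal.rpow_mul, mul_neg] using hA x hx
  · filter_upwards [hne 0] with y hy
    have hexp : a * (q * θ) = -(2 * finrank ℝ E * θ) := by rw [hq]; field_simp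
    simpa only [← ENNReal.rpow_mul, hexp, scaledDist_comm _ y] using hB y hy

theorem lieb_type_lemma_general {α p q p₁ : ℝ} (hα : finrank ℝ E < α)
    (hp : p = 2 * finrank ℝ E / (finrank ℝ E + α)) (hq : q = 2 * finrank ℝ E / (finrank ℝ E - α))
    (hp₁0 : 0 < p₁) (hp₁ : p₁ < p) :
    ∃ C : ℝ, 0 < C ∧ ∀ ε : ℝ, 0 < ε → ∀ f : E → ℝ, Measurable f → (∀ x, 0 ≤ f x) →
      Integrable (fun x ↦ |f x| ^ p) ν →
      (∀ᵐ x ∂ν, f x ≤ ε * ‖x‖ ^ (-(finrank ℝ E / p))) →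
      ENNReal.ofReal (C * ε ^ (1 - p / p₁) * ((∫ x, |f x| ^ p ∂ν) ^ (1 / p)) ^ (p / p₁)) ≤
        (∫⁻ x, (∫⁻ y, ENNReal.ofReal (f y * dist x y ^ (α - finrank ℝ E)) ∂ν) ^ q ∂ν) ^
          (1 / q) := by
  have hp0 : 0 < p := hp₁0.trans hp₁
  obtain ⟨C, hC0, hC⟩ := exists_le_lintegral_rieszPotential_rpow ν (p := p) (q := q)
    (sub_pos.mpr hα) (by rw [hp]; ring_nf) (by rw [hq, ← neg_sub α, div_neg]) hp₁0 hp₁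
  refine ⟨C, by positivity, fun ε hε f hf hf0 hfp hfε ↦ ?_⟩
  lift ε to ℝ≥0 using hε.le
  have hfp_eq : ENNReal.ofReal (∫ x, |f x| ^ p ∂ν) = ∫⁻ x, ENNReal.ofReal (f x) ^ p ∂ν := by
    rw [ofReal_integral_eq_lintegral_ofReal hfp (ae_of_all _ fun x ↦ by positivity)]
    simp_rw [abs_of_nonneg (hf0 _), ENNReal.ofReal_rpow_of_nonneg (hf0 _) hp0.le]
  have hfε' : ∀ᵐ x ∂ν, ENNReal.ofReal (f x) ≤ ε * ‖x‖ₑ ^ (-(finrank ℝ E / p)) := by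
    filter_upwards [hfε, Measure.ae_ne ν 0] with x hfx hx
    rw [← ofReal_norm, ENNReal.ofReal_rpow_of_pos (norm_pos_iff.mpr hx),
      ← ENNReal.ofReal_coe_nnreal, ← ENNReal.ofReal_mul ε.coe_nonneg]
    exact ENNReal.ofReal_le_ofReal hfx
  have bound := hC ε (by exact_mod_cast hε.ne') (fun x ↦ ENNReal.ofReal (f x)) (by fun_prop)
    (hfp_eq ▸ ENNReal.ofReal_ne_top) hfε'
  simp_rw [rieszPotential_ofReal ν hf0 (sub_nonneg.mpr hα.le)] at bound
  refine le_of_eq_of_le ?_ bound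
  have hint : 0 ≤ ∫ x, |f x| ^ p ∂ν := integral_nonneg fun x ↦ by positivity
  rw [← hfp_eq, ← Real.rpow_mul hint, one_div_mul_eq_div, div_div_cancel_left' hp0.ne', ← one_div,
    ENNReal.ofReal_mul (by positivity), ENNReal.ofReal_mul (by positivity),
    ENNReal.ofReal_rpow_of_nonneg hint (by positivity), ← ENNReal.ofReal_rpow_of_pos hε,
    ENNReal.ofReal_coe_nnreal, ENNReal.ofReal_coe_nnreal]

end LiebType

/-- **Lieb-type lemma for the minimizing sequence** (Lemma 3.2): for `1 ≤ n < α`,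
`p = 2n/(n+α)`, `q = 2n/(n-α)`, parameters `p₁ ∈ (0, 2n/(n+α))` and `s ∈ (n/(n-α), 0)`
with `1/p₁ + 1/s - 1 = (n-α)/(2n)`, and a nonnegative radially symmetric `f ∈ L^p(ℝⁿ)`
with `f(x) ≤ ε |x|^(-n/p)` for all `x ≠ 0`, one has
`‖I_α f‖_{L^q(ℝⁿ)} ≥ C_n ε^(1-p/p₁) ‖f‖_{L^p(ℝⁿ)}^(p/p₁)` with `C_n` independent of
`f` and `ε`. -/
theorem lieb_type_lemma (n : ℕ) (hn : 1 ≤ n) (α p q p₁ s : ℝ)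
    (hα : (n : ℝ) < α)
    (hp : p = 2 * n / ((n : ℝ) + α)) (hq : q = 2 * n / ((n : ℝ) - α))
    (hp₁0 : 0 < p₁) (hp₁1 : p₁ < 2 * n / ((n : ℝ) + α))
    (hs0 : (n : ℝ) / ((n : ℝ) - α) < s) (hs1 : s < 0)
    (hp₁s : 1 / p₁ + 1 / s - 1 = ((n : ℝ) - α) / (2 * n)) :
    ∃ C : ℝ, 0 < C ∧ ∀ ε : ℝ, 0 < ε → ∀ f : EuclideanSpace ℝ (Fin n) → ℝ,
      Measurable f → (∀ x, 0 ≤ f x) → Integrable (fun x => |f x| ^ p) →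
      (∃ g : ℝ → ℝ, ∀ x, f x = g ‖x‖) →
      (∀ x : EuclideanSpace ℝ (Fin n), x ≠ 0 → f x ≤ ε * ‖x‖ ^ (-((n : ℝ) / p))) →
      ENNReal.ofReal
          (C * ε ^ (1 - p / p₁) * ((∫ x, |f x| ^ p) ^ (1 / p)) ^ (p / p₁)) ≤
        (∫⁻ x, (rieszNeg n α f x) ^ q) ^ (1 / q) := by
  have : Nonempty (Fin n) := ⟨⟨0, hn⟩⟩
  obtain ⟨C, hC0, hC⟩ := lieb_type_lemma_general (volume : Measure (EuclideanSpace ℝ (Fin n)))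
    (α := α) (p := p) (q := q) (by simpa) (by simpa) (by simpa) hp₁0 (hp ▸ hp₁1)
  simp only [finrank_euclideanSpace_fin] at hC
  exact ⟨C, hC0, fun ε hε f hf hf0 hfp _ hbd ↦
    hC ε hε f hf hf0 hfp ((Measure.ae_ne volume 0).mono hbd)⟩
end

section
/- Let 1 ≤ n < α, p = 2n/(n+α), q = 2n/(n−α). Then the infimum N*(n, α) = inf{ ‖Ĩ_α F‖_{L^q(𝕊ⁿ)} : F ≥ 0 measurable on 𝕊ⁿ, ‖F‖_{L^p(𝕊ⁿ)} = 1 } is positive and is attained: there exists a nonnegative F₀ ∈ L^p(𝕊ⁿ) with ‖F₀‖_{L^p(𝕊ⁿ)} = 1 and ‖Ĩ_α F₀‖_{L^q(𝕊ⁿ)} = N*(n, α). -/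
open MeasureTheory ENNReal Metric

/-- The standard surface measure on the unit sphere `𝕊ⁿ ⊆ ℝ^(n+1)`. -/
noncomputable def sphereMeasure (n : ℕ) :
    Measure (sphere (0 : EuclideanSpace ℝ (Fin (n + 1))) 1) :=
  (volume : Measure (EuclideanSpace ℝ (Fin (n + 1)))).toSphere

/-- The singular integral operator `Ĩ_α F(ξ) = ∫_{𝕊ⁿ} F(η) |ξ-η|^(α-n) dη` on the sphere,
where `|ξ-η|` is the chordal distance in `ℝ^(n+1)`, valued in `ℝ≥0∞`. -/
noncomputable def sphereRiesz (n : ℕ) (α : ℝ)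
    (F : sphere (0 : EuclideanSpace ℝ (Fin (n + 1))) 1 → ℝ)
    (ξ : sphere (0 : EuclideanSpace ℝ (Fin (n + 1))) 1) : ℝ≥0∞ :=
  ∫⁻ η, ENNReal.ofReal (F η *
    dist (ξ : EuclideanSpace ℝ (Fin (n + 1))) (η : EuclideanSpace ℝ (Fin (n + 1))) ^ (α - n))
    ∂(sphereMeasure n)

/-- The set of values `‖Ĩ_α F‖_{L^q(𝕊ⁿ)}` over nonnegative `F ∈ L^p(𝕊ⁿ)`
with `‖F‖_{L^p(𝕊ⁿ)} = 1`. -/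
def minimizingValues (n : ℕ) (α p q : ℝ) : Set ℝ≥0∞ :=
  {r : ℝ≥0∞ | ∃ F : sphere (0 : EuclideanSpace ℝ (Fin (n + 1))) 1 → ℝ,
    Measurable F ∧ (∀ ξ, 0 ≤ F ξ) ∧
    Integrable (fun ξ => |F ξ| ^ p) (sphereMeasure n) ∧
    (∫ ξ, |F ξ| ^ p ∂(sphereMeasure n)) ^ (1 / p) = 1 ∧
    r = (∫⁻ ξ, (sphereRiesz n α F ξ) ^ q ∂(sphereMeasure n)) ^ (1 / q)}

/-!
Let `T` be the Riesz potential on the sphere. The quotient `‖T f‖_q / ‖f‖_p` is invariant under the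
conformal group of the sphere, realised by the Lorentz boosts acting on the light cone, and this
noncompact symmetry is the only obstruction to compactness. It is removed by balancing: the mass of
the conformal image of `f` by the boost at `y` is the value at `y` of a superposition of
horospherical waves on hyperbolic space, and at a near-minimum of this superposition the potential
of the conformal image is everywhere at least a fixed multiple of its mass. Normalised to mass `1`,
the potential of a balanced function then lies in a class of functions that is compact by the
Arzelà-Ascoli theorem. Since `T` is symmetric, the reverse Hölder inequality shows that replacing
`g` by `(T g) ^ (q - 1)`, as the Euler-Lagrange equation suggests, does not increase the quotient.
Hence it is enough to minimise the quotient, which is continuous, over that compact class.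
-/

open Set Filter Topology Module
open scoped NNReal BoundedContinuousFunction

section PinchedFamilies

variable {α Y : Type*} {u : Y → α → ℝ≥0∞} {s : Set Y}

/-- The functions `u y`, `y ∈ s`, take their values in a common compact subinterval of `(0, ∞)`. -/
def UniformlyPinchedOn (u : Y → α → ℝ≥0∞) (s : Set Y) : Prop :=
  ∃ a b : ℝ≥0∞, a ≠ 0 ∧ b ≠ ⊤ ∧ ∀ y ∈ s, ∀ x, u y x ∈ Icc a b

lemma rpow_mem_uIcc {a b x : ℝ≥0∞} (r : ℝ) (hx : x ∈ Icc a b) : x ^ r ∈ uIcc (a ^ r) (b ^ r) := by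
  rcases le_total 0 r with hr | hr
  · exact Icc_subset_uIcc ⟨ENNReal.rpow_le_rpow hx.1 hr, ENNReal.rpow_le_rpow hx.2 hr⟩
  · have anti : ∀ {y z : ℝ≥0∞}, y ≤ z → z ^ r ≤ y ^ r := fun {y z} hyz => by
      rw [← neg_neg r, ENNReal.rpow_neg z, ENNReal.rpow_neg y, ENNReal.inv_le_inv]
      exact ENNReal.rpow_le_rpow hyz (neg_nonneg.2 hr)
    exact Icc_subset_uIcc' ⟨anti hx.2, anti hx.1⟩

lemma rpow_ne_zero_of_ne {a : ℝ≥0∞} (h0 : a ≠ 0) (ht : a ≠ ⊤) (r : ℝ) : a ^ r ≠ 0 :=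
  (ENNReal.rpow_pos (pos_iff_ne_zero.2 h0) ht).ne'

lemma mul_rpow_of_ne {a : ℝ≥0∞} (h0 : a ≠ 0) (ht : a ≠ ⊤) (b : ℝ≥0∞) (r : ℝ) :
    (a * b) ^ r = a ^ r * b ^ r := by
  rw [ENNReal.mul_rpow_eq_ite, if_neg (by tauto)]

lemma continuousOn_lintegral_of_le_const [TopologicalSpace Y] [FirstCountableTopology Y]
    [MeasurableSpace α] {μ : Measure α} [IsFiniteMeasure μ] {b : ℝ≥0∞} (hb : b ≠ ⊤)
    (hu : ∀ y ∈ s, ∀ x, u y x ≤ b) (hm : ∀ y, Measurable (u y))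
    (hc : ∀ x, ContinuousOn (fun y => u y x) s) :
    ContinuousOn (fun y => ∫⁻ x, u y x ∂μ) s := fun y hy =>
  tendsto_lintegral_filter_of_dominated_convergence (fun _ => b) (.of_forall hm)
    (eventually_mem_nhdsWithin.mono fun z hz => .of_forall (hu z hz))
    (by simpa using ENNReal.mul_ne_top hb (measure_ne_top μ univ)) (.of_forall fun x => hc x y hy)

namespace UniformlyPinchedOn

lemma ne_zero (h : UniformlyPinchedOn u s) {y : Y} (hy : y ∈ s) (x : α) : u y x ≠ 0 := by
  obtain ⟨a, b, ha, -, hab⟩ := h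
  exact fun h0 => ha (nonpos_iff_eq_zero.1 (h0 ▸ (hab y hy x).1))

lemma ne_top (h : UniformlyPinchedOn u s) {y : Y} (hy : y ∈ s) (x : α) : u y x ≠ ⊤ := by
  obtain ⟨a, b, -, hb, hab⟩ := h
  exact ne_top_of_le_ne_top hb (hab y hy x).2

lemma rpow (h : UniformlyPinchedOn u s) (r : ℝ) : UniformlyPinchedOn (fun y x => u y x ^ r) s := by
  obtain ⟨a, b, ha, hb, hab⟩ := h
  by_cases hle : a ≤ b
  · have hat : a ≠ ⊤ := ne_top_of_le_ne_top hb hle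
    have hb0 : b ≠ 0 := (ha.bot_lt.trans_le hle).ne'
    refine ⟨min (a ^ r) (b ^ r), max (a ^ r) (b ^ r), ?_, ?_,
      fun y hy x => rpow_mem_uIcc r (hab y hy x)⟩
    · rcases min_choice (a ^ r) (b ^ r) with h | h <;> rw [h]
      exacts [rpow_ne_zero_of_ne ha hat r, rpow_ne_zero_of_ne hb0 hb r]
    · exact max_ne_top (ENNReal.rpow_ne_top_of_ne_zero ha hat)
        (ENNReal.rpow_ne_top_of_ne_zero hb0 hb)
  · exact ⟨1, 1, one_ne_zero, one_ne_top,
      fun y hy x => absurd ((hab y hy x).1.trans (hab y hy x).2) hle⟩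

variable [MeasurableSpace α] {μ : Measure α}

lemma lintegral_ne_zero (h : UniformlyPinchedOn u s) (hμ : μ ≠ 0) {y : Y} (hy : y ∈ s) :
    ∫⁻ x, u y x ∂μ ≠ 0 := by
  obtain ⟨a, b, ha, -, hab⟩ := h
  have hle : ∫⁻ _, a ∂μ ≤ ∫⁻ x, u y x ∂μ := lintegral_mono fun x => (hab y hy x).1
  rw [lintegral_const] at hle
  exact ((mul_ne_zero ha (Measure.measure_univ_ne_zero.2 hμ)).bot_lt.trans_le hle).ne'

variable [IsFiniteMeasure μ]

lemma lintegral_ne_top (h : UniformlyPinchedOn u s) {y : Y} (hy : y ∈ s) :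
    ∫⁻ x, u y x ∂μ ≠ ⊤ := by
  obtain ⟨a, b, -, hb, hab⟩ := h
  have hle : ∫⁻ x, u y x ∂μ ≤ ∫⁻ _, b ∂μ := lintegral_mono fun x => (hab y hy x).2
  rw [lintegral_const] at hle
  exact ne_top_of_le_ne_top (ENNReal.mul_ne_top hb (measure_ne_top μ univ)) hle

lemma eLpNorm'_ne_zero (h : UniformlyPinchedOn u s) (hμ : μ ≠ 0) (r : ℝ) {y : Y} (hy : y ∈ s) :
    eLpNorm' (u y) r μ ≠ 0 :=
  rpow_ne_zero_of_ne ((h.rpow r).lintegral_ne_zero hμ hy) ((h.rpow r).lintegral_ne_top hy) _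

lemma eLpNorm'_ne_top (h : UniformlyPinchedOn u s) (hμ : μ ≠ 0) (r : ℝ) {y : Y} (hy : y ∈ s) :
    eLpNorm' (u y) r μ ≠ ⊤ :=
  ENNReal.rpow_ne_top_of_ne_zero ((h.rpow r).lintegral_ne_zero hμ hy)
    ((h.rpow r).lintegral_ne_top hy)

lemma continuousOn_eLpNorm' [TopologicalSpace Y] [FirstCountableTopology Y]
    (h : UniformlyPinchedOn u s) (r : ℝ) (hm : ∀ y, Measurable (u y))
    (hc : ∀ x, ContinuousOn (fun y => u y x) s) :
    ContinuousOn (fun y => eLpNorm' (u y) r μ) s := by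
  obtain ⟨a, b, -, hb, hab⟩ := h.rpow r
  exact ENNReal.continuous_rpow_const.comp_continuousOn <|
    continuousOn_lintegral_of_le_const hb (fun y hy x => (hab y hy x).2)
      (fun y => (hm y).pow_const r)
      fun x => ENNReal.continuous_rpow_const.comp_continuousOn (hc x)

end UniformlyPinchedOn

end PinchedFamilies

section LpNorms

variable {α : Type*} [MeasurableSpace α] {μ : Measure α} {f u : α → ℝ≥0∞} {p q r : ℝ}

lemma eLpNorm'_const_mul_ennreal {c : ℝ≥0∞} (h0 : c ≠ 0) (ht : c ≠ ⊤) (hr : r ≠ 0)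
    (f : α → ℝ≥0∞) : eLpNorm' (fun x => c * f x) r μ = c * eLpNorm' f r μ := by
  have hc0 := rpow_ne_zero_of_ne h0 ht r
  have hct : c ^ r ≠ ⊤ := ENNReal.rpow_ne_top_of_ne_zero h0 ht
  simp only [eLpNorm'_eq_lintegral_enorm, enorm_eq_self, mul_rpow_of_ne h0 ht]
  rw [lintegral_const_mul' _ _ hct, mul_rpow_of_ne hc0 hct, ← ENNReal.rpow_mul,
    mul_one_div_cancel hr, ENNReal.rpow_one]

lemma lintegral_ne_zero_of_eLpNorm'_ne_zero (hp : 0 < p) (hf : Measurable f)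
    (h : eLpNorm' f p μ ≠ 0) : ∫⁻ x, f x ∂μ ≠ 0 := by
  contrapose! h
  exact eLpNorm'_eq_zero_of_ae_zero hp ((lintegral_eq_zero_iff hf).1 h)

lemma lintegral_rpow_ne_zero_of_eLpNorm'_ne_top (hq : q < 0) (h : eLpNorm' f q μ ≠ ⊤) :
    ∫⁻ x, f x ^ q ∂μ ≠ 0 := by
  contrapose! h
  simp [eLpNorm'_eq_lintegral_enorm, h, ENNReal.zero_rpow_of_neg, hq]

/-- Hölder's inequality for `(f * u) ^ p` and `u ^ (-p)` with the exponents `1 / p` and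
`1 / (1 - p)`. -/
theorem eLpNorm'_mul_eLpNorm'_le_lintegral_mul (hp : 0 < p) (hq : q < 0)
    (hpq : p⁻¹ + q⁻¹ = 1) (hf : AEMeasurable f μ) (hu : AEMeasurable u μ)
    (hu0 : ∀ᵐ x ∂μ, u x ≠ 0) (hut : ∀ᵐ x ∂μ, u x ≠ ⊤) :
    eLpNorm' f p μ * eLpNorm' u q μ ≤ ∫⁻ x, f x * u x ∂μ := by
  have hp1 : p < 1 := (one_lt_inv₀ hp).1 (by linarith [inv_lt_zero.2 hq])
  have hp1' : 0 < 1 - p := sub_pos.2 hp1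
  have hconj : (1 / p).HolderConjugate (1 / (1 - p)) :=
    Real.holderConjugate_iff.2 ⟨(one_lt_div hp).2 hp1, by simp⟩
  have hq_eq : -p * (1 / (1 - p)) = q := by
    have hq0 : q ≠ 0 := hq.ne
    field_simp at hpq ⊢
    linarith
  have hfu : ∀ᵐ x ∂μ, f x ^ p = (f x * u x) ^ p * u x ^ (-p) := by
    filter_upwards [hu0, hut] with x hx0 hxt
    rw [ENNReal.mul_rpow_of_nonneg _ _ hp.le, mul_assoc, ← ENNReal.rpow_add _ _ hx0 hxt,
      add_neg_cancel, ENNReal.rpow_zero, mul_one]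
  have hHolder : ∫⁻ x, f x ^ p ∂μ ≤
      (∫⁻ x, f x * u x ∂μ) ^ p * (∫⁻ x, u x ^ q ∂μ) ^ (1 - p) := by
    have h := ENNReal.lintegral_mul_le_Lp_mul_Lq μ hconj ((hf.mul hu).pow_const p)
      (hu.pow_const (-p))
    simpa only [Pi.mul_apply, ← lintegral_congr_ae hfu, ← ENNReal.rpow_mul,
      mul_one_div_cancel hp.ne', hq_eq, ENNReal.rpow_one, one_div_one_div] using h
  have hroot : eLpNorm' f p μ ≤ (∫⁻ x, f x * u x ∂μ) * (eLpNorm' u q μ)⁻¹ := by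
    have hexp : (1 - p) * (1 / p) = -(1 / q) := by
      rw [sub_mul, mul_one_div_cancel hp.ne', one_mul]
      linarith [one_div p, one_div q]
    have h := ENNReal.rpow_le_rpow hHolder (one_div_nonneg.2 hp.le)
    rwa [ENNReal.mul_rpow_of_nonneg _ _ (one_div_nonneg.2 hp.le), ← ENNReal.rpow_mul,
      ← ENNReal.rpow_mul, mul_one_div_cancel hp.ne', ENNReal.rpow_one, hexp,
      ENNReal.rpow_neg] at h
  calc eLpNorm' f p μ * eLpNorm' u q μ
      ≤ (∫⁻ x, f x * u x ∂μ) * (eLpNorm' u q μ)⁻¹ * eLpNorm' u q μ := by gcongr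
    _ = (∫⁻ x, f x * u x ∂μ) * ((eLpNorm' u q μ)⁻¹ * eLpNorm' u q μ) := mul_assoc ..
    _ ≤ ∫⁻ x, f x * u x ∂μ := mul_le_of_le_one_right' (ENNReal.inv_mul_le_one _)

end LpNorms

section KernelOperator

variable {X : Type*} [PseudoMetricSpace X]

lemma exists_kernel_le [CompactSpace X] (k : C(X, C(X, ℝ≥0))) : ∃ M : ℝ≥0, ∀ ξ η, k ξ η ≤ M := by
  obtain ⟨M, hM⟩ := (isCompact_range
    (ContinuousMap.continuous_uncurry_of_continuous k)).bddAbove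
  exact ⟨M, fun ξ η => hM ⟨(ξ, η), rfl⟩⟩

variable [MeasurableSpace X] {ν : Measure X} {k : C(X, C(X, ℝ≥0))} {f g : X → ℝ≥0∞}

/-- The integral operator `f ↦ ∫ η, k · η * f η ∂ν` with a continuous nonnegative kernel, the kernel
being encoded as the continuous family `ξ ↦ k ξ` of its sections. -/
noncomputable def kernelOperator (ν : Measure X) (k : C(X, C(X, ℝ≥0))) (f : X → ℝ≥0∞) (ξ : X) :
    ℝ≥0∞ :=
  ∫⁻ η, k ξ η * f η ∂ν

lemma kernelOperator_mono (h : ∀ η, f η ≤ g η) (ξ : X) :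
    kernelOperator ν k f ξ ≤ kernelOperator ν k g ξ :=
  lintegral_mono fun η => by gcongr; exact h η

lemma kernelOperator_le_mul_lintegral {M : ℝ≥0} (hM : ∀ ξ η, k ξ η ≤ M) (f : X → ℝ≥0∞) (ξ : X) :
    kernelOperator ν k f ξ ≤ M * ∫⁻ η, f η ∂ν := by
  rw [← lintegral_const_mul' _ _ coe_ne_top]
  exact lintegral_mono fun η => by gcongr; exact hM ξ η

lemma lintegral_mul_le_add_edist [CompactSpace X] (hf : Measurable f) (κ κ' : C(X, ℝ≥0)) :
    ∫⁻ η, κ η * f η ∂ν ≤ ∫⁻ η, κ' η * f η ∂ν + (∫⁻ η, f η ∂ν) * edist κ κ' := by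
  rw [mul_comm _ (edist κ κ'), ← lintegral_const_mul _ hf, ← lintegral_add_right _ (hf.const_mul _)]
  refine lintegral_mono fun η => ?_
  have hle : κ η ≤ κ' η + nndist κ κ' :=
    (NNReal.le_add_nndist _ _).trans (by gcongr; exact ContinuousMap.dist_apply_le_dist η)
  rw [← add_mul, edist_nndist]
  gcongr
  exact ENNReal.coe_le_coe.2 hle

lemma continuous_kernelOperator [CompactSpace X] (hf : Measurable f) (hft : ∫⁻ η, f η ∂ν ≠ ⊤) :
    Continuous (kernelOperator ν k f) :=
  (continuous_of_le_add_edist (f := fun κ : C(X, ℝ≥0) => ∫⁻ η, κ η * f η ∂ν) _ hft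
    (lintegral_mul_le_add_edist hf)).comp k.continuous

variable [OpensMeasurableSpace X]

lemma measurable_kernel (ξ : X) : Measurable fun η => (k ξ η : ℝ≥0∞) :=
  (k ξ).continuous.measurable.coe_nnreal_ennreal

lemma kernelOperator_const_mul (hf : Measurable f) (c : ℝ≥0∞) (ξ : X) :
    kernelOperator ν k (fun η => c * f η) ξ = c * kernelOperator ν k f ξ := by
  simp only [kernelOperator, mul_left_comm _ c]
  exact lintegral_const_mul c ((measurable_kernel ξ).mul hf)

lemma kernelOperator_ne_zero [NullSingletonClass ν] (hk : ∀ ξ η, ξ ≠ η → k ξ η ≠ 0)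
    (hf : Measurable f) (hf0 : ∫⁻ η, f η ∂ν ≠ 0) (ξ : X) : kernelOperator ν k f ξ ≠ 0 := by
  contrapose! hf0
  have hzero := (lintegral_eq_zero_iff ((measurable_kernel ξ).mul hf)).1 hf0
  rw [lintegral_eq_zero_iff hf]
  filter_upwards [hzero, measure_eq_zero_iff_ae_notMem.1 (measure_singleton (μ := ν) ξ)]
    with η hη hne
  have hkη : (k ξ η : ℝ≥0∞) ≠ 0 := ENNReal.coe_ne_zero.2 (hk ξ η (Ne.symm hne))
  exact (mul_eq_zero.1 hη).resolve_left hkη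

variable [CompactSpace X]

lemma measurable_kernel_uncurry : Measurable fun z : X × X => (k z.1 z.2 : ℝ≥0∞) :=
  (ContinuousMap.continuous_uncurry_of_continuous k).measurable.coe_nnreal_ennreal

lemma measurable_kernelOperator [SFinite ν] (hf : Measurable f) :
    Measurable (kernelOperator ν k f) :=
  (measurable_kernel_uncurry.mul (hf.comp measurable_snd)).lintegral_prod_right'

lemma lintegral_kernelOperator_mul [SFinite ν] (hsymm : ∀ ξ η, k ξ η = k η ξ)
    (hf : Measurable f) (hg : Measurable g) :
    ∫⁻ ξ, kernelOperator ν k f ξ * g ξ ∂ν = ∫⁻ ξ, f ξ * kernelOperator ν k g ξ ∂ν :=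
  calc ∫⁻ ξ, kernelOperator ν k f ξ * g ξ ∂ν
      = ∫⁻ ξ, ∫⁻ η, k ξ η * f η * g ξ ∂ν ∂ν := lintegral_congr fun ξ =>
        (lintegral_mul_const _ ((measurable_kernel ξ).mul hf)).symm
    _ = ∫⁻ η, ∫⁻ ξ, k ξ η * f η * g ξ ∂ν ∂ν := lintegral_lintegral_swap
        ((measurable_kernel_uncurry.mul (hf.comp measurable_snd)).mul
          (hg.comp measurable_fst)).aemeasurable
    _ = ∫⁻ η, ∫⁻ ξ, f η * (k η ξ * g ξ) ∂ν ∂ν := by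
        simp only [fun ξ η => hsymm ξ η, mul_assoc, mul_left_comm]
    _ = ∫⁻ η, f η * kernelOperator ν k g η ∂ν := lintegral_congr fun η =>
        lintegral_const_mul _ ((measurable_kernel η).mul hg)

lemma exists_le_kernelOperator [NullSingletonClass ν] (hk : ∀ ξ η, ξ ≠ η → k ξ η ≠ 0)
    (hf : Measurable f) (hf0 : ∫⁻ η, f η ∂ν ≠ 0) (hft : ∫⁻ η, f η ∂ν ≠ ⊤) :
    ∃ c ≠ 0, ∀ ξ, c ≤ kernelOperator ν k f ξ := by
  rcases isEmpty_or_nonempty X with _ | _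
  · exact ⟨1, one_ne_zero, isEmptyElim⟩
  · obtain ⟨ξ₀, -, hmin⟩ := isCompact_univ.exists_isMinOn univ_nonempty
      (continuous_kernelOperator (k := k) hf hft).continuousOn
    exact ⟨_, kernelOperator_ne_zero hk hf hf0 ξ₀, fun ξ => hmin (mem_univ ξ)⟩

lemma lintegral_ne_top_of_kernelOperator_ne_top (hk : ∀ ξ η, ξ ≠ η → k ξ η ≠ 0)
    (hf : Measurable f) {ξ₁ ξ₂ : X} (hne : ξ₁ ≠ ξ₂) (h₁ : kernelOperator ν k f ξ₁ ≠ ⊤)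
    (h₂ : kernelOperator ν k f ξ₂ ≠ ⊤) : ∫⁻ η, f η ∂ν ≠ ⊤ := by
  -- `k ξ₁` and `k ξ₂` have no common zero, so their sum is bounded below.
  obtain ⟨η₀, -, hmin⟩ := isCompact_univ.exists_isMinOn ⟨ξ₁, mem_univ ξ₁⟩
    ((k ξ₁).continuous.add (k ξ₂).continuous).continuousOn
  have hpos : k ξ₁ η₀ + k ξ₂ η₀ ≠ 0 := fun h => by
    obtain ⟨h1, h2⟩ := add_eq_zero.1 h
    rcases eq_or_ne ξ₁ η₀ with rfl | hξ₁
    exacts [hk _ _ hne.symm h2, hk _ _ hξ₁ h1]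
  have hle : ((k ξ₁ η₀ + k ξ₂ η₀ : ℝ≥0) : ℝ≥0∞) * ∫⁻ η, f η ∂ν ≤
      kernelOperator ν k f ξ₁ + kernelOperator ν k f ξ₂ := by
    have hm : Measurable fun η => k ξ₁ η * f η := (measurable_kernel ξ₁).mul hf
    rw [kernelOperator, kernelOperator, ← lintegral_add_left hm, ← lintegral_const_mul _ hf]
    refine lintegral_mono fun η => ?_
    rw [← add_mul]
    gcongr
    exact ENNReal.coe_le_coe.2 (hmin (mem_univ η))
  intro htop
  rw [htop, ENNReal.mul_top (ENNReal.coe_ne_zero.2 hpos), top_le_iff] at hle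
  exact ENNReal.add_ne_top.2 ⟨h₁, h₂⟩ hle

lemma lintegral_ne_top_of_eLpNorm'_kernelOperator_ne_top [SFinite ν] [NullSingletonClass ν]
    (hk : ∀ ξ η, ξ ≠ η → k ξ η ≠ 0) {q : ℝ} (hq : q < 0) (hf : Measurable f)
    (h : eLpNorm' (kernelOperator ν k f) q ν ≠ ⊤) : ∫⁻ η, f η ∂ν ≠ ⊤ := by
  have hfin : ν {ξ | kernelOperator ν k f ξ ≠ ⊤} ≠ 0 := fun hnull => by
    refine lintegral_rpow_ne_zero_of_eLpNorm'_ne_top hq h ?_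
    rw [lintegral_eq_zero_iff ((measurable_kernelOperator hf).pow_const q)]
    filter_upwards [ae_iff.2 hnull] with ξ hξ
    simp [hξ, ENNReal.top_rpow_of_neg hq]
  have hnontriv : {ξ | kernelOperator ν k f ξ ≠ ⊤}.Nontrivial := by
    contrapose! hfin
    exact hfin.measure_zero ν
  obtain ⟨ξ₁, h₁, ξ₂, h₂, hne⟩ := hnontriv
  exact lintegral_ne_top_of_kernelOperator_ne_top hk hf hne h₁ h₂

lemma uniformlyPinchedOn_kernelOperator [IsFiniteMeasure ν] [NullSingletonClass ν]
    (hk : ∀ ξ η, ξ ≠ η → k ξ η ≠ 0) (hν : ν ≠ 0) {Y : Type*} {u : Y → X → ℝ≥0∞} {s : Set Y}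
    (h : UniformlyPinchedOn u s) : UniformlyPinchedOn (fun y => kernelOperator ν k (u y)) s := by
  obtain ⟨a, b, ha, hb, hab⟩ := h
  obtain ⟨M, hM⟩ := exists_kernel_le k
  have hν0 : ν univ ≠ 0 := Measure.measure_univ_ne_zero.2 hν
  obtain ⟨c, hc, hcle⟩ := exists_le_kernelOperator (f := fun _ => 1) hk measurable_const
    (by simpa using hν0) (by simp)
  refine ⟨a * c, M * (b * ν univ), mul_ne_zero ha hc,
    ENNReal.mul_ne_top coe_ne_top (ENNReal.mul_ne_top hb (measure_ne_top ν univ)),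
    fun y hy ξ => ⟨?_, ?_⟩⟩
  · calc a * c ≤ a * kernelOperator ν k (fun _ => 1) ξ := by gcongr; exact hcle ξ
      _ = kernelOperator ν k (fun _ => a * 1) ξ :=
        (kernelOperator_const_mul measurable_const a ξ).symm
      _ ≤ kernelOperator ν k (u y) ξ :=
        kernelOperator_mono (fun η => by simpa using (hab y hy η).1) ξ
  · refine (kernelOperator_le_mul_lintegral hM _ ξ).trans ?_
    gcongr
    rw [← lintegral_const]
    exact lintegral_mono fun η => (hab y hy η).2

end KernelOperator

section RayleighQuotient

variable {X : Type*} [PseudoMetricSpace X] [MeasurableSpace X] {ν : Measure X}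
  {k : C(X, C(X, ℝ≥0))} {f g : X → ℝ≥0∞} {p q : ℝ}

/-- The scale-invariant quotient `‖T f‖_q / ‖f‖_p` of the integral operator `T` with kernel `k`,
whose infimum is the best constant in the reversed Hardy-Littlewood-Sobolev inequality. -/
noncomputable def rayleighQuotient (ν : Measure X) (k : C(X, C(X, ℝ≥0))) (p q : ℝ)
    (f : X → ℝ≥0∞) : ℝ≥0∞ :=
  eLpNorm' (kernelOperator ν k f) q ν / eLpNorm' f p ν

variable [OpensMeasurableSpace X]

lemma rayleighQuotient_const_mul (hp : p ≠ 0) (hq : q ≠ 0) (hf : Measurable f) {c : ℝ≥0∞}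
    (h0 : c ≠ 0) (ht : c ≠ ⊤) :
    rayleighQuotient ν k p q (fun ξ => c * f ξ) = rayleighQuotient ν k p q f := by
  have hT : kernelOperator ν k (fun ξ => c * f ξ) = fun ξ => c * kernelOperator ν k f ξ :=
    funext (kernelOperator_const_mul hf c)
  rw [rayleighQuotient, hT, eLpNorm'_const_mul_ennreal h0 ht hp,
    eLpNorm'_const_mul_ennreal h0 ht hq, ENNReal.mul_div_mul_left _ _ h0 ht, rayleighQuotient]

/-- One step of the iteration `g ↦ (T g) ^ (q - 1)` given by the Euler-Lagrange equation does not
increase the quotient: by symmetry of `T`, reverse Hölder bounds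
`∫ g * T ((T g) ^ (q - 1)) = ∫ (T g) ^ q` from below. -/
theorem rayleighQuotient_iterate_le [CompactSpace X] [IsFiniteMeasure ν] [NullSingletonClass ν]
    (hν : ν ≠ 0) (hk : ∀ ξ η, ξ ≠ η → k ξ η ≠ 0) (hsymm : ∀ ξ η, k ξ η = k η ξ)
    (hp : 0 < p) (hq : q < 0) (hpq : p⁻¹ + q⁻¹ = 1) (hg : Measurable g)
    {Y : Type*} {u : Y → X → ℝ≥0∞} {s : Set Y} (hu : UniformlyPinchedOn u s) {y : Y} (hy : y ∈ s)
    (hgu : kernelOperator ν k g = u y) :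
    rayleighQuotient ν k p q (fun ξ => u y ξ ^ (q - 1)) ≤ rayleighQuotient ν k p q g := by
  have hdual := hu.rpow (q - 1)
  have hTdual := uniformlyPinchedOn_kernelOperator hk hν hdual
  have hm : Measurable fun ξ => u y ξ ^ (q - 1) := hgu ▸ (measurable_kernelOperator hg).pow_const _
  set B := ∫⁻ ξ, u y ξ ^ q ∂ν with hB
  have hB0 : B ≠ 0 := (hu.rpow q).lintegral_ne_zero hν hy
  have hBt : B ≠ ⊤ := (hu.rpow q).lintegral_ne_top hy
  have hpairing : ∫⁻ ξ, g ξ * kernelOperator ν k (fun η => u y η ^ (q - 1)) ξ ∂ν = B := by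
    rw [← lintegral_kernelOperator_mul hsymm hg hm, hgu]
    refine lintegral_congr fun ξ => ?_
    nth_rewrite 1 [← ENNReal.rpow_one (u y ξ)]
    rw [← ENNReal.rpow_add _ _ (hu.ne_zero hy ξ) (hu.ne_top hy ξ), add_sub_cancel]
  have hdual_norm : eLpNorm' (fun ξ => u y ξ ^ (q - 1)) p ν = B ^ (1 / p) := by
    have hexp : (q - 1) * p = q := by
      have hq0 := hq.ne
      field_simp at hpq
      linarith
    simp only [eLpNorm'_eq_lintegral_enorm, enorm_eq_self, ← ENNReal.rpow_mul, hexp, hB]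
  have hu_norm : eLpNorm' (u y) q ν = B ^ (1 / q) := rfl
  have hHolder : eLpNorm' g p ν *
      eLpNorm' (kernelOperator ν k fun η => u y η ^ (q - 1)) q ν ≤ B := hpairing ▸
    eLpNorm'_mul_eLpNorm'_le_lintegral_mul hp hq hpq hg.aemeasurable
      (measurable_kernelOperator hm).aemeasurable (.of_forall (hTdual.ne_zero hy))
      (.of_forall (hTdual.ne_top hy))
  have hsplit : B = B ^ (1 / p) * B ^ (1 / q) := by
    rw [← ENNReal.rpow_add _ _ hB0 hBt, one_div, one_div, hpq, ENNReal.rpow_one]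
  rw [rayleighQuotient, rayleighQuotient, hgu, hdual_norm, hu_norm,
    ENNReal.le_div_iff_mul_le (Or.inr (rpow_ne_zero_of_ne hB0 hBt _))
      (Or.inr (ENNReal.rpow_ne_top_of_ne_zero hB0 hBt)),
    mul_comm, ← mul_div_assoc]
  refine ENNReal.div_le_of_le_mul ?_
  rwa [mul_comm (B ^ (1 / q)), ← hsplit]

end RayleighQuotient

section KernelModulusClass

variable {X : Type*} [PseudoMetricSpace X] [CompactSpace X] {k : C(X, C(X, ℝ≥0))} {c M : ℝ≥0}

/-- The functions with values in `[c, M]` whose modulus of continuity is controlled by that of the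
kernel; normalised potentials `kernelOperator ν k f` lie in such a class. -/
def kernelModulusClass (k : C(X, C(X, ℝ≥0))) (c M : ℝ≥0) : Set (X →ᵇ ℝ≥0) :=
  {G | (∀ ξ, G ξ ∈ Icc c M) ∧ ∀ ξ ξ', dist (G ξ) (G ξ') ≤ dist (k ξ) (k ξ')}

lemma isClosed_kernelModulusClass : IsClosed (kernelModulusClass k c M) := by
  have heval (ξ : X) : Continuous fun G : X →ᵇ ℝ≥0 => G ξ :=
    (BoundedContinuousFunction.lipschitz_eval_const ξ).continuous
  simp only [kernelModulusClass, ofPred_and, ofPred_forall]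
  exact (isClosed_iInter fun ξ => isClosed_Icc.preimage (heval ξ)).inter <|
    isClosed_iInter fun ξ => isClosed_iInter fun ξ' =>
      isClosed_le ((heval ξ).dist (heval ξ')) continuous_const

lemma isCompact_kernelModulusClass : IsCompact (kernelModulusClass k c M) := by
  refine BoundedContinuousFunction.arzela_ascoli₂ (Icc c M) isCompact_Icc _
    isClosed_kernelModulusClass (fun G ξ hG => hG.1 ξ) fun ξ => ?_
  have hlim : Tendsto (fun ξ' => dist (k ξ) (k ξ')) (𝓝 ξ) (𝓝 0) := by
    have hcont : Continuous fun ξ' => dist (k ξ) (k ξ') := by fun_prop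
    simpa using hcont.tendsto ξ
  exact Metric.equicontinuousAt_of_continuity_modulus _ hlim _
    (.of_forall fun ξ' G => G.2.2 ξ ξ')

lemma uniformlyPinchedOn_kernelModulusClass (hc : c ≠ 0) :
    UniformlyPinchedOn (fun (G : X →ᵇ ℝ≥0) ξ => (G ξ : ℝ≥0∞)) (kernelModulusClass k c M) :=
  ⟨c, M, ENNReal.coe_ne_zero.2 hc, coe_ne_top,
    fun _ hG ξ => ⟨ENNReal.coe_le_coe.2 (hG.1 ξ).1, ENNReal.coe_le_coe.2 (hG.1 ξ).2⟩⟩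

variable [MeasurableSpace X] {ν : Measure X} {g : X → ℝ≥0∞} {p q : ℝ}

lemma exists_mem_kernelModulusClass (hM : ∀ ξ η, k ξ η ≤ M) (hg : Measurable g)
    (hg1 : ∫⁻ η, g η ∂ν = 1) (hcg : ∀ ξ, c ≤ kernelOperator ν k g ξ) :
    ∃ G ∈ kernelModulusClass k c M, kernelOperator ν k g = fun ξ => (G ξ : ℝ≥0∞) := by
  have hle (ξ : X) : kernelOperator ν k g ξ ≤ M := by
    simpa [hg1] using kernelOperator_le_mul_lintegral (ν := ν) hM g ξ
  have hcont : Continuous (kernelOperator ν k g) :=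
    continuous_kernelOperator hg (hg1 ▸ one_ne_top)
  have hosc (ξ ξ' : X) : kernelOperator ν k g ξ ≤ kernelOperator ν k g ξ' + edist (k ξ) (k ξ') := by
    have h := lintegral_mul_le_add_edist (ν := ν) hg (k ξ) (k ξ')
    rwa [hg1, one_mul] at h
  lift kernelOperator ν k g to X → ℝ≥0 using fun ξ => ne_top_of_le_ne_top coe_ne_top (hle ξ)
    with G
  have hG (ξ ξ' : X) : G ξ ≤ G ξ' + nndist (k ξ) (k ξ') := by
    have h := hosc ξ ξ'
    rw [edist_nndist] at h
    exact_mod_cast h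
  refine ⟨.mkOfCompact ⟨G, ENNReal.continuous_coe_iff.1 hcont⟩,
    ⟨fun ξ => ⟨by exact_mod_cast hcg ξ, by exact_mod_cast hle ξ⟩, fun ξ ξ' => ?_⟩, rfl⟩
  rw [dist_nndist, dist_nndist, NNReal.coe_le_coe]
  change nndist (G ξ) (G ξ') ≤ _
  rw [NNReal.nndist_eq]
  exact max_le (tsub_le_iff_left.2 (hG ξ ξ')) (tsub_le_iff_left.2 (nndist_comm (k ξ) _ ▸ hG ξ' ξ))

variable [OpensMeasurableSpace X] [IsFiniteMeasure ν] [NullSingletonClass ν]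

lemma continuousOn_rayleighQuotient_rpow (hν : ν ≠ 0) (hk : ∀ ξ η, ξ ≠ η → k ξ η ≠ 0)
    (hc : c ≠ 0) (p q r : ℝ) :
    ContinuousOn (fun G : X →ᵇ ℝ≥0 => rayleighQuotient ν k p q fun ξ => (G ξ : ℝ≥0∞) ^ r)
      (kernelModulusClass k c M) := by
  have hpinch := (uniformlyPinchedOn_kernelModulusClass (k := k) (M := M) hc).rpow r
  have hTpinch := uniformlyPinchedOn_kernelOperator (ν := ν) hk hν hpinch
  have hm (G : X →ᵇ ℝ≥0) : Measurable fun ξ => (G ξ : ℝ≥0∞) ^ r :=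
    G.continuous.measurable.coe_nnreal_ennreal.pow_const r
  have heval (ξ : X) : Continuous fun G : X →ᵇ ℝ≥0 => (G ξ : ℝ≥0∞) ^ r :=
    ENNReal.continuous_rpow_const.comp
      (ENNReal.continuous_coe.comp (BoundedContinuousFunction.lipschitz_eval_const ξ).continuous)
  have hTeval (ξ : X) : ContinuousOn (fun G : X →ᵇ ℝ≥0 => kernelOperator ν k
      (fun η => (G η : ℝ≥0∞) ^ r) ξ) (kernelModulusClass k c M) := by
    obtain ⟨a, b, -, hb, hab⟩ := hpinch
    obtain ⟨B, hB⟩ := exists_kernel_le k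
    exact continuousOn_lintegral_of_le_const (ENNReal.mul_ne_top (coe_ne_top (r := B)) hb)
      (fun G hG η => mul_le_mul' (ENNReal.coe_le_coe.2 (hB ξ η)) (hab G hG η).2)
      (fun G => (measurable_kernel ξ).mul (hm G))
      fun η => ((ENNReal.continuous_const_mul coe_ne_top).comp (heval η)).continuousOn
  intro G hG
  exact ENNReal.Tendsto.div
    (hTpinch.continuousOn_eLpNorm' q (fun G => measurable_kernelOperator (hm G)) hTeval G hG)
    (Or.inl (hTpinch.eLpNorm'_ne_zero hν q hG))
    (hpinch.continuousOn_eLpNorm' p hm (fun ξ => (heval ξ).continuousOn) G hG)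
    (Or.inl (hpinch.eLpNorm'_ne_top hν p hG))

lemma exists_rayleighQuotient_rpow_le (hν : ν ≠ 0) (hk : ∀ ξ η, ξ ≠ η → k ξ η ≠ 0)
    (hsymm : ∀ ξ η, k ξ η = k η ξ) (hp : 0 < p) (hq : q < 0) (hpq : p⁻¹ + q⁻¹ = 1)
    (hM : ∀ ξ η, k ξ η ≤ M) (hc : c ≠ 0) (hg : Measurable g) (hg1 : ∫⁻ η, g η ∂ν = 1)
    (hcg : ∀ ξ, c ≤ kernelOperator ν k g ξ) :
    ∃ G ∈ kernelModulusClass k c M,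
      rayleighQuotient ν k p q (fun ξ => (G ξ : ℝ≥0∞) ^ (q - 1)) ≤ rayleighQuotient ν k p q g := by
  obtain ⟨G, hG, hGg⟩ := exists_mem_kernelModulusClass hM hg hg1 hcg
  exact ⟨G, hG, rayleighQuotient_iterate_le hν hk hsymm hp hq hpq hg
    (uniformlyPinchedOn_kernelModulusClass hc) hG hGg⟩

/-- Every admissible function can be replaced, without changing its quotient, by one of mass `1`
whose potential is at least `c`. This is the compactness that a minimising sequence lacks when the
quotient has a noncompact symmetry group. -/
def IsBalanceable (ν : Measure X) (k : C(X, C(X, ℝ≥0))) (p q : ℝ) (c : ℝ≥0) : Prop :=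
  ∀ f : X → ℝ≥0∞, Measurable f → ∫⁻ η, f η ∂ν ≠ 0 → ∫⁻ η, f η ∂ν ≠ ⊤ →
    ∃ g : X → ℝ≥0∞, Measurable g ∧ ∫⁻ η, g η ∂ν = 1 ∧ (∀ ξ, c ≤ kernelOperator ν k g ξ) ∧
      rayleighQuotient ν k p q g = rayleighQuotient ν k p q f

theorem IsBalanceable.exists_minimizer_rayleighQuotient (hbal : IsBalanceable ν k p q c)
    (hν : ν ≠ 0) (hk : ∀ ξ η, ξ ≠ η → k ξ η ≠ 0) (hsymm : ∀ ξ η, k ξ η = k η ξ) (hp : 0 < p)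
    (hq : q < 0) (hpq : p⁻¹ + q⁻¹ = 1) (hc : c ≠ 0) :
    ∃ h : X → ℝ≥0, Measurable h ∧ eLpNorm' (fun ξ => (h ξ : ℝ≥0∞)) p ν ≠ 0 ∧
      eLpNorm' (fun ξ => (h ξ : ℝ≥0∞)) p ν ≠ ⊤ ∧
      rayleighQuotient ν k p q (fun ξ => h ξ) ≠ 0 ∧
      ∀ f : X → ℝ≥0∞, Measurable f → ∫⁻ η, f η ∂ν ≠ 0 → ∫⁻ η, f η ∂ν ≠ ⊤ →
        rayleighQuotient ν k p q (fun ξ => h ξ) ≤ rayleighQuotient ν k p q f := by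
  obtain ⟨M, hM⟩ := exists_kernel_le k
  have hdescend (f : X → ℝ≥0∞) (hf : Measurable f) (hf0 : ∫⁻ η, f η ∂ν ≠ 0)
      (hft : ∫⁻ η, f η ∂ν ≠ ⊤) : ∃ G ∈ kernelModulusClass k c M,
      rayleighQuotient ν k p q (fun ξ => (G ξ : ℝ≥0∞) ^ (q - 1)) ≤
        rayleighQuotient ν k p q f := by
    obtain ⟨g, hg, hg1, hcg, hgf⟩ := hbal f hf hf0 hft
    exact hgf ▸ exists_rayleighQuotient_rpow_le hν hk hsymm hp hq hpq hM hc hg hg1 hcg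
  have hne : (kernelModulusClass k c M).Nonempty := by
    obtain ⟨G, hG, -⟩ := hdescend (fun _ => 1) measurable_const
      (by simpa using Measure.measure_univ_ne_zero.2 hν) (by simp)
    exact ⟨G, hG⟩
  obtain ⟨G, hG, hmin⟩ := isCompact_kernelModulusClass.exists_isMinOn hne
    (continuousOn_rayleighQuotient_rpow hν hk hc p q (q - 1))
  have hpinch := (uniformlyPinchedOn_kernelModulusClass (k := k) (M := M) hc).rpow (q - 1)
  have hGpow : (fun ξ => (G ξ : ℝ≥0∞) ^ (q - 1)) = fun ξ => ((G ξ ^ (q - 1) : ℝ≥0) : ℝ≥0∞) := by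
    ext ξ
    exact (ENNReal.coe_rpow_of_ne_zero (hc.bot_lt.trans_le (hG.1 ξ).1).ne' _).symm
  have hp0 := hpinch.eLpNorm'_ne_zero (μ := ν) hν p hG
  have hpt := hpinch.eLpNorm'_ne_top (μ := ν) hν p hG
  have hT0 := (uniformlyPinchedOn_kernelOperator hk hν hpinch).eLpNorm'_ne_zero (μ := ν) hν q hG
  have hR0 := ENNReal.div_ne_zero.2 ⟨hT0, hpt⟩
  refine ⟨fun ξ => G ξ ^ (q - 1), G.continuous.measurable.pow_const _, hGpow ▸ hp0, hGpow ▸ hpt,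
    hGpow ▸ hR0, fun f hf hf0 hft => ?_⟩
  obtain ⟨G', hG', hle⟩ := hdescend f hf hf0 hft
  exact hGpow ▸ (hmin hG').trans hle

theorem IsBalanceable.exists_minimizer (hbal : IsBalanceable ν k p q c)
    (hν : ν ≠ 0) (hk : ∀ ξ η, ξ ≠ η → k ξ η ≠ 0) (hsymm : ∀ ξ η, k ξ η = k η ξ) (hp : 0 < p)
    (hq : q < 0) (hpq : p⁻¹ + q⁻¹ = 1) (hc : c ≠ 0) :
    ∃ f₀ : X → ℝ≥0, Measurable f₀ ∧ eLpNorm' (fun ξ => (f₀ ξ : ℝ≥0∞)) p ν = 1 ∧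
      eLpNorm' (kernelOperator ν k fun ξ => f₀ ξ) q ν ≠ 0 ∧
      ∀ f : X → ℝ≥0∞, Measurable f → eLpNorm' f p ν = 1 →
        eLpNorm' (kernelOperator ν k fun ξ => f₀ ξ) q ν ≤ eLpNorm' (kernelOperator ν k f) q ν := by
  obtain ⟨h, hm, h0, ht, hR0, hmin⟩ :=
    hbal.exists_minimizer_rayleighQuotient hν hk hsymm hp hq hpq hc
  set N := eLpNorm' (fun ξ => (h ξ : ℝ≥0∞)) p ν
  have hN0 : N⁻¹ ≠ 0 := ENNReal.inv_ne_zero.2 ht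
  have hNt : N⁻¹ ≠ ⊤ := ENNReal.inv_ne_top.2 h0
  have hf₀ : (fun ξ => ((N.toNNReal⁻¹ * h ξ : ℝ≥0) : ℝ≥0∞)) = fun ξ => N⁻¹ * h ξ := by
    ext ξ
    rw [← ENNReal.toNNReal_inv, ENNReal.coe_mul, ENNReal.coe_toNNReal hNt]
  have hnorm : eLpNorm' (fun ξ => N⁻¹ * (h ξ : ℝ≥0∞)) p ν = 1 := by
    rw [eLpNorm'_const_mul_ennreal hN0 hNt hp.ne', ENNReal.inv_mul_cancel h0 ht]
  have hquot {f : X → ℝ≥0∞} (hf1 : eLpNorm' f p ν = 1) :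
      rayleighQuotient ν k p q f = eLpNorm' (kernelOperator ν k f) q ν := by
    rw [rayleighQuotient, hf1, div_one]
  have hval : eLpNorm' (kernelOperator ν k fun ξ => N⁻¹ * (h ξ : ℝ≥0∞)) q ν =
      rayleighQuotient ν k p q fun ξ => h ξ := by
    rw [← hquot hnorm,
      rayleighQuotient_const_mul hp.ne' hq.ne hm.coe_nnreal_ennreal hN0 hNt]
  refine ⟨fun ξ => N.toNNReal⁻¹ * h ξ, hm.const_mul _, hf₀ ▸ hnorm, ?_, fun f hf hf1 => ?_⟩
  · rwa [hf₀, hval]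
  · rw [hf₀, hval]
    by_cases htop : eLpNorm' (kernelOperator ν k f) q ν = ⊤
    · exact htop ▸ le_top
    · rw [← hquot hf1]
      exact hmin f hf (lintegral_ne_zero_of_eLpNorm'_ne_zero hp hf (hf1 ▸ one_ne_zero))
        (lintegral_ne_top_of_eLpNorm'_kernelOperator_ne_top hk hq hf htop)

end KernelModulusClass

section LorentzBoost

variable {E : Type*} [NormedAddCommGroup E]

/-- The time component of the point of the unit hyperboloid lying above `y`. -/
noncomputable def lorentzFactor (y : E) : ℝ := √(1 + ‖y‖ ^ 2)

/-- The embedding of `E` as the upper sheet of the unit hyperboloid in `ℝ × E`. -/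
noncomputable def hyperboloidLift (z : E) : ℝ × E := (lorentzFactor z, z)

lemma lorentzFactor_sq (y : E) : lorentzFactor y ^ 2 = 1 + ‖y‖ ^ 2 := Real.sq_sqrt (by positivity)

lemma lorentzFactor_pos (y : E) : 0 < lorentzFactor y := Real.sqrt_pos.2 (by positivity)

lemma one_add_lorentzFactor_ne_zero (y : E) : 1 + lorentzFactor y ≠ 0 := by
  linarith [lorentzFactor_pos y]

lemma norm_lt_lorentzFactor (y : E) : ‖y‖ < lorentzFactor y :=
  Real.lt_sqrt_of_sq_lt (by linarith)

lemma lorentzFactor_neg (y : E) : lorentzFactor (-y) = lorentzFactor y := by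
  simp only [lorentzFactor, norm_neg]

variable [InnerProductSpace ℝ E]

/-- The Minkowski form of `ℝ × E`, the first factor being time. -/
noncomputable def minkowskiForm (v w : ℝ × E) : ℝ := v.1 * w.1 - inner ℝ v.2 w.2

/-- The Lorentz boost of `ℝ × E` that maps `(1, 0)` to `hyperboloidLift y`. -/
noncomputable def lorentzBoost (y : E) (v : ℝ × E) : ℝ × E :=
  (lorentzFactor y * v.1 + inner ℝ y v.2,
    v.2 + (v.1 + inner ℝ y v.2 / (1 + lorentzFactor y)) • y)

lemma minkowskiForm_self (v : ℝ × E) : minkowskiForm v v = v.1 ^ 2 - ‖v.2‖ ^ 2 := by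
  rw [minkowskiForm, real_inner_self_eq_norm_sq, sq v.1]

lemma minkowskiForm_lorentzBoost (y : E) (v w : ℝ × E) :
    minkowskiForm (lorentzBoost y v) (lorentzBoost y w) = minkowskiForm v w := by
  have hγ : ‖y‖ ^ 2 = lorentzFactor y ^ 2 - 1 := by linarith [lorentzFactor_sq y]
  have hγ' := one_add_lorentzFactor_ne_zero y
  simp only [minkowskiForm, lorentzBoost, inner_add_left, inner_add_right, inner_smul_left,
    inner_smul_right, real_inner_self_eq_norm_sq, real_inner_comm y v.2, RCLike.conj_to_real, hγ]
  field_simp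
  ring

lemma lorentzBoost_neg_lorentzBoost (y : E) (v : ℝ × E) :
    lorentzBoost (-y) (lorentzBoost y v) = v := by
  have hγ : ‖y‖ ^ 2 = lorentzFactor y ^ 2 - 1 := by linarith [lorentzFactor_sq y]
  have hγ' := one_add_lorentzFactor_ne_zero y
  ext
  · simp only [lorentzBoost, lorentzFactor_neg, inner_neg_left, inner_add_right, inner_smul_right,
      real_inner_self_eq_norm_sq, hγ]
    field_simp
    ring
  · simp only [lorentzBoost, lorentzFactor_neg, inner_neg_left, inner_add_right, inner_smul_right,
      real_inner_self_eq_norm_sq, hγ]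
    rw [smul_neg, add_assoc, ← sub_eq_add_neg, ← sub_smul, add_eq_left, smul_eq_zero]
    left
    field_simp
    ring

lemma lorentzBoost_smul (y : E) (r : ℝ) (v : ℝ × E) :
    lorentzBoost y (r • v) = r • lorentzBoost y v := by
  simp only [lorentzBoost, Prod.smul_fst, Prod.smul_snd, inner_smul_right, Prod.smul_mk, smul_add,
    smul_smul, smul_eq_mul]
  congr 3 <;> ring

lemma fst_lorentzBoost_eq_sqrt (y : E) {v : ℝ × E} (hv : ‖v.2‖ ≤ v.1) :
    (lorentzBoost y v).1 = √(minkowskiForm v v + ‖(lorentzBoost y v).2‖ ^ 2) := by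
  have hnonneg : 0 ≤ (lorentzBoost y v).1 := by
    have hinner : -(‖y‖ * ‖v.2‖) ≤ inner ℝ y v.2 := neg_le_of_abs_le (abs_real_inner_le_norm y v.2)
    have hprod : ‖y‖ * ‖v.2‖ ≤ lorentzFactor y * v.1 :=
      mul_le_mul (norm_lt_lorentzFactor y).le hv (norm_nonneg _) (lorentzFactor_pos y).le
    simp only [lorentzBoost]
    linarith
  rw [← minkowskiForm_lorentzBoost y, minkowskiForm_self, sub_add_cancel, Real.sqrt_sq hnonneg]

/-- The action of `lorentzBoost y` on the forward light cone, which is identified with `E` by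
projecting to the space component. -/
noncomputable def coneBoost (y x : E) : E := (lorentzBoost y (‖x‖, x)).2

/-- The action of `lorentzBoost y` on the upper sheet of the unit hyperboloid, which is identified
with `E` by `hyperboloidLift`. -/
noncomputable def hyperboloidBoost (y z : E) : E := (lorentzBoost y (hyperboloidLift z)).2

lemma lorentzBoost_norm_mk (y x : E) :
    lorentzBoost y (‖x‖, x) = (‖coneBoost y x‖, coneBoost y x) := by
  refine Prod.ext ?_ rfl
  rw [fst_lorentzBoost_eq_sqrt y le_rfl, minkowskiForm_self, sub_self, zero_add,
    Real.sqrt_sq (norm_nonneg _), coneBoost]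

lemma norm_coneBoost (y x : E) :
    ‖coneBoost y x‖ = lorentzFactor y * ‖x‖ + inner ℝ y x :=
  (congrArg Prod.fst (lorentzBoost_norm_mk y x)).symm

lemma lorentzBoost_hyperboloidLift (y z : E) :
    lorentzBoost y (hyperboloidLift z) = hyperboloidLift (hyperboloidBoost y z) := by
  refine Prod.ext ?_ rfl
  rw [fst_lorentzBoost_eq_sqrt y (norm_lt_lorentzFactor z).le, minkowskiForm_self]
  simp only [hyperboloidLift, lorentzFactor_sq, add_sub_cancel_right]
  rfl

lemma hyperboloidBoost_zero (y : E) : hyperboloidBoost y 0 = y := by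
  simp [hyperboloidBoost, hyperboloidLift, lorentzBoost, lorentzFactor]

lemma coneBoost_neg_coneBoost (y x : E) : coneBoost (-y) (coneBoost y x) = x := by
  rw [coneBoost, ← lorentzBoost_norm_mk, lorentzBoost_neg_lorentzBoost]

lemma coneBoost_injective (y : E) : Function.Injective (coneBoost y) :=
  Function.LeftInverse.injective (coneBoost_neg_coneBoost y)

lemma coneBoost_surjective (y : E) : Function.Surjective (coneBoost y) := fun x =>
  ⟨coneBoost (-y) x, by simpa only [neg_neg] using coneBoost_neg_coneBoost (-y) x⟩

lemma coneBoost_smul (y x : E) (r : ℝ≥0) : coneBoost y (r • x) = r • coneBoost y x := by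
  have hr : (‖r • x‖, r • x) = (r : ℝ) • (‖x‖, x) := by
    rw [Prod.smul_mk, NNReal.smul_def, norm_smul, Real.norm_of_nonneg r.coe_nonneg, smul_eq_mul]
  rw [coneBoost, hr, lorentzBoost_smul, coneBoost, Prod.smul_snd, NNReal.smul_def]

lemma coneBoost_eq_zero_iff {y x : E} : coneBoost y x = 0 ↔ x = 0 := by
  have hzero : coneBoost y 0 = 0 := by simpa using coneBoost_smul y 0 0
  exact ⟨fun h => coneBoost_injective y (h.trans hzero.symm), fun h => h ▸ hzero⟩

lemma continuous_coneBoost (y : E) : Continuous (coneBoost y) := by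
  unfold coneBoost lorentzBoost
  fun_prop

lemma hasFDerivAt_norm_of_ne_zero {x : E} (hx : x ≠ 0) :
    HasFDerivAt (fun x : E => ‖x‖) (‖x‖⁻¹ • innerSL ℝ x) x := by
  have hsqrt := (hasStrictFDerivAt_norm_sq x).hasFDerivAt.sqrt (by simpa using hx)
  simp only [Real.sqrt_sq (norm_nonneg _)] at hsqrt
  convert hsqrt using 1
  ext v
  simp only [smul_apply, innerSL_apply_apply, smul_eq_mul, nsmul_eq_mul]
  field_simp
  norm_num

/-- The linear functional whose tensor product with `y` is the derivative of `coneBoost y - id`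
at `x`. -/
noncomputable def coneBoostCovector (y x : E) : E →L[ℝ] ℝ :=
  ‖x‖⁻¹ • innerSL ℝ x + (1 + lorentzFactor y)⁻¹ • innerSL ℝ y

lemma hasFDerivAt_coneBoost (y : E) {x : E} (hx : x ≠ 0) :
    HasFDerivAt (coneBoost y)
      (ContinuousLinearMap.id ℝ E + (coneBoostCovector y x).smulRight y) x := by
  have hinner : HasFDerivAt (fun x : E => inner ℝ y x / (1 + lorentzFactor y))
      ((1 + lorentzFactor y)⁻¹ • innerSL ℝ y) x := by
    simp only [div_eq_inv_mul]
    exact (innerSL ℝ y).hasFDerivAt.const_smul (1 + lorentzFactor y)⁻¹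
  exact (hasFDerivAt_id x).add (((hasFDerivAt_norm_of_ne_zero hx).add hinner).smul_const y)

lemma det_fderiv_coneBoost [FiniteDimensional ℝ E] (y : E) {x : E} (hx : x ≠ 0) :
    (ContinuousLinearMap.id ℝ E + (coneBoostCovector y x).smulRight y).det =
      ‖coneBoost y x‖ / ‖x‖ := by
  have htransvection : ((ContinuousLinearMap.id ℝ E + (coneBoostCovector y x).smulRight y :
      E →L[ℝ] E) : E →ₗ[ℝ] E) = LinearMap.transvection (coneBoostCovector y x : E →ₗ[ℝ] ℝ) y := by
    ext v
    simp [LinearMap.transvection]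
  have hγ : ‖y‖ ^ 2 = lorentzFactor y ^ 2 - 1 := by linarith [lorentzFactor_sq y]
  have hγ' := one_add_lorentzFactor_ne_zero y
  have hx' := norm_ne_zero_iff.2 hx
  rw [ContinuousLinearMap.det, htransvection, LinearMap.transvection.det, norm_coneBoost]
  simp only [coneBoostCovector, ContinuousLinearMap.coe_coe, add_apply,
    smul_apply, innerSL_apply_apply, smul_eq_mul, real_inner_self_eq_norm_sq,
    hγ, real_inner_comm]
  field_simp
  ring

end LorentzBoost

section SphereBoost

variable {E : Type*} [NormedAddCommGroup E] [InnerProductSpace ℝ E]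

lemma coneBoost_coe_sphere_ne_zero (y : E) (θ : sphere (0 : E) 1) : coneBoost y θ ≠ 0 :=
  coneBoost_eq_zero_iff.not.2 (ne_zero_of_mem_unit_sphere θ)

/-- The factor by which the conformal map `sphereBoost y` scales lengths is
`(conformalFactor y θ)⁻¹`. -/
noncomputable def conformalFactor (y : E) (θ : sphere (0 : E) 1) : ℝ≥0 := ‖coneBoost y θ‖₊

/-- The conformal automorphism of the unit sphere that `lorentzBoost y` induces on the rays of the
light cone. -/
noncomputable def sphereBoost (y : E) (θ : sphere (0 : E) 1) : sphere (0 : E) 1 :=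
  ⟨‖coneBoost y θ‖⁻¹ • coneBoost y θ, by
    simpa using norm_smul_inv_norm (𝕜 := ℝ) (coneBoost_coe_sphere_ne_zero y θ)⟩

lemma conformalFactor_ne_zero (y : E) (θ : sphere (0 : E) 1) : conformalFactor y θ ≠ 0 :=
  nnnorm_ne_zero_iff.2 (coneBoost_coe_sphere_ne_zero y θ)

lemma conformalFactor_smul_sphereBoost (y : E) (θ : sphere (0 : E) 1) :
    conformalFactor y θ • (sphereBoost y θ : E) = coneBoost y θ := by
  simp only [NNReal.smul_def, conformalFactor, coe_nnnorm, sphereBoost]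
  exact smul_inv_smul₀ (norm_ne_zero_iff.2 (coneBoost_coe_sphere_ne_zero y θ)) _

lemma continuous_conformalFactor (y : E) : Continuous (conformalFactor y) :=
  ((continuous_coneBoost y).comp continuous_subtype_val).nnnorm

lemma continuous_sphereBoost (y : E) : Continuous (sphereBoost y) := by
  have hcone : Continuous fun θ : sphere (0 : E) 1 => coneBoost y θ :=
    (continuous_coneBoost y).comp continuous_subtype_val
  exact Continuous.subtype_mk ((hcone.norm.inv₀ fun θ =>
    norm_ne_zero_iff.2 (coneBoost_coe_sphere_ne_zero y θ)).smul hcone) _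

lemma lorentzBoost_one_coe_sphere (y : E) (θ : sphere (0 : E) 1) :
    lorentzBoost y (1, (θ : E)) = (conformalFactor y θ : ℝ) • (1, (sphereBoost y θ : E)) := by
  have h := lorentzBoost_norm_mk y (θ : E)
  rw [norm_eq_of_mem_sphere] at h
  rw [h, Prod.smul_mk, smul_eq_mul, mul_one, ← NNReal.smul_def, conformalFactor_smul_sphereBoost]
  rfl

lemma radial_jacobian_coneBoost {g : sphere (0 : E) 1 → ℝ≥0∞} {G : E → ℝ≥0∞}
    (hG : ∀ (r : ℝ≥0) (θ : sphere (0 : E) 1), r ≠ 0 → G (r • (θ : E)) = g θ)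
    (y : E) {r : ℝ≥0} (hr : r ≠ 0) (θ : sphere (0 : E) 1) :
    ENNReal.ofReal (‖coneBoost y (r • (θ : E))‖ / ‖r • (θ : E)‖) * G (coneBoost y (r • (θ : E))) =
      conformalFactor y θ * g (sphereBoost y θ) := by
  have hray : coneBoost y (r • (θ : E)) = (r * conformalFactor y θ) • (sphereBoost y θ : E) := by
    rw [coneBoost_smul, ← conformalFactor_smul_sphereBoost, smul_smul]
  have hnorm (s : ℝ≥0) (ζ : sphere (0 : E) 1) : ‖s • (ζ : E)‖ = s := by
    rw [NNReal.smul_def, norm_smul, norm_eq_of_mem_sphere, mul_one, NNReal.norm_eq]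
  rw [hray, hG _ _ (mul_ne_zero hr (conformalFactor_ne_zero y θ)), hnorm, hnorm, NNReal.coe_mul,
    mul_div_cancel_left₀ _ (NNReal.coe_ne_zero.2 hr), ENNReal.ofReal_coe_nnreal]

end SphereBoost

section ChangeOfVariables

variable {E : Type*} [NormedAddCommGroup E] [NormedSpace ℝ E] [MeasurableSpace E]

lemma exists_measurable_radial_extension [BorelSpace E] {g : sphere (0 : E) 1 → ℝ≥0∞}
    (hg : Measurable g) :
    ∃ G : E → ℝ≥0∞, Measurable G ∧
      ∀ (r : ℝ≥0) (θ : sphere (0 : E) 1), r ≠ 0 → G (r • (θ : E)) = g θ := by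
  refine ⟨Function.extend (Subtype.val : ({(0 : E)}ᶜ : Set E) → E)
    (fun x => g (homeomorphUnitSphereProd E x).1) 0, ?_, fun r θ hr => ?_⟩
  · exact (MeasurableEmbedding.subtype_coe (measurableSet_singleton _).compl).measurable_extend
      (hg.comp (continuous_fst.comp (homeomorphUnitSphereProd E).continuous).measurable)
      measurable_zero
  · have hpolar : ((homeomorphUnitSphereProd E).symm (θ, ⟨r, hr.bot_lt⟩) : E) = r • (θ : E) := by
      simp [NNReal.smul_def]
    rw [← hpolar, Subtype.val_injective.extend_apply, Homeomorph.apply_symm_apply]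

variable [FiniteDimensional ℝ E] [BorelSpace E] (μ : Measure E) [μ.IsAddHaarMeasure]

lemma lintegral_compl_zero_eq_lintegral_sphere {f : E → ℝ≥0∞} (hf : Measurable f) :
    ∫⁻ x in {(0 : E)}ᶜ, f x ∂μ =
      ∫⁻ θ, ∫⁻ r : Ioi (0 : ℝ), f ((r : ℝ) • (θ : E)) ∂Measure.volumeIoiPow (finrank ℝ E - 1)
        ∂μ.toSphere := by
  have hpolar := μ.measurePreserving_homeomorphUnitSphereProd.lintegral_comp_emb
    (Homeomorph.measurableEmbedding _) fun z => f ((z.2 : ℝ) • (z.1 : E))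
  rw [lintegral_prod _ (by fun_prop)] at hpolar
  rw [← lintegral_subtype_comap (measurableSet_singleton (0 : E)).compl, ← hpolar]
  refine lintegral_congr fun x => ?_
  rw [← homeomorphUnitSphereProd_symm_apply_coe, Homeomorph.symm_apply_apply]

lemma volumeIoiPow_setOf_mul_lt_one (n : ℕ) {a : ℝ≥0} (ha : a ≠ 0) :
    Measure.volumeIoiPow n {r : Ioi (0 : ℝ) | (r : ℝ) * a < 1} =
      (a : ℝ≥0∞) ^ (-(n + 1 : ℝ)) * ENNReal.ofReal (n + 1)⁻¹ := by
  have ha' : (0 : ℝ) < a := NNReal.coe_pos.2 ha.bot_lt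
  have hset : {r : Ioi (0 : ℝ) | r * (a : ℝ) < 1} = Iio ⟨(a : ℝ)⁻¹, mem_Ioi.2 (inv_pos.2 ha')⟩ := by
    ext r
    change (r : ℝ) * a < 1 ↔ (r : ℝ) < (a : ℝ)⁻¹
    rw [← one_div, lt_div_iff₀ ha']
  rw [hset, Measure.volumeIoiPow_apply_Iio, ENNReal.rpow_neg, ← ENNReal.ofReal_coe_nnreal,
    ENNReal.ofReal_rpow_of_pos ha', ← ENNReal.ofReal_inv_of_pos (by positivity),
    ← ENNReal.ofReal_mul (by positivity), div_eq_mul_inv, inv_pow, ← Nat.cast_add_one,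
    Real.rpow_natCast]

lemma lintegral_starRegion {F : E → ℝ≥0∞} {w : E → ℝ≥0} {f : sphere (0 : E) 1 → ℝ≥0∞}
    (hF : Measurable F) (hw : Measurable w)
    (hFf : ∀ (r : ℝ≥0) (θ : sphere (0 : E) 1), r ≠ 0 → F (r • (θ : E)) = f θ)
    (hw_smul : ∀ (r : ℝ≥0) (x : E), w (r • x) = r * w x)
    (hw_ne : ∀ θ : sphere (0 : E) 1, w θ ≠ 0) {n : ℕ} (hn : finrank ℝ E = n + 1) :
    ∫⁻ x in {(0 : E)}ᶜ, {x | w x < 1}.indicator F x ∂μ =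
      (∫⁻ θ : sphere (0 : E) 1, (w θ : ℝ≥0∞) ^ (-(n + 1 : ℝ)) * f θ ∂μ.toSphere)
        * ENNReal.ofReal (n + 1)⁻¹ := by
  rw [lintegral_compl_zero_eq_lintegral_sphere μ
    (hF.indicator (measurableSet_lt hw measurable_const)), hn, Nat.add_sub_cancel,
    ← lintegral_mul_const' _ _ ENNReal.ofReal_ne_top]
  refine lintegral_congr fun θ => ?_
  have hray (r : Ioi (0 : ℝ)) : {x | w x < 1}.indicator F ((r : ℝ) • (θ : E)) =
      {r : Ioi (0 : ℝ) | (r : ℝ) * w θ < 1}.indicator (fun _ => f θ) r := by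
    obtain ⟨s, hs⟩ : ∃ s : ℝ≥0, (s : ℝ) = r := ⟨⟨r, r.2.le⟩, rfl⟩
    have hs_ne : s ≠ 0 := NNReal.coe_ne_zero.1 (hs ▸ (mem_Ioi.1 r.2).ne')
    have hmem : s • (θ : E) ∈ {x | w x < 1} ↔ r ∈ {r : Ioi (0 : ℝ) | (r : ℝ) * w θ < 1} := by
      rw [mem_ofPred_eq, mem_ofPred_eq, hw_smul, ← hs, ← NNReal.coe_mul, NNReal.coe_lt_one]
    rw [← hs, ← NNReal.smul_def]
    simp only [indicator_apply, hmem, hFf s θ hs_ne]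
  simp only [hray]
  rw [lintegral_indicator_const (measurableSet_lt (by fun_prop) measurable_const),
    volumeIoiPow_setOf_mul_lt_one n (hw_ne θ), ← mul_assoc, mul_comm (f θ)]

end ChangeOfVariables

section SphereChangeOfVariables

variable {E : Type*} [NormedAddCommGroup E] [InnerProductSpace ℝ E] [FiniteDimensional ℝ E]
  [MeasurableSpace E] [BorelSpace E] (μ : Measure E) [μ.IsAddHaarMeasure]

lemma lintegral_compl_zero_comp_coneBoost (y : E) (f : E → ℝ≥0∞) :
    ∫⁻ x in {(0 : E)}ᶜ, ENNReal.ofReal (‖coneBoost y x‖ / ‖x‖) * f (coneBoost y x) ∂μ =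
      ∫⁻ x in {(0 : E)}ᶜ, f x ∂μ := by
  have himage : coneBoost y '' {(0 : E)}ᶜ = {(0 : E)}ᶜ := by
    rw [image_compl_eq ⟨coneBoost_injective y, coneBoost_surjective y⟩, image_singleton,
      coneBoost_eq_zero_iff.2 rfl]
  have hcv := lintegral_image_eq_lintegral_abs_det_fderiv_mul μ
    (measurableSet_singleton (0 : E)).compl
    (fun x hx => (hasFDerivAt_coneBoost y hx).hasFDerivWithinAt) (coneBoost_injective y).injOn f
  rw [himage] at hcv
  rw [hcv]
  refine setLIntegral_congr_fun (measurableSet_singleton (0 : E)).compl fun x hx => ?_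
  simp only [det_fderiv_coneBoost y hx]
  rw [abs_of_nonneg (by positivity)]

theorem lintegral_comp_sphereBoost {n : ℕ} (hn : finrank ℝ E = n + 1) (y : E)
    {g : sphere (0 : E) 1 → ℝ≥0∞} (hg : Measurable g) :
    ∫⁻ θ, (conformalFactor y θ : ℝ≥0∞) ^ (-(n : ℝ)) * g (sphereBoost y θ) ∂μ.toSphere =
      ∫⁻ θ, g θ ∂μ.toSphere := by
  obtain ⟨G, hG, hGg⟩ := exists_measurable_radial_extension hg
  have hcone := (continuous_coneBoost y).measurable
  have hnnnorm (r : ℝ≥0) (x : E) : ‖r • x‖₊ = r * ‖x‖₊ := by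
    rw [NNReal.smul_def, nnnorm_smul, NNReal.nnnorm_eq]
  have hball := lintegral_starRegion μ hG measurable_nnnorm hGg hnnnorm
    (fun θ => nnnorm_ne_zero_iff.2 (ne_zero_of_mem_unit_sphere θ)) hn
  have hboost := lintegral_starRegion μ
    (F := fun x => ENNReal.ofReal (‖coneBoost y x‖ / ‖x‖) * G (coneBoost y x))
    (by fun_prop) hcone.nnnorm (fun r θ hr => radial_jacobian_coneBoost hGg y hr θ)
    (fun r x => by rw [coneBoost_smul, hnnnorm]) (conformalFactor_ne_zero y) hn
  have hregion (x : E) : {x | ‖coneBoost y x‖₊ < 1}.indicator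
      (fun x => ENNReal.ofReal (‖coneBoost y x‖ / ‖x‖) * G (coneBoost y x)) x =
      ENNReal.ofReal (‖coneBoost y x‖ / ‖x‖) * {x | ‖x‖₊ < 1}.indicator G (coneBoost y x) := by
    simp only [indicator_apply, mem_ofPred_eq, mul_ite, mul_zero]
  simp only [hregion] at hboost
  rw [lintegral_compl_zero_comp_coneBoost, hball] at hboost
  have hcancel :=
    (ENNReal.mul_left_inj (by simpa using by positivity) ENNReal.ofReal_ne_top).1 hboost
  refine .trans (lintegral_congr fun θ => ?_) (hcancel.symm.trans (lintegral_congr fun θ => ?_))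
  · have hpow : (conformalFactor y θ : ℝ≥0∞) ^ (-(n : ℝ)) =
        (conformalFactor y θ : ℝ≥0∞) ^ (-(n + 1 : ℝ)) * conformalFactor y θ := by
      nth_rw 3 [← ENNReal.rpow_one (conformalFactor y θ : ℝ≥0∞)]
      rw [← ENNReal.rpow_add _ _ (ENNReal.coe_ne_zero.2 (conformalFactor_ne_zero y θ))
        ENNReal.coe_ne_top, neg_add, neg_add_cancel_right]
    rw [hpow, mul_assoc]
    rfl
  · have hunit : ‖(θ : E)‖₊ = 1 := NNReal.eq (norm_eq_of_mem_sphere θ)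
    rw [hunit, ENNReal.coe_one, ENNReal.one_rpow, one_mul]

end SphereChangeOfVariables

section ConformalTransform

variable {E : Type*} [NormedAddCommGroup E] [InnerProductSpace ℝ E]

/-- The kernel `nndist ξ η ^ l` of the Riesz potential, as a continuous family of continuous
functions. -/
noncomputable def rieszKernel (X : Type*) [PseudoMetricSpace X] {l : ℝ} (hl : 0 ≤ l) :
    C(X, C(X, ℝ≥0)) :=
  ContinuousMap.curry ⟨fun z => nndist z.1 z.2 ^ l,
    (NNReal.continuous_rpow_const hl).comp continuous_nndist⟩

lemma rieszKernel_apply {X : Type*} [PseudoMetricSpace X] {l : ℝ} (hl : 0 ≤ l) (ξ η : X) :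
    rieszKernel X hl ξ η = nndist ξ η ^ l := rfl

lemma rieszKernel_comm {X : Type*} [PseudoMetricSpace X] {l : ℝ} (hl : 0 ≤ l) (ξ η : X) :
    rieszKernel X hl ξ η = rieszKernel X hl η ξ := by
  rw [rieszKernel_apply, rieszKernel_apply, nndist_comm]

lemma rieszKernel_ne_zero {X : Type*} [MetricSpace X] {l : ℝ} (hl : 0 ≤ l) {ξ η : X} (h : ξ ≠ η) :
    rieszKernel X hl ξ η ≠ 0 :=
  (NNReal.rpow_pos (pos_iff_ne_zero.2 (nndist_eq_zero.not.2 h))).ne'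

/-- The Minkowski pairing of the light-like vector `(1, ξ)` with the point of the hyperboloid above
`z`; its powers are the horospherical waves on hyperbolic space. -/
noncomputable def horosphericalFactor (z : E) (ξ : sphere (0 : E) 1) : ℝ≥0 :=
  (minkowskiForm (1, (ξ : E)) (hyperboloidLift z)).toNNReal

lemma minkowskiForm_one_hyperboloidLift (z : E) (ξ : sphere (0 : E) 1) :
    minkowskiForm (1, (ξ : E)) (hyperboloidLift z) = lorentzFactor z - inner ℝ (ξ : E) z := by
  simp only [minkowskiForm, hyperboloidLift, one_mul]

lemma minkowskiForm_one_hyperboloidLift_pos (z : E) (ξ : sphere (0 : E) 1) :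
    0 < minkowskiForm (1, (ξ : E)) (hyperboloidLift z) := by
  have hinner := real_inner_le_norm (ξ : E) z
  rw [norm_eq_of_mem_sphere, one_mul] at hinner
  rw [minkowskiForm_one_hyperboloidLift]
  linarith [norm_lt_lorentzFactor z]

lemma coe_horosphericalFactor (z : E) (ξ : sphere (0 : E) 1) :
    (horosphericalFactor z ξ : ℝ) = minkowskiForm (1, (ξ : E)) (hyperboloidLift z) :=
  Real.coe_toNNReal _ (minkowskiForm_one_hyperboloidLift_pos z ξ).le

lemma horosphericalFactor_ne_zero (z : E) (ξ : sphere (0 : E) 1) : horosphericalFactor z ξ ≠ 0 :=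
  (Real.toNNReal_pos.2 (minkowskiForm_one_hyperboloidLift_pos z ξ)).ne'

lemma horosphericalFactor_zero (ξ : sphere (0 : E) 1) : horosphericalFactor 0 ξ = 1 := by
  simp [horosphericalFactor, minkowskiForm, hyperboloidLift, lorentzFactor]

lemma continuous_horosphericalFactor (z : E) : Continuous (horosphericalFactor z) := by
  unfold horosphericalFactor minkowskiForm
  fun_prop

lemma dist_sq_eq_two_mul_minkowskiForm (ξ η : sphere (0 : E) 1) :
    dist ξ η ^ 2 = 2 * minkowskiForm (1, (ξ : E)) (1, (η : E)) := by
  rw [Subtype.dist_eq, dist_eq_norm, norm_sub_sq_real, norm_eq_of_mem_sphere,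
    norm_eq_of_mem_sphere, minkowskiForm]
  ring

lemma minkowskiForm_smul_left (r : ℝ) (v w : ℝ × E) :
    minkowskiForm (r • v) w = r * minkowskiForm v w := by
  simp only [minkowskiForm, Prod.smul_fst, Prod.smul_snd, smul_eq_mul, real_inner_smul_left]
  ring

lemma minkowskiForm_smul_right (r : ℝ) (v w : ℝ × E) :
    minkowskiForm v (r • w) = r * minkowskiForm v w := by
  simp only [minkowskiForm, Prod.smul_fst, Prod.smul_snd, smul_eq_mul, real_inner_smul_right]
  ring

lemma dist_sq_sphereBoost (y : E) (ξ η : sphere (0 : E) 1) :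
    dist ξ η ^ 2 =
      conformalFactor y ξ * conformalFactor y η * dist (sphereBoost y ξ) (sphereBoost y η) ^ 2 := by
  simp only [dist_sq_eq_two_mul_minkowskiForm]
  rw [← minkowskiForm_lorentzBoost y, lorentzBoost_one_coe_sphere, lorentzBoost_one_coe_sphere,
    minkowskiForm_smul_left, minkowskiForm_smul_right]
  ring

lemma horosphericalFactor_sphereBoost (y z : E) (ξ : sphere (0 : E) 1) :
    horosphericalFactor z ξ =
      conformalFactor y ξ * horosphericalFactor (hyperboloidBoost y z) (sphereBoost y ξ) := by
  refine NNReal.eq ?_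
  rw [NNReal.coe_mul, coe_horosphericalFactor, coe_horosphericalFactor,
    ← minkowskiForm_lorentzBoost y, lorentzBoost_one_coe_sphere, lorentzBoost_hyperboloidLift,
    minkowskiForm_smul_left]

lemma rieszKernel_sphereBoost {l : ℝ} (hl : 0 ≤ l) (y : E) (ξ η : sphere (0 : E) 1) :
    rieszKernel _ hl ξ η = conformalFactor y ξ ^ (l / 2) * (conformalFactor y η ^ (l / 2) *
      rieszKernel _ hl (sphereBoost y ξ) (sphereBoost y η)) := by
  have hpow (a : ℝ≥0) : a ^ l = (a ^ 2) ^ (l / 2) := by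
    rw [← NNReal.rpow_natCast_mul, Nat.cast_ofNat, mul_div_cancel₀ _ two_ne_zero]
  have hsq : nndist ξ η ^ 2 = conformalFactor y ξ * (conformalFactor y η *
      nndist (sphereBoost y ξ) (sphereBoost y η) ^ 2) :=
    NNReal.eq (by push_cast; rw [dist_sq_sphereBoost y, mul_assoc])
  simp only [rieszKernel_apply, hpow, hsq, NNReal.mul_rpow]

/-- The action of `sphereBoost y` on densities of conformal weight `s`. -/
noncomputable def conformalTransform (y : E) (s : ℝ) (f : sphere (0 : E) 1 → ℝ≥0∞)
    (ξ : sphere (0 : E) 1) : ℝ≥0∞ :=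
  (conformalFactor y ξ : ℝ≥0∞) ^ (-s) * f (sphereBoost y ξ)

lemma conformalTransform_rpow (y : E) (s p : ℝ) (f : sphere (0 : E) 1 → ℝ≥0∞)
    (ξ : sphere (0 : E) 1) :
    conformalTransform y s f ξ ^ p = conformalTransform y (s * p) (fun η => f η ^ p) ξ := by
  have hw : (conformalFactor y ξ : ℝ≥0∞) ≠ 0 := ENNReal.coe_ne_zero.2 (conformalFactor_ne_zero y ξ)
  rw [conformalTransform, conformalTransform, mul_rpow_of_ne (rpow_ne_zero_of_ne hw coe_ne_top _)
    (ENNReal.rpow_ne_top_of_ne_zero hw coe_ne_top), ← ENNReal.rpow_mul, neg_mul]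

lemma conformalTransform_add_mul (y : E) (s t : ℝ) (f g : sphere (0 : E) 1 → ℝ≥0∞)
    (ξ : sphere (0 : E) 1) :
    conformalTransform y (s + t) (fun η => f η * g η) ξ =
      conformalTransform y s f ξ * conformalTransform y t g ξ := by
  simp only [conformalTransform]
  rw [neg_add, ENNReal.rpow_add _ _ (ENNReal.coe_ne_zero.2 (conformalFactor_ne_zero y ξ))
    coe_ne_top]
  ring

variable [MeasurableSpace E] {f g : sphere (0 : E) 1 → ℝ≥0∞} {n : ℕ} {l p s t : ℝ}

/-- The superposition of the horospherical waves of exponent `t` with density `f`, a function on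
hyperbolic space. -/
noncomputable def hyperbolicExtension (μ : Measure E) (t : ℝ) (f : sphere (0 : E) 1 → ℝ≥0∞)
    (z : E) : ℝ≥0∞ :=
  ∫⁻ ξ, (horosphericalFactor z ξ : ℝ≥0∞) ^ t * f ξ ∂μ.toSphere

lemma hyperbolicExtension_zero (μ : Measure E) (t : ℝ) (f : sphere (0 : E) 1 → ℝ≥0∞) :
    hyperbolicExtension μ t f 0 = ∫⁻ ξ, f ξ ∂μ.toSphere := by
  simp only [hyperbolicExtension, horosphericalFactor_zero, ENNReal.coe_one, ENNReal.one_rpow,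
    one_mul]

variable [BorelSpace E]

lemma measurable_horosphericalFactor_rpow (z : E) (t : ℝ) :
    Measurable fun ξ : sphere (0 : E) 1 => (horosphericalFactor z ξ : ℝ≥0∞) ^ t :=
  (continuous_horosphericalFactor z).measurable.coe_nnreal_ennreal.pow_const t

lemma measurable_conformalTransform (hf : Measurable f) (y : E) (s : ℝ) :
    Measurable (conformalTransform y s f) :=
  ((continuous_conformalFactor y).measurable.coe_nnreal_ennreal.pow_const _).mul
    (hf.comp (continuous_sphereBoost y).measurable)

variable [FiniteDimensional ℝ E] (μ : Measure E) [μ.IsAddHaarMeasure]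

lemma lintegral_conformalTransform (hn : finrank ℝ E = n + 1) (hf : Measurable f) (y : E) :
    ∫⁻ ξ, conformalTransform y n f ξ ∂μ.toSphere = ∫⁻ ξ, f ξ ∂μ.toSphere :=
  lintegral_comp_sphereBoost μ hn y hf

lemma lintegral_conformalTransform_mul (hn : finrank ℝ E = n + 1) (hst : s + t = n)
    (hf : Measurable f) (hg : Measurable g) (y : E) :
    ∫⁻ ξ, conformalTransform y s f ξ * conformalTransform y t g ξ ∂μ.toSphere =
      ∫⁻ ξ, f ξ * g ξ ∂μ.toSphere := by
  simp only [← conformalTransform_add_mul, hst]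
  exact lintegral_conformalTransform μ hn (hf.mul hg) y

lemma eLpNorm'_conformalTransform (hn : finrank ℝ E = n + 1) (hsp : s * p = n) (hf : Measurable f)
    (y : E) : eLpNorm' (conformalTransform y s f) p μ.toSphere = eLpNorm' f p μ.toSphere := by
  simp only [eLpNorm'_eq_lintegral_enorm, enorm_eq_self, conformalTransform_rpow, hsp]
  rw [lintegral_conformalTransform μ hn (hf.pow_const p)]

lemma kernelOperator_conformalTransform (hn : finrank ℝ E = n + 1) (hl : 0 ≤ l)
    (hf : Measurable f) (y : E) :
    kernelOperator μ.toSphere (rieszKernel _ hl) (conformalTransform y (n + l / 2) f) =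
      conformalTransform y (-(l / 2)) (kernelOperator μ.toSphere (rieszKernel _ hl) f) := by
  funext ξ
  have hkernel (η : sphere (0 : E) 1) : (rieszKernel _ hl ξ η : ℝ≥0∞) =
      (conformalFactor y ξ : ℝ≥0∞) ^ (l / 2) *
        conformalTransform y (-(l / 2)) (fun η => rieszKernel _ hl (sphereBoost y ξ) η) η := by
    rw [rieszKernel_sphereBoost hl y, conformalTransform, neg_neg,
      ← ENNReal.coe_rpow_of_ne_zero (conformalFactor_ne_zero y ξ),
      ← ENNReal.coe_rpow_of_ne_zero (conformalFactor_ne_zero y η), ← ENNReal.coe_mul,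
      ← ENNReal.coe_mul]
  have hinvariant := lintegral_conformalTransform_mul μ hn (neg_add_cancel_comm_assoc (l / 2) n)
    (measurable_kernel (k := rieszKernel _ hl) (sphereBoost y ξ)) hf y
  simp only [kernelOperator, hkernel, mul_assoc]
  rw [lintegral_const_mul' _ _ (ENNReal.rpow_ne_top_of_ne_zero
    (ENNReal.coe_ne_zero.2 (conformalFactor_ne_zero y ξ)) coe_ne_top), hinvariant,
    conformalTransform, neg_neg]
  rfl

lemma hyperbolicExtension_conformalTransform (hn : finrank ℝ E = n + 1) (hf : Measurable f)
    (y z : E) :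
    hyperbolicExtension μ t (conformalTransform y (n + t) f) z =
      hyperbolicExtension μ t f (hyperboloidBoost y z) := by
  have hwave (ξ : sphere (0 : E) 1) : (horosphericalFactor z ξ : ℝ≥0∞) ^ t =
      conformalTransform y (-t)
        (fun ξ => (horosphericalFactor (hyperboloidBoost y z) ξ : ℝ≥0∞) ^ t) ξ := by
    rw [conformalTransform, neg_neg, horosphericalFactor_sphereBoost y, ENNReal.coe_mul,
      mul_rpow_of_ne (ENNReal.coe_ne_zero.2 (conformalFactor_ne_zero y ξ)) coe_ne_top]
  simp only [hyperbolicExtension, hwave]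
  exact lintegral_conformalTransform_mul μ hn (neg_add_cancel_comm_assoc t n)
    (measurable_horosphericalFactor_rpow _ t) hf y

lemma lintegral_conformalTransform_eq_hyperbolicExtension (hn : finrank ℝ E = n + 1)
    (hf : Measurable f) (y : E) :
    ∫⁻ ξ, conformalTransform y (n + t) f ξ ∂μ.toSphere = hyperbolicExtension μ t f y := by
  rw [← hyperbolicExtension_zero μ t, hyperbolicExtension_conformalTransform μ hn hf,
    hyperboloidBoost_zero]

end ConformalTransform

section Balancing

lemma exists_mul_le_forall_of_iInf {ι : Sort*} {h : ι → ℝ≥0∞} (h0 : ⨅ i, h i ≠ 0)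
    (htop : ⨅ i, h i ≠ ⊤) {a : ℝ≥0∞} (ha : a < 1) : ∃ i, h i ≠ ⊤ ∧ ∀ j, a * h i ≤ h j := by
  have hlt : ⨅ i, h i < a⁻¹ * ⨅ i, h i := by
    have hainv : 1 < a⁻¹ := ENNReal.one_lt_inv.2 ha
    simpa using ENNReal.mul_lt_mul_left h0 htop hainv
  obtain ⟨i, hi⟩ := iInf_lt_iff.1 (lt_min hlt htop.lt_top)
  refine ⟨i, (hi.trans_le (min_le_right _ _)).ne, fun j => ?_⟩
  calc a * h i ≤ a * (a⁻¹ * ⨅ i, h i) := by gcongr; exact hi.le.trans (min_le_left _ _)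
    _ = a * a⁻¹ * ⨅ i, h i := (mul_assoc _ _ _).symm
    _ ≤ 1 * ⨅ i, h i := by gcongr; exact ENNReal.mul_inv_le_one a
    _ ≤ h j := by rw [one_mul]; exact iInf_le h j

variable {E : Type*} [NormedAddCommGroup E] [InnerProductSpace ℝ E]

lemma coe_horosphericalFactor_smul (r : ℝ) (e ξ : sphere (0 : E) 1) :
    (horosphericalFactor (r • (e : E)) ξ : ℝ) = √(1 + r ^ 2) - r + r * (dist e ξ ^ 2 / 2) := by
  rw [coe_horosphericalFactor, minkowskiForm_one_hyperboloidLift, lorentzFactor, norm_smul,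
    norm_eq_of_mem_sphere, mul_one, Real.norm_eq_abs, sq_abs, real_inner_smul_right,
    dist_sq_eq_two_mul_minkowskiForm, minkowskiForm, real_inner_comm]
  ring

lemma half_rpow_mul_rieszKernel_le {l : ℝ} (hl : 0 ≤ l) {r : ℝ} (hr : 0 ≤ r)
    (e ξ : sphere (0 : E) 1) :
    2⁻¹ ^ l * rieszKernel _ hl e ξ ≤ horosphericalFactor (r • (e : E)) ξ ^ (l / 2) := by
  have hdist : dist e ξ ≤ 2 := by
    simpa [Subtype.dist_eq, dist_eq_norm, one_add_one_eq_two] using norm_sub_le (e : E) ξ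
  have hsqrt : r ≤ √(1 + r ^ 2) := Real.le_sqrt_of_sq_le (by linarith)
  have hone : 1 ≤ √(1 + r ^ 2) := Real.one_le_sqrt.2 (by nlinarith)
  have hsq : (2⁻¹ * nndist e ξ) ^ 2 ≤ horosphericalFactor (r • (e : E)) ξ := by
    rw [← NNReal.coe_le_coe, coe_horosphericalFactor_smul]
    push_cast
    have hD : dist e ξ ^ 2 ≤ 4 := by nlinarith [dist_nonneg (x := e) (y := ξ)]
    nlinarith [mul_nonneg (sub_nonneg.2 hsqrt) (sub_nonneg.2 hD), sq_nonneg (dist e ξ)]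
  calc 2⁻¹ ^ l * rieszKernel _ hl e ξ = ((2⁻¹ * nndist e ξ) ^ 2) ^ (l / 2) := by
        rw [rieszKernel_apply, ← NNReal.mul_rpow, ← NNReal.rpow_natCast_mul, Nat.cast_ofNat,
          mul_div_cancel₀ _ two_ne_zero]
    _ ≤ horosphericalFactor (r • (e : E)) ξ ^ (l / 2) := NNReal.rpow_le_rpow hsq (by positivity)

lemma horosphericalFactor_three_fourths_rpow_le {l : ℝ} (hl : 0 ≤ l) (e ξ : sphere (0 : E) 1) :
    horosphericalFactor ((3 / 4 : ℝ) • (e : E)) ξ ^ (l / 2) ≤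
      (7 / 8) ^ (l / 2) * (1 + rieszKernel _ hl e ξ) := by
  have hle : horosphericalFactor ((3 / 4 : ℝ) • (e : E)) ξ ≤ 7 / 8 * max 1 (nndist e ξ ^ 2) := by
    have hsqrt : √(1 + (3 / 4) ^ 2 : ℝ) = 5 / 4 := by
      rw [Real.sqrt_eq_iff_mul_self_eq_of_pos] <;> norm_num
    rw [← NNReal.coe_le_coe, coe_horosphericalFactor_smul, hsqrt]
    push_cast
    linarith [le_max_left 1 (dist e ξ ^ 2), le_max_right 1 (dist e ξ ^ 2)]
  have hl2 : 0 ≤ l / 2 := by positivity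
  calc horosphericalFactor ((3 / 4 : ℝ) • (e : E)) ξ ^ (l / 2)
      ≤ (7 / 8 * max 1 (nndist e ξ ^ 2)) ^ (l / 2) := NNReal.rpow_le_rpow hle hl2
    _ = (7 / 8) ^ (l / 2) * max 1 (rieszKernel _ hl e ξ) := by
        rw [NNReal.mul_rpow, (NNReal.monotone_rpow_of_nonneg hl2).map_max, NNReal.one_rpow,
          ← NNReal.rpow_natCast_mul, Nat.cast_ofNat, mul_div_cancel₀ _ two_ne_zero,
          rieszKernel_apply]
    _ ≤ (7 / 8) ^ (l / 2) * (1 + rieszKernel _ hl e ξ) := by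
        gcongr
        exact max_le le_self_add le_add_self

variable [MeasurableSpace E] (μ : Measure E) {f : sphere (0 : E) 1 → ℝ≥0∞} {n : ℕ} {l p q : ℝ}

lemma hyperbolicExtension_three_fourths_le (hl : 0 ≤ l) (hf : Measurable f)
    (e : sphere (0 : E) 1) :
    hyperbolicExtension μ (l / 2) f ((3 / 4 : ℝ) • (e : E)) ≤
      (((7 / 8) ^ (l / 2) : ℝ≥0) : ℝ≥0∞) * (∫⁻ ξ, f ξ ∂μ.toSphere +
        kernelOperator μ.toSphere (rieszKernel _ hl) f e) := by
  rw [kernelOperator, ← lintegral_add_left hf, ← lintegral_const_mul' _ _ coe_ne_top]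
  refine lintegral_mono fun ξ => ?_
  rw [← one_add_mul, ← mul_assoc, ← ENNReal.coe_rpow_of_ne_zero (horosphericalFactor_ne_zero _ _),
    ← ENNReal.coe_one, ← ENNReal.coe_add, ← ENNReal.coe_mul]
  gcongr
  exact horosphericalFactor_three_fourths_rpow_le hl e ξ

variable [BorelSpace E]

lemma half_rpow_mul_kernelOperator_le_hyperbolicExtension (hl : 0 ≤ l) (hf : Measurable f)
    {r : ℝ} (hr : 0 ≤ r) (e : sphere (0 : E) 1) :
    ((2⁻¹ ^ l : ℝ≥0) : ℝ≥0∞) * kernelOperator μ.toSphere (rieszKernel _ hl) f e ≤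
      hyperbolicExtension μ (l / 2) f (r • (e : E)) := by
  rw [← kernelOperator_const_mul hf]
  refine lintegral_mono fun ξ => ?_
  rw [← mul_assoc, mul_comm (rieszKernel _ hl e ξ : ℝ≥0∞),
    ← ENNReal.coe_rpow_of_ne_zero (horosphericalFactor_ne_zero _ _)]
  gcongr
  exact ENNReal.coe_le_coe.2 (half_rpow_mul_rieszKernel_le hl hr e ξ)

variable [FiniteDimensional ℝ E]

lemma iInf_hyperbolicExtension_ne_zero [Nontrivial E] [NullSingletonClass μ.toSphere] (hl : 0 ≤ l)
    (hf : Measurable f) (hf0 : ∫⁻ ξ, f ξ ∂μ.toSphere ≠ 0) (hft : ∫⁻ ξ, f ξ ∂μ.toSphere ≠ ⊤) :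
    ⨅ z, hyperbolicExtension μ (l / 2) f z ≠ 0 := by
  obtain ⟨c, hc, hcle⟩ :=
    exists_le_kernelOperator (fun _ _ => rieszKernel_ne_zero hl) hf hf0 hft
  have hpolar (z : E) : ∃ e : sphere (0 : E) 1, ‖z‖ • (e : E) = z := by
    rcases eq_or_ne z 0 with rfl | hz
    · obtain ⟨e, he⟩ := NormedSpace.sphere_nonempty (x := (0 : E)).2 zero_le_one
      exact ⟨⟨e, he⟩, by simp⟩
    · exact ⟨⟨‖z‖⁻¹ • z, by simp [norm_smul, hz]⟩, by simp [hz]⟩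
  have hbound : ((2⁻¹ ^ l : ℝ≥0) : ℝ≥0∞) * c ≤ ⨅ z, hyperbolicExtension μ (l / 2) f z := by
    refine le_iInf fun z => ?_
    obtain ⟨e, he⟩ := hpolar z
    calc ((2⁻¹ ^ l : ℝ≥0) : ℝ≥0∞) * c
        ≤ (2⁻¹ ^ l : ℝ≥0) * kernelOperator μ.toSphere (rieszKernel _ hl) f e := by
          gcongr; exact hcle e
      _ ≤ hyperbolicExtension μ (l / 2) f (‖z‖ • (e : E)) :=
          half_rpow_mul_kernelOperator_le_hyperbolicExtension μ hl hf (norm_nonneg z) e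
      _ = hyperbolicExtension μ (l / 2) f z := by rw [he]
  exact (pos_iff_ne_zero.2 (mul_ne_zero
    (ENNReal.coe_ne_zero.2 (NNReal.rpow_pos (by positivity)).ne') hc)).trans_le hbound |>.ne'

variable [μ.IsAddHaarMeasure]

lemma nullSingletonClass_toSphere (hE : 1 < finrank ℝ E) : NullSingletonClass μ.toSphere where
  measure_singleton ξ := by
    have hline : μ (Submodule.span ℝ {(ξ : E)}) = 0 := by
      refine Measure.addHaar_submodule _ _ fun h => hE.ne' ?_
      rw [← finrank_top ℝ E, ← h, finrank_span_singleton (ne_zero_of_mem_unit_sphere ξ)]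
    rw [Measure.toSphere_apply' _ (measurableSet_singleton ξ), measure_mono_null _ hline, mul_zero]
    rintro _ ⟨r, -, _, ⟨_, rfl, rfl⟩, rfl⟩
    exact Submodule.smul_mem _ r (Submodule.mem_span_singleton_self _)

-- Balancing at a near-minimum `y` of the extension of `f`: moving from `y` by the hyperbolic
-- distance `log 2` towards `e` would lower the extension by a fixed factor if the potential of the
-- transformed density were small at `e`.
lemma exists_conformalTransform_balanced [NullSingletonClass μ.toSphere]
    (hn : finrank ℝ E = n + 1) (hl : 0 < l) :
    ∃ κ : ℝ≥0, κ ≠ 0 ∧ ∀ f : sphere (0 : E) 1 → ℝ≥0∞, Measurable f →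
      ∫⁻ ξ, f ξ ∂μ.toSphere ≠ 0 → ∫⁻ ξ, f ξ ∂μ.toSphere ≠ ⊤ →
      ∃ y, ∫⁻ ξ, conformalTransform y (n + l / 2) f ξ ∂μ.toSphere ≠ 0 ∧
        ∫⁻ ξ, conformalTransform y (n + l / 2) f ξ ∂μ.toSphere ≠ ⊤ ∧
        ∀ e, κ * ∫⁻ ξ, conformalTransform y (n + l / 2) f ξ ∂μ.toSphere ≤
          kernelOperator μ.toSphere (rieszKernel _ hl.le)
            (conformalTransform y (n + l / 2) f) e := by
  have : Nontrivial E := nontrivial_of_finrank_pos (R := ℝ) (by lia)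
  set b : ℝ≥0 := (7 / 8) ^ (l / 2)
  have hb : b < 1 :=
    NNReal.rpow_lt_one (div_lt_one (by norm_num) |>.2 (by norm_num)) (by positivity)
  obtain ⟨a, hba, ha⟩ := exists_between hb
  refine ⟨a - b, (tsub_pos_of_lt hba).ne', fun f hf hf0 hft => ?_⟩
  have hinf0 := iInf_hyperbolicExtension_ne_zero μ hl.le hf hf0 hft
  have hinftop : ⨅ z, hyperbolicExtension μ (l / 2) f z ≠ ⊤ :=
    ne_top_of_le_ne_top (hyperbolicExtension_zero μ (l / 2) f ▸ hft) (iInf_le _ 0)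
  obtain ⟨y, hytop, hy⟩ := exists_mul_le_forall_of_iInf hinf0 hinftop (ENNReal.coe_lt_one_iff.2 ha)
  have hfy := measurable_conformalTransform hf y (n + l / 2)
  rw [← lintegral_conformalTransform_eq_hyperbolicExtension μ hn hf] at hytop hy
  refine ⟨y, ?_, hytop, fun e => ?_⟩
  · rw [lintegral_conformalTransform_eq_hyperbolicExtension μ hn hf]
    exact (pos_iff_ne_zero.2 hinf0).trans_le (iInf_le _ y) |>.ne'
  set M := ∫⁻ ξ, conformalTransform y (n + l / 2) f ξ ∂μ.toSphere
  set T := kernelOperator μ.toSphere (rieszKernel _ hl.le) (conformalTransform y (n + l / 2) f) e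
  have hstep : b * M + (a - b : ℝ≥0) * M ≤ b * M + b * T := by
    calc b * M + (a - b : ℝ≥0) * M = a * M := by
          rw [← add_mul, ← ENNReal.coe_add, add_tsub_cancel_of_le hba.le]
      _ ≤ hyperbolicExtension μ (l / 2) f (hyperboloidBoost y ((3 / 4 : ℝ) • (e : E))) := hy _
      _ = hyperbolicExtension μ (l / 2) (conformalTransform y (n + l / 2) f)
            ((3 / 4 : ℝ) • (e : E)) :=
          (hyperbolicExtension_conformalTransform μ hn hf y _).symm
      _ ≤ b * (M + T) := hyperbolicExtension_three_fourths_le μ hl.le hfy e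
      _ = b * M + b * T := mul_add _ _ _
  calc (a - b : ℝ≥0) * M ≤ b * T :=
        (ENNReal.add_le_add_iff_left (ENNReal.mul_ne_top coe_ne_top hytop)).1 hstep
    _ ≤ T := mul_le_of_le_one_left' (ENNReal.coe_le_one_iff.2 hb.le)

lemma rayleighQuotient_conformalTransform (hn : finrank ℝ E = n + 1) (hl : 0 ≤ l)
    (hp : (n + l / 2) * p = n) (hq : -(l / 2) * q = n) (hf : Measurable f) (y : E) :
    rayleighQuotient μ.toSphere (rieszKernel _ hl) p q (conformalTransform y (n + l / 2) f) =
      rayleighQuotient μ.toSphere (rieszKernel _ hl) p q f := by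
  rw [rayleighQuotient, kernelOperator_conformalTransform μ hn hl hf,
    eLpNorm'_conformalTransform μ hn hq (measurable_kernelOperator hf),
    eLpNorm'_conformalTransform μ hn hp hf, rayleighQuotient]

theorem exists_isBalanceable_rieszKernel (hn : finrank ℝ E = n + 1) (hn0 : n ≠ 0) (hl : 0 < l)
    (hp0 : p ≠ 0) (hq0 : q ≠ 0) (hp : (n + l / 2) * p = n) (hq : -(l / 2) * q = n) :
    ∃ κ ≠ 0, IsBalanceable μ.toSphere (rieszKernel (sphere (0 : E) 1) hl.le) p q κ := by
  have := nullSingletonClass_toSphere μ (E := E) (by lia)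
  obtain ⟨κ, hκ, hbal⟩ := exists_conformalTransform_balanced μ hn hl
  refine ⟨κ, hκ, fun f hf hf0 hft => ?_⟩
  obtain ⟨y, hy0, hytop, hy⟩ := hbal f hf hf0 hft
  have hfy := measurable_conformalTransform hf y (n + l / 2)
  set M := ∫⁻ ξ, conformalTransform y (n + l / 2) f ξ ∂μ.toSphere
  refine ⟨fun ξ => M⁻¹ * conformalTransform y (n + l / 2) f ξ, hfy.const_mul _, ?_, fun ξ => ?_, ?_⟩
  · rw [lintegral_const_mul _ hfy, ENNReal.inv_mul_cancel hy0 hytop]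
  · rw [kernelOperator_const_mul hfy, mul_comm, ← div_eq_mul_inv,
      ENNReal.le_div_iff_mul_le (.inl hy0) (.inl hytop)]
    exact hy ξ
  · rw [rayleighQuotient_const_mul hp0 hq0 hfy (ENNReal.inv_ne_zero.2 hytop)
      (ENNReal.inv_ne_top.2 hy0), rayleighQuotient_conformalTransform μ hn hl.le hp hq hf]

theorem exists_minimizer_rieszKernel_sphere (hn : finrank ℝ E = n + 1) (hn0 : n ≠ 0) (hl : 0 < l)
    (hp : (n + l / 2) * p = n) (hq : -(l / 2) * q = n) :
    ∃ f₀ : sphere (0 : E) 1 → ℝ≥0, Measurable f₀ ∧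
      eLpNorm' (fun ξ => (f₀ ξ : ℝ≥0∞)) p μ.toSphere = 1 ∧
      eLpNorm' (kernelOperator μ.toSphere (rieszKernel _ hl.le) fun ξ => f₀ ξ) q μ.toSphere ≠ 0 ∧
      ∀ f : sphere (0 : E) 1 → ℝ≥0∞, Measurable f → eLpNorm' f p μ.toSphere = 1 →
        eLpNorm' (kernelOperator μ.toSphere (rieszKernel _ hl.le) fun ξ => f₀ ξ) q μ.toSphere ≤
          eLpNorm' (kernelOperator μ.toSphere (rieszKernel _ hl.le) f) q μ.toSphere := by
  have hp_eq : p = n / (n + l / 2) := by field_simp at hp ⊢; linarith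
  have hq_eq : q = -(n / (l / 2)) := by field_simp at hq ⊢; linarith
  have hp_pos : 0 < p := by rw [hp_eq]; positivity
  have hq_neg : q < 0 := by rw [hq_eq]; exact neg_lt_zero.2 (by positivity)
  have hpq : p⁻¹ + q⁻¹ = 1 := by rw [hp_eq, hq_eq]; field_simp; ring
  have : Nontrivial E := nontrivial_of_finrank_pos (R := ℝ) (by lia)
  have := nullSingletonClass_toSphere μ (E := E) (by lia)
  obtain ⟨κ, hκ, hbal⟩ :=
    exists_isBalanceable_rieszKernel μ hn hn0 hl hp_pos.ne' hq_neg.ne hp hq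
  exact hbal.exists_minimizer μ.toSphere_ne_zero (fun _ _ => rieszKernel_ne_zero hl.le)
    (rieszKernel_comm hl.le) hp_pos hq_neg hpq hκ

end Balancing

section SphereRiesz

variable {n : ℕ} {α p : ℝ}

lemma sphereRiesz_eq_kernelOperator (hα : 0 ≤ α - n)
    (F : sphere (0 : EuclideanSpace ℝ (Fin (n + 1))) 1 → ℝ) :
    sphereRiesz n α F =
      kernelOperator (sphereMeasure n) (rieszKernel _ hα) fun η => ENNReal.ofReal (F η) := by
  funext ξ
  refine lintegral_congr fun η => ?_
  rw [mul_comm, ENNReal.ofReal_mul (by positivity), rieszKernel_apply,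
    ENNReal.coe_rpow_of_nonneg _ hα, ← edist_nndist, edist_dist,
    ENNReal.ofReal_rpow_of_nonneg dist_nonneg hα, Subtype.dist_eq]

lemma integrable_rpow_and_integral_rpow_eq_one_iff {X : Type*} [MeasurableSpace X] {ν : Measure X}
    (hp : 0 < p) {F : X → ℝ} (hm : Measurable F) (hF : ∀ ξ, 0 ≤ F ξ) :
    (Integrable (fun ξ => |F ξ| ^ p) ν ∧ (∫ ξ, |F ξ| ^ p ∂ν) ^ (1 / p) = 1) ↔
      eLpNorm' (fun ξ => ENNReal.ofReal (F ξ)) p ν = 1 := by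
  have hnonneg (ξ : X) : 0 ≤ |F ξ| ^ p := by positivity
  have hmeas : Measurable fun ξ => |F ξ| ^ p := hm.abs.pow_const p
  have hofReal (ξ : X) : ENNReal.ofReal (|F ξ| ^ p) = ENNReal.ofReal (F ξ) ^ p := by
    rw [abs_of_nonneg (hF ξ), ENNReal.ofReal_rpow_of_nonneg (hF ξ) hp.le]
  have hinv : 1 / p ≠ 0 := (one_div_pos.2 hp).ne'
  have hnorm : eLpNorm' (fun ξ => ENNReal.ofReal (F ξ)) p ν = 1 ↔
      ∫⁻ ξ, ENNReal.ofReal (|F ξ| ^ p) ∂ν = 1 := by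
    simp only [eLpNorm'_eq_lintegral_enorm, enorm_eq_self, ← hofReal]
    rw [← ENNReal.one_rpow (1 / p), (ENNReal.rpow_left_injective hinv).eq_iff, ENNReal.one_rpow]
  have hreal : (∫ ξ, |F ξ| ^ p ∂ν) ^ (1 / p) = 1 ↔ ∫⁻ ξ, ENNReal.ofReal (|F ξ| ^ p) ∂ν = 1 := by
    rw [integral_eq_lintegral_of_nonneg_ae (.of_forall hnonneg) hmeas.aestronglyMeasurable,
      ← ENNReal.toReal_eq_one_iff, ← Real.rpow_left_inj ENNReal.toReal_nonneg zero_le_one hinv,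
      Real.one_rpow]
  rw [hreal, hnorm]
  refine ⟨And.right, fun h => ⟨⟨hmeas.aestronglyMeasurable, ?_⟩, h⟩⟩
  rw [hasFiniteIntegral_iff_ofReal (.of_forall hnonneg), h]
  exact ENNReal.one_lt_top

lemma mem_minimizingValues_iff (hα : 0 ≤ α - n) (hp : 0 < p) {q : ℝ} {r : ℝ≥0∞} :
    r ∈ minimizingValues n α p q ↔
      ∃ f : sphere (0 : EuclideanSpace ℝ (Fin (n + 1))) 1 → ℝ≥0, Measurable f ∧
        eLpNorm' (fun ξ => (f ξ : ℝ≥0∞)) p (sphereMeasure n) = 1 ∧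
        r = eLpNorm' (kernelOperator (sphereMeasure n) (rieszKernel _ hα) fun ξ => f ξ) q
          (sphereMeasure n) := by
  constructor
  · rintro ⟨F, hm, hF, hint, hnorm, rfl⟩
    refine ⟨fun ξ => (F ξ).toNNReal, hm.real_toNNReal,
      (integrable_rpow_and_integral_rpow_eq_one_iff hp hm hF).1 ⟨hint, hnorm⟩, ?_⟩
    rw [sphereRiesz_eq_kernelOperator hα]
    rfl
  · rintro ⟨f, hm, hnorm, rfl⟩
    have hF (ξ) : 0 ≤ (f ξ : ℝ) := NNReal.coe_nonneg _
    simp only [← ENNReal.ofReal_coe_nnreal] at hnorm ⊢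
    obtain ⟨hint, hnorm⟩ :=
      (integrable_rpow_and_integral_rpow_eq_one_iff hp hm.coe_nnreal_real hF).2 hnorm
    refine ⟨fun ξ => f ξ, hm.coe_nnreal_real, hF, hint, hnorm, ?_⟩
    rw [sphereRiesz_eq_kernelOperator hα]
    rfl

end SphereRiesz

/-- **Existence of extremal functions** (Section 3.1): for `1 ≤ n < α`, `p = 2n/(n+α)`,
`q = 2n/(n-α)`, the infimum `N*(n,α) = inf { ‖Ĩ_α F‖_{L^q(𝕊ⁿ)} : F ≥ 0, ‖F‖_{L^p(𝕊ⁿ)} = 1 }`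
is positive and attained by some nonnegative `F₀ ∈ L^p(𝕊ⁿ)` with `‖F₀‖_{L^p(𝕊ⁿ)} = 1`. -/
theorem reversed_HLS_sphere_infimum_attained (n : ℕ) (hn : 1 ≤ n) (α p q : ℝ)
    (hα : (n : ℝ) < α)
    (hp : p = 2 * n / ((n : ℝ) + α)) (hq : q = 2 * n / ((n : ℝ) - α)) :
    0 < sInf (minimizingValues n α p q) ∧
    ∃ F₀ : sphere (0 : EuclideanSpace ℝ (Fin (n + 1))) 1 → ℝ,
      Measurable F₀ ∧ (∀ ξ, 0 ≤ F₀ ξ) ∧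
      Integrable (fun ξ => |F₀ ξ| ^ p) (sphereMeasure n) ∧
      (∫ ξ, |F₀ ξ| ^ p ∂(sphereMeasure n)) ^ (1 / p) = 1 ∧
      (∫⁻ ξ, (sphereRiesz n α F₀ ξ) ^ q ∂(sphereMeasure n)) ^ (1 / q) =
        sInf (minimizingValues n α p q) := by
  have hn0 : n ≠ 0 := by lia
  have hl : 0 < α - n := sub_pos.2 hα
  have hsum : 0 < (n : ℝ) + α := by linarith [(n.cast_nonneg : (0 : ℝ) ≤ n)]
  have hdiff : (n : ℝ) - α ≠ 0 := by linarith
  have hp0 : 0 < p := by rw [hp]; positivity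
  have hp' : (n + (α - n) / 2) * p = n := by rw [hp]; field_simp; ring
  have hq' : -((α - n) / 2) * q = n := by rw [hq]; field_simp; ring
  obtain ⟨f₀, hm₀, hnorm₀, hpos, hmin⟩ :=
    exists_minimizer_rieszKernel_sphere (volume : Measure (EuclideanSpace ℝ (Fin (n + 1))))
      finrank_euclideanSpace_fin hn0 hl hp' hq'
  have hleast : IsLeast (minimizingValues n α p q) (eLpNorm' (kernelOperator (sphereMeasure n)
      (rieszKernel _ hl.le) fun ξ => f₀ ξ) q (sphereMeasure n)) := by
    refine ⟨(mem_minimizingValues_iff hl.le hp0).2 ⟨f₀, hm₀, hnorm₀, rfl⟩, fun r hr => ?_⟩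
    obtain ⟨f, hm, hnorm, rfl⟩ := (mem_minimizingValues_iff hl.le hp0).1 hr
    exact hmin _ hm.coe_nnreal_ennreal hnorm
  rw [hleast.csInf_eq]
  obtain ⟨F₀, hF₀, hnonneg, hint, hF₀norm, hvalue⟩ := hleast.1
  exact ⟨pos_iff_ne_zero.2 hpos, F₀, hF₀, hnonneg, hint, hF₀norm, hvalue.symm⟩
end

section
/- Let 1 ≤ n < α, p = 2n/(n+α), q = 2n/(n−α). Let F₀ ∈ L^p(𝕊ⁿ) be a nonnegative minimizer of ‖Ĩ_α F‖_{L^q(𝕊ⁿ)} over nonnegative F with ‖F‖_{L^p(𝕊ⁿ)} = 1, normalized so that ‖F₀‖_{L^p(𝕊ⁿ)} = 1. Then there exists a constant c₀ > 0 such that F₀(ξ) ≥ c₀ for every ξ ∈ 𝕊ⁿ, and (after multiplying F₀ by a suitable positive constant) F₀ is a positive weak solution of the Euler–Lagrange equation F₀(ξ)^{p−1} = ∫_{𝕊ⁿ} (Ĩ_α F₀(η))^{q−1} |ξ−η|^{α−n} dη for all ξ ∈ 𝕊ⁿ. -/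
open MeasureTheory ENNReal Metric

/-! Since `q < 0`, minimizing `‖TF‖_q` for the potential `TF = Ĩ_α F` is maximizing `∫ (TF)^q`, and
`t ↦ t^q` lies above its tangent at `TF₀`. As `T` is symmetric, comparing `F₀` with a competitor
`F` therefore gives `∫ F₀ G ≤ ∫ F G` for `G = T((TF₀)^(q-1))`, which is continuous and positive.
Test this with the competitor `F` proportional to `G^(1/(p-1))`, for which the reversed Hölder
inequality for `∫ F G` is an equality: strict concavity of `t ↦ t^p` forces `F₀ = F` almost
everywhere. So `F₀` is bounded below, and `F₀^(p-1) = a G` is the Euler–Lagrange equation up to the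
constant `a`, which is absorbed by scaling because `p ≠ q`. -/

section RealPowers

lemma rpow_eq_mul_div_rpow {x y : ℝ} (hx : 0 < x) (hy : 0 ≤ y) (r : ℝ) :
    y ^ r = x ^ r * (y / x) ^ r := by
  rw [← Real.mul_rpow hx.le (div_nonneg hy hx.le), mul_div_cancel₀ y hx.ne']

lemma tangent_rpow_eq {x : ℝ} (hx : 0 < x) (y r : ℝ) :
    (1 - r) * x ^ r + r * (x ^ (r - 1) * y) = x ^ r * (1 + r * (y / x - 1)) := by
  rw [Real.rpow_sub_one hx.ne']
  ring

lemma tangent_le_rpow_of_nonpos {x y q : ℝ} (hx : 0 < x) (hy : 0 < y) (hq : q ≤ 0) :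
    (1 - q) * x ^ q + q * (x ^ (q - 1) * y) ≤ y ^ q := by
  have ht : 0 < y / x := div_pos hy hx
  have bernoulli : 1 + q * (y / x - 1) ≤ (y / x) ^ q :=
    calc 1 + q * (y / x - 1) ≤ 1 + q * Real.log (y / x) :=
          add_le_add_right (mul_le_mul_of_nonpos_left (Real.log_le_sub_one_of_pos ht) hq) 1
      _ = Real.log (y / x) * q + 1 := by ring
      _ ≤ Real.exp (Real.log (y / x) * q) := Real.add_one_le_exp _
      _ = (y / x) ^ q := (Real.rpow_def_of_pos ht q).symm
  rw [tangent_rpow_eq hx, rpow_eq_mul_div_rpow hx hy.le]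
  exact mul_le_mul_of_nonneg_left bernoulli (Real.rpow_nonneg hx.le q)

lemma rpow_lt_tangent {x y p : ℝ} (hx : 0 < x) (hy : 0 ≤ y) (hxy : y ≠ x) (hp0 : 0 < p)
    (hp1 : p < 1) : y ^ p < (1 - p) * x ^ p + p * (x ^ (p - 1) * y) := by
  have hs : -1 ≤ y / x - 1 := by linarith [div_nonneg hy hx.le]
  have hs0 : y / x - 1 ≠ 0 := sub_ne_zero.2 fun h => hxy ((div_eq_one_iff_eq hx.ne').1 h)
  have bernoulli := rpow_one_add_lt_one_add_mul_self hs hs0 hp0 hp1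
  rw [add_sub_cancel] at bernoulli
  rw [tangent_rpow_eq hx, rpow_eq_mul_div_rpow hx hy]
  exact mul_lt_mul_of_pos_left bernoulli (Real.rpow_pos_of_pos hx p)

lemma rpow_le_tangent {x y p : ℝ} (hx : 0 < x) (hy : 0 ≤ y) (hp0 : 0 < p) (hp1 : p < 1) :
    y ^ p ≤ (1 - p) * x ^ p + p * (x ^ (p - 1) * y) := by
  rcases eq_or_ne y x with rfl | hxy
  · rw [tangent_rpow_eq hx, div_self hx.ne', sub_self, mul_zero, add_zero, mul_one]
  · exact (rpow_lt_tangent hx hy hxy hp0 hp1).le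

lemma exists_pos_rpow_mul_eq_rpow {a r s : ℝ} (ha : 0 < a) (hrs : s ≠ r) :
    ∃ c : ℝ, 0 < c ∧ c ^ r * a = c ^ s := by
  refine ⟨a ^ (s - r)⁻¹, Real.rpow_pos_of_pos ha _, ?_⟩
  have hpow : (a ^ (s - r)⁻¹) ^ (s - r) = a := Real.rpow_inv_rpow ha.le (sub_ne_zero.2 hrs)
  nth_rw 2 [← hpow]
  rw [← Real.rpow_add (Real.rpow_pos_of_pos ha _), add_sub_cancel]

end RealPowers

section IntegralInequalities

variable {X : Type*} [MeasurableSpace X] {μ : Measure X}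

lemma integral_pos_of_forall_pos [NeZero μ] {f : X → ℝ} (hf : Integrable f μ)
    (hf0 : ∀ x, 0 < f x) : 0 < ∫ x, f x ∂μ := by
  rw [integral_pos_iff_support_of_nonneg (fun x => (hf0 x).le) hf,
    Function.support_eq_univ fun x => (hf0 x).ne']
  exact Measure.measure_univ_pos.2 (NeZero.ne μ)

lemma not_ae_eq_zero_of_forall_pos [NeZero μ] {f : X → ℝ} (hf : ∀ x, 0 < f x) :
    ¬ f =ᵐ[μ] 0 := fun h =>
  let ⟨x, hx⟩ := h.exists
  (hf x).ne' hx

lemma neZero_of_not_ae_eq_zero {f : X → ℝ} (hf : ¬ f =ᵐ[μ] 0) : NeZero μ :=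
  ⟨fun hμ => hf (ae_eq_bot.2 hμ ▸ Filter.eventually_bot)⟩

lemma integral_rpow_le_integral_rpow_mul {u w : X → ℝ} {q : ℝ} (hq : q < 0)
    (hu0 : ∀ x, 0 < u x) (hw0 : ∀ x, 0 < w x)
    (hu : Integrable (fun x => u x ^ q) μ) (hw : Integrable (fun x => w x ^ q) μ)
    (huw : Integrable (fun x => u x ^ (q - 1) * w x) μ)
    (hle : ∫ x, w x ^ q ∂μ ≤ ∫ x, u x ^ q ∂μ) :
    ∫ x, u x ^ q ∂μ ≤ ∫ x, u x ^ (q - 1) * w x ∂μ := by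
  have tangent : (1 - q) * ∫ x, u x ^ q ∂μ + q * ∫ x, u x ^ (q - 1) * w x ∂μ
      ≤ ∫ x, w x ^ q ∂μ := by
    rw [← integral_const_mul, ← integral_const_mul,
      ← integral_add (hu.const_mul _) (huw.const_mul _)]
    exact integral_mono ((hu.const_mul _).add (huw.const_mul _)) hw fun x =>
      tangent_le_rpow_of_nonpos (hu0 x) (hw0 x) hq.le
  exact (mul_le_mul_left_of_neg hq).1 (by linarith)

/- Uniqueness in the reversed Hölder inequality: under the constraint `∫ f^p = ∫ g^p`, the integral
`∫ g^(p-1) f` is smallest at `f = g`. -/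
lemma ae_eq_of_integral_mul_rpow_le {f g : X → ℝ} {p : ℝ} (hp0 : 0 < p) (hp1 : p < 1)
    (hf0 : ∀ x, 0 ≤ f x) (hg0 : ∀ x, 0 < g x)
    (hf : Integrable (fun x => f x ^ p) μ) (hg : Integrable (fun x => g x ^ p) μ)
    (hgf : Integrable (fun x => g x ^ (p - 1) * f x) μ)
    (hnorm : ∫ x, g x ^ p ∂μ ≤ ∫ x, f x ^ p ∂μ)
    (hle : ∫ x, g x ^ (p - 1) * f x ∂μ ≤ ∫ x, g x ^ p ∂μ) : f =ᵐ[μ] g := by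
  have htangent : Integrable (fun x => (1 - p) * g x ^ p + p * (g x ^ (p - 1) * f x)) μ :=
    (hg.const_mul _).add (hgf.const_mul _)
  have hle_tangent : ∀ x, f x ^ p ≤ (1 - p) * g x ^ p + p * (g x ^ (p - 1) * f x) :=
    fun x => rpow_le_tangent (hg0 x) (hf0 x) hp0 hp1
  have htangent_le : ∫ x, (1 - p) * g x ^ p + p * (g x ^ (p - 1) * f x) ∂μ
      ≤ ∫ x, f x ^ p ∂μ := by
    rw [integral_add (hg.const_mul _) (hgf.const_mul _), integral_const_mul, integral_const_mul]
    linarith [mul_le_mul_of_nonneg_left hle hp0.le]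
  have heq := (integral_eq_iff_of_ae_le hf htangent (.of_forall hle_tangent)).1
    (le_antisymm (integral_mono hf htangent hle_tangent) htangent_le)
  filter_upwards [heq] with x hx
  by_contra hne
  exact (rpow_lt_tangent (hg0 x) (hf0 x) hne hp0 hp1).ne hx

lemma exists_pos_integral_const_mul_rpow_eq_one {f : X → ℝ} {p : ℝ} (hp : p ≠ 0)
    (hf0 : ∀ x, 0 ≤ f x) (hf : 0 < ∫ x, f x ^ p ∂μ) :
    ∃ c : ℝ, 0 < c ∧ ∫ x, (c * f x) ^ p ∂μ = 1 := by
  have hc : 0 < (∫ x, f x ^ p ∂μ)⁻¹ := inv_pos.2 hf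
  refine ⟨(∫ x, f x ^ p ∂μ)⁻¹ ^ p⁻¹, Real.rpow_pos_of_pos hc _, ?_⟩
  simp only [Real.mul_rpow (Real.rpow_nonneg hc.le _) (hf0 _), Real.rpow_inv_rpow hc.le hp,
    integral_const_mul, inv_mul_cancel₀ hf.ne']

lemma rpow_integral_abs_rpow_eq_one_iff {f : X → ℝ} {p : ℝ} (hp : p ≠ 0) (hf0 : ∀ x, 0 ≤ f x) :
    (∫ x, |f x| ^ p ∂μ) ^ (1 / p) = 1 ↔ ∫ x, f x ^ p ∂μ = 1 := by
  simp only [abs_of_nonneg (hf0 _)]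
  have hnonneg : 0 ≤ ∫ x, f x ^ p ∂μ := integral_nonneg fun x => Real.rpow_nonneg (hf0 x) p
  rw [one_div, Real.rpow_inv_eq hnonneg zero_le_one hp, Real.one_rpow]

end IntegralInequalities

section CompactSpace

variable {X : Type*} [TopologicalSpace X] [CompactSpace X]

lemma exists_pos_forall_le_of_continuous {f : X → ℝ} (hf : Continuous f) (hf0 : ∀ x, 0 < f x) :
    ∃ c : ℝ, 0 < c ∧ ∀ x, c ≤ f x := by
  obtain ⟨c, hc0, hc⟩ := isCompact_univ.exists_forall_le' hf.continuousOn fun x _ => hf0 x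
  exact ⟨c, hc0, fun x => hc x (Set.mem_univ x)⟩

variable [MeasurableSpace X] [OpensMeasurableSpace X] {μ : Measure X}

lemma integrable_of_continuous [IsFiniteMeasure μ] {f : X → ℝ} (hf : Continuous f) :
    Integrable f μ :=
  hf.integrable_of_hasCompactSupport (HasCompactSupport.of_compactSpace f)

lemma integrable_mul_of_continuous {f g : X → ℝ} (hf : Integrable f μ) (hg : Continuous g) :
    Integrable (fun x => f x * g x) μ := by
  obtain ⟨C, hC⟩ := isCompact_univ.exists_bound_of_continuousOn hg.continuousOn
  exact hf.mul_bdd hg.aestronglyMeasurable (.of_forall fun x => hC x (Set.mem_univ x))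

lemma integrable_rpow_of_continuous [IsFiniteMeasure μ] {f : X → ℝ} (hf : Continuous f)
    (hf0 : ∀ x, 0 < f x) (r : ℝ) : Integrable (fun x => f x ^ r) μ :=
  integrable_of_continuous (hf.rpow_const fun x => Or.inl (hf0 x).ne')

lemma exists_integral_rpow_eq_one_and_rpow_sub_one_eq [IsFiniteMeasure μ] [NeZero μ] {f : X → ℝ}
    {p : ℝ} (hp0 : p ≠ 0) (hp1 : p ≠ 1) (hf : Continuous f) (hf0 : ∀ x, 0 < f x) :
    ∃ (a : ℝ) (g : X → ℝ), 0 < a ∧ Continuous g ∧ (∀ x, 0 < g x) ∧ ∫ x, g x ^ p ∂μ = 1 ∧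
      ∀ x, g x ^ (p - 1) = a * f x := by
  have hh : Continuous fun x => f x ^ (p - 1)⁻¹ := hf.rpow_const fun x => Or.inl (hf0 x).ne'
  have hh0 : ∀ x, 0 < f x ^ (p - 1)⁻¹ := fun x => Real.rpow_pos_of_pos (hf0 x) _
  obtain ⟨b, hb, hb1⟩ := exists_pos_integral_const_mul_rpow_eq_one (μ := μ) hp0
    (fun x => (hh0 x).le) (integral_pos_of_forall_pos (integrable_rpow_of_continuous hh hh0 p)
      fun x => Real.rpow_pos_of_pos (hh0 x) p)
  refine ⟨b ^ (p - 1), fun x => b * f x ^ (p - 1)⁻¹, Real.rpow_pos_of_pos hb _,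
    continuous_const.mul hh, fun x => mul_pos hb (hh0 x), hb1, fun x => ?_⟩
  rw [Real.mul_rpow hb.le (hh0 x).le, Real.rpow_inv_rpow (hf0 x).le (sub_ne_zero.2 hp1)]

end CompactSpace

/-- The properties of the kernel `|x - y| ^ s`, `s > 0`, on which the argument relies. -/
structure IsPotentialKernel {X : Type*} [TopologicalSpace X] (K : X → X → ℝ) : Prop where
  continuous : Continuous (Function.uncurry K)
  symm : ∀ x y, K x y = K y x
  nonneg : ∀ x y, 0 ≤ K x y
  pos_of_ne : ∀ x y, x ≠ y → 0 < K x y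

lemma isPotentialKernel_dist_rpow {X : Type*} [MetricSpace X] {s : ℝ} (hs : 0 < s) :
    IsPotentialKernel fun x y : X => dist x y ^ s where
  continuous := continuous_dist.rpow_const fun _ => Or.inr hs.le
  symm x y := by rw [dist_comm]
  nonneg _ _ := Real.rpow_nonneg dist_nonneg s
  pos_of_ne _ _ hxy := Real.rpow_pos_of_pos (dist_pos.2 hxy) s

/-- The potential of `f` with kernel `K`, as a Bochner integral. It is `0` where that integral
diverges; `lkernelPotential` is the version that records divergence. -/
noncomputable def kernelPotential {X : Type*} [MeasurableSpace X] (μ : Measure X)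
    (K : X → X → ℝ) (f : X → ℝ) (x : X) : ℝ :=
  ∫ y, f y * K x y ∂μ

/-- The potential of a nonnegative `f` with kernel `K`, with value `∞` where the integral diverges.
The operator `Ĩ_α` on the sphere is the case `K ξ η = |ξ - η| ^ (α - n)`. -/
noncomputable def lkernelPotential {X : Type*} [MeasurableSpace X] (μ : Measure X)
    (K : X → X → ℝ) (f : X → ℝ) (x : X) : ℝ≥0∞ :=
  ∫⁻ y, ENNReal.ofReal (f y * K x y) ∂μ

/-- The (quasi-)norm in `L^q` of the potential of `f`. For `q < 0`, it is `∞` when the potential is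
infinite almost everywhere. -/
noncomputable def lkernelPotentialNorm {X : Type*} [MeasurableSpace X] (μ : Measure X)
    (K : X → X → ℝ) (q : ℝ) (f : X → ℝ) : ℝ≥0∞ :=
  (∫⁻ x, lkernelPotential μ K f x ^ q ∂μ) ^ (1 / q)

/-- The potential `G` of `(Tf)^(q-1)`, where `T` is the potential operator. Up to constants, `G` is
the functional derivative of `f ↦ ∫ (Tf)^q`, and `f^(p-1) = G` is the Euler–Lagrange equation. -/
noncomputable def dualPotential {X : Type*} [MeasurableSpace X] (μ : Measure X)
    (K : X → X → ℝ) (q : ℝ) (f : X → ℝ) : X → ℝ :=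
  kernelPotential μ K fun x => kernelPotential μ K f x ^ (q - 1)

section Potential

variable {X : Type*} [MeasurableSpace X] {μ : Measure X} {K : X → X → ℝ} {f g : X → ℝ} {q : ℝ}

lemma kernelPotential_const_mul (c : ℝ) (x : X) :
    kernelPotential μ K (fun y => c * f y) x = c * kernelPotential μ K f x := by
  simp only [kernelPotential, mul_assoc, integral_const_mul]

lemma dualPotential_const_mul {c : ℝ} (hc : 0 ≤ c) (hf : ∀ x, 0 ≤ kernelPotential μ K f x)
    (x : X) : dualPotential μ K q (fun y => c * f y) x = c ^ (q - 1) * dualPotential μ K q f x := by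
  simp only [dualPotential, kernelPotential_const_mul, Real.mul_rpow hc (hf _)]

lemma lkernelPotentialNorm_eq_top (hq : q < 0) (h : ∀ᵐ x ∂μ, lkernelPotential μ K f x = ∞) :
    lkernelPotentialNorm μ K q f = ∞ := by
  have hpow : ∀ᵐ x ∂μ, lkernelPotential μ K f x ^ q = 0 := by
    filter_upwards [h] with x hx
    rw [hx, ENNReal.top_rpow_of_neg hq]
  rw [lkernelPotentialNorm, lintegral_congr_ae hpow, lintegral_zero,
    ENNReal.zero_rpow_of_neg (one_div_neg.2 hq)]

variable [TopologicalSpace X] [OpensMeasurableSpace X]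

lemma integrable_mul_kernel_of_lkernelPotential_ne_top (hK : IsPotentialKernel K)
    (hf : AEStronglyMeasurable f μ) (hf0 : ∀ x, 0 ≤ f x) {x : X}
    (hx : lkernelPotential μ K f x ≠ ∞) : Integrable (fun y => f y * K x y) μ := by
  refine ⟨hf.mul (hK.continuous.uncurry_left x).aestronglyMeasurable, ?_⟩
  rw [hasFiniteIntegral_iff_ofReal (.of_forall fun y => mul_nonneg (hf0 y) (hK.nonneg x y))]
  exact lt_top_iff_ne_top.2 hx

variable [CompactSpace X]

lemma integrable_mul_kernel (hK : Continuous (Function.uncurry K)) (hf : Integrable f μ) (x : X) :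
    Integrable (fun y => f y * K x y) μ :=
  integrable_mul_of_continuous hf (hK.uncurry_left x)

lemma continuous_kernelPotential [FirstCountableTopology X] (hK : Continuous (Function.uncurry K))
    (hf : Integrable f μ) : Continuous (kernelPotential μ K f) := by
  obtain ⟨C, hC⟩ := isCompact_univ.exists_bound_of_continuousOn hK.continuousOn
  refine continuous_of_dominated (bound := fun y => |f y| * C)
    (fun x => (integrable_mul_kernel hK hf x).aestronglyMeasurable)
    (fun x => .of_forall fun y => ?_) (hf.abs.mul_const C)
    (.of_forall fun y => continuous_const.mul (hK.uncurry_right y))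
  rw [norm_mul, Real.norm_eq_abs]
  exact mul_le_mul_of_nonneg_left (hC (x, y) (Set.mem_univ _)) (abs_nonneg _)

lemma kernelPotential_pos [NullSingletonClass μ] (hK : IsPotentialKernel K) (hf : Integrable f μ)
    (hf0 : ∀ x, 0 ≤ f x) (hne : ¬ f =ᵐ[μ] 0) (x : X) : 0 < kernelPotential μ K f x := by
  have hnonneg : ∀ y, 0 ≤ f y * K x y := fun y => mul_nonneg (hf0 y) (hK.nonneg x y)
  refine (integral_nonneg hnonneg).lt_of_ne' fun hzero => hne ?_
  have hx : ∀ᵐ y ∂μ, y ≠ x := compl_mem_ae_iff.2 (measure_singleton x)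
  filter_upwards [(integral_eq_zero_iff_of_nonneg hnonneg
    (integrable_mul_kernel hK.continuous hf x)).1 hzero, hx] with y hy hyx
  exact (mul_eq_zero.1 hy).resolve_right (hK.pos_of_ne x y hyx.symm).ne'

lemma integral_mul_kernelPotential_comm [SecondCountableTopology X] [SFinite μ]
    (hK : Continuous (Function.uncurry K)) (hsymm : ∀ x y, K x y = K y x)
    (hf : Integrable f μ) (hg : Integrable g μ) :
    ∫ x, g x * kernelPotential μ K f x ∂μ = ∫ x, f x * kernelPotential μ K g x ∂μ := by
  have hint : Integrable (Function.uncurry fun x y => g x * f y * K x y) (μ.prod μ) :=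
    integrable_mul_of_continuous (hg.mul_prod hf) hK
  calc ∫ x, g x * kernelPotential μ K f x ∂μ
      = ∫ x, ∫ y, g x * f y * K x y ∂μ ∂μ := by
        simp only [kernelPotential, ← integral_const_mul, mul_assoc]
    _ = ∫ y, ∫ x, g x * f y * K x y ∂μ ∂μ := integral_integral_swap hint
    _ = ∫ y, f y * kernelPotential μ K g y ∂μ := by
        simp only [kernelPotential, ← integral_const_mul, hsymm _, mul_left_comm, mul_assoc]

lemma lkernelPotential_eq_ofReal (hK : IsPotentialKernel K) (hf : Integrable f μ)
    (hf0 : ∀ x, 0 ≤ f x) (x : X) :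
    lkernelPotential μ K f x = ENNReal.ofReal (kernelPotential μ K f x) :=
  (ofReal_integral_eq_lintegral_ofReal (integrable_mul_kernel hK.continuous hf x)
    (.of_forall fun y => mul_nonneg (hf0 y) (hK.nonneg x y))).symm

/- `K a + K b` vanishes nowhere, hence has a bounded inverse. -/
lemma integrable_of_lkernelPotential_ne_top (hK : IsPotentialKernel K)
    (hf : AEStronglyMeasurable f μ) (hf0 : ∀ x, 0 ≤ f x) {a b : X} (hab : a ≠ b)
    (ha : lkernelPotential μ K f a ≠ ∞) (hb : lkernelPotential μ K f b ≠ ∞) :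
    Integrable f μ := by
  have hpos : ∀ y, 0 < K a y + K b y := fun y => by
    rcases eq_or_ne a y with rfl | hay
    · exact add_pos_of_nonneg_of_pos (hK.nonneg a a) (hK.pos_of_ne b a hab.symm)
    · exact add_pos_of_pos_of_nonneg (hK.pos_of_ne a y hay) (hK.nonneg b y)
  have hinv : Continuous fun y => (K a y + K b y)⁻¹ :=
    ((hK.continuous.uncurry_left a).add (hK.continuous.uncurry_left b)).inv₀ fun y => (hpos y).ne'
  refine (integrable_mul_of_continuous
    ((integrable_mul_kernel_of_lkernelPotential_ne_top hK hf hf0 ha).add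
      (integrable_mul_kernel_of_lkernelPotential_ne_top hK hf hf0 hb)) hinv).congr
    (.of_forall fun y => ?_)
  simp only [Pi.add_apply, ← mul_add]
  exact mul_inv_cancel_right₀ (hpos y).ne' (f y)

lemma integrable_of_lkernelPotentialNorm_ne_top [NullSingletonClass μ] (hK : IsPotentialKernel K)
    (hq : q < 0) (hf : AEStronglyMeasurable f μ) (hf0 : ∀ x, 0 ≤ f x)
    (h : lkernelPotentialNorm μ K q f ≠ ∞) : Integrable f μ := by
  have hfinite : μ {x | lkernelPotential μ K f x ≠ ∞} ≠ 0 := fun hnull =>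
    h (lkernelPotentialNorm_eq_top hq (ae_iff.2 hnull))
  obtain ⟨a, ha, b, hb, hab⟩ := Set.not_subsingleton_iff.1 fun hs => hfinite (hs.measure_zero μ)
  exact integrable_of_lkernelPotential_ne_top hK hf hf0 hab ha hb

variable [FirstCountableTopology X]

lemma continuous_kernelPotential_rpow [NullSingletonClass μ] (hK : IsPotentialKernel K)
    (hf : Integrable f μ) (hf0 : ∀ x, 0 ≤ f x) (hne : ¬ f =ᵐ[μ] 0) (r : ℝ) :
    Continuous fun x => kernelPotential μ K f x ^ r :=
  (continuous_kernelPotential hK.continuous hf).rpow_const fun x =>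
    Or.inl (kernelPotential_pos hK hf hf0 hne x).ne'

variable [IsFiniteMeasure μ] [NullSingletonClass μ]

lemma continuous_dualPotential (hK : IsPotentialKernel K)
    (hf : Integrable f μ) (hf0 : ∀ x, 0 ≤ f x) (hne : ¬ f =ᵐ[μ] 0) :
    Continuous (dualPotential μ K q f) :=
  continuous_kernelPotential hK.continuous
    (integrable_of_continuous (continuous_kernelPotential_rpow hK hf hf0 hne (q - 1)))

lemma lintegral_lkernelPotential_rpow_mul_kernel (hK : IsPotentialKernel K) (hf : Integrable f μ)
    (hf0 : ∀ x, 0 ≤ f x) (hne : ¬ f =ᵐ[μ] 0) (x : X) :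
    ∫⁻ y, lkernelPotential μ K f y ^ (q - 1) * ENNReal.ofReal (K x y) ∂μ
      = ENNReal.ofReal (dualPotential μ K q f x) := by
  have hpos := kernelPotential_pos hK hf hf0 hne
  have hpow : ∀ y, 0 ≤ kernelPotential μ K f y ^ (q - 1) := fun y =>
    (Real.rpow_pos_of_pos (hpos y) (q - 1)).le
  simp only [lkernelPotential_eq_ofReal hK hf hf0, ENNReal.ofReal_rpow_of_pos (hpos _),
    ← ENNReal.ofReal_mul (hpow _)]
  exact lkernelPotential_eq_ofReal hK (integrable_of_continuous
    (continuous_kernelPotential_rpow hK hf hf0 hne (q - 1))) hpow x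

lemma integral_kernelPotential_rpow_pos (hK : IsPotentialKernel K) (hf : Integrable f μ)
    (hf0 : ∀ x, 0 ≤ f x) (hne : ¬ f =ᵐ[μ] 0) (r : ℝ) :
    0 < ∫ x, kernelPotential μ K f x ^ r ∂μ :=
  have := neZero_of_not_ae_eq_zero hne
  integral_pos_of_forall_pos
    (integrable_of_continuous (continuous_kernelPotential_rpow hK hf hf0 hne r))
    fun x => Real.rpow_pos_of_pos (kernelPotential_pos hK hf hf0 hne x) r

lemma dualPotential_pos (hK : IsPotentialKernel K)
    (hf : Integrable f μ) (hf0 : ∀ x, 0 ≤ f x) (hne : ¬ f =ᵐ[μ] 0) (x : X) :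
    0 < dualPotential μ K q f x := by
  have := neZero_of_not_ae_eq_zero hne
  have hpow : ∀ x, 0 < kernelPotential μ K f x ^ (q - 1) := fun x =>
    Real.rpow_pos_of_pos (kernelPotential_pos hK hf hf0 hne x) (q - 1)
  exact kernelPotential_pos hK
    (integrable_of_continuous (continuous_kernelPotential_rpow hK hf hf0 hne (q - 1)))
    (fun x => (hpow x).le) (not_ae_eq_zero_of_forall_pos hpow) x

lemma lkernelPotentialNorm_eq_ofReal (hK : IsPotentialKernel K) (hf : Integrable f μ)
    (hf0 : ∀ x, 0 ≤ f x) (hne : ¬ f =ᵐ[μ] 0) :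
    lkernelPotentialNorm μ K q f
      = ENNReal.ofReal ((∫ x, kernelPotential μ K f x ^ q ∂μ) ^ (1 / q)) := by
  have hpos := kernelPotential_pos hK hf hf0 hne
  rw [← ENNReal.ofReal_rpow_of_pos (integral_kernelPotential_rpow_pos hK hf hf0 hne q),
    ofReal_integral_eq_lintegral_ofReal
      (integrable_of_continuous (continuous_kernelPotential_rpow hK hf hf0 hne q))
      (.of_forall fun x => (Real.rpow_pos_of_pos (hpos x) q).le)]
  simp only [lkernelPotentialNorm, lkernelPotential_eq_ofReal hK hf hf0,
    ENNReal.ofReal_rpow_of_pos (hpos _)]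

lemma lkernelPotentialNorm_le_iff (hK : IsPotentialKernel K) (hq : q < 0)
    (hf : Integrable f μ) (hf0 : ∀ x, 0 ≤ f x) (hfne : ¬ f =ᵐ[μ] 0)
    (hg : Integrable g μ) (hg0 : ∀ x, 0 ≤ g x) (hgne : ¬ g =ᵐ[μ] 0) :
    lkernelPotentialNorm μ K q f ≤ lkernelPotentialNorm μ K q g ↔
      ∫ x, kernelPotential μ K g x ^ q ∂μ ≤ ∫ x, kernelPotential μ K f x ^ q ∂μ := by
  have hfpos := integral_kernelPotential_rpow_pos hK hf hf0 hfne q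
  have hgpos := integral_kernelPotential_rpow_pos hK hg hg0 hgne q
  rw [lkernelPotentialNorm_eq_ofReal hK hf hf0 hfne, lkernelPotentialNorm_eq_ofReal hK hg hg0 hgne,
    ENNReal.ofReal_le_ofReal_iff (Real.rpow_nonneg hgpos.le _),
    Real.rpow_le_rpow_iff_of_neg hfpos hgpos (one_div_neg.2 hq)]

end Potential

/-- `f` is nonnegative, satisfies `∫ f ^ p = 1`, and minimizes the `L^q` norm of the potential under
that constraint. Minimality is tested on continuous positive competitors only. -/
structure IsPotentialMinimizer {X : Type*} [TopologicalSpace X] [MeasurableSpace X]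
    (μ : Measure X) (K : X → X → ℝ) (p q : ℝ) (f : X → ℝ) : Prop where
  aestronglyMeasurable : AEStronglyMeasurable f μ
  nonneg : ∀ x, 0 ≤ f x
  integral_rpow : ∫ x, f x ^ p ∂μ = 1
  norm_le : ∀ g : X → ℝ, Continuous g → (∀ x, 0 < g x) → ∫ x, g x ^ p ∂μ = 1 →
    lkernelPotentialNorm μ K q f ≤ lkernelPotentialNorm μ K q g

namespace IsPotentialMinimizer

variable {X : Type*} [TopologicalSpace X] [MeasurableSpace X] {μ : Measure X} {K : X → X → ℝ}
  {p q : ℝ} {f g : X → ℝ}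

lemma not_ae_eq_zero (hf : IsPotentialMinimizer μ K p q f) (hp : p ≠ 0) : ¬ f =ᵐ[μ] 0 := by
  intro h
  have hzero : ∫ x, f x ^ p ∂μ = 0 := integral_eq_zero_of_ae <| by
    filter_upwards [h] with x hx
    simp only [hx, Pi.zero_apply, Real.zero_rpow hp]
  exact zero_ne_one (hzero.symm.trans hf.integral_rpow)

variable [CompactSpace X] [SecondCountableTopology X] [OpensMeasurableSpace X]
  [IsFiniteMeasure μ] [NullSingletonClass μ]

lemma integrable (hf : IsPotentialMinimizer μ K p q f) (hK : IsPotentialKernel K) (hp : p ≠ 0)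
    (hq : q < 0) : Integrable f μ := by
  have := neZero_of_not_ae_eq_zero (hf.not_ae_eq_zero hp)
  obtain ⟨c, hc, hc1⟩ := exists_pos_integral_const_mul_rpow_eq_one (μ := μ) (f := fun _ => 1) hp
    (fun _ => zero_le_one) (integral_pos_of_forall_pos (integrable_of_continuous (by fun_prop))
      fun _ => by rw [Real.one_rpow]; exact one_pos)
  have hc0 : ∀ _ : X, 0 < c * 1 := fun _ => by rwa [mul_one]
  refine integrable_of_lkernelPotentialNorm_ne_top hK hq hf.aestronglyMeasurable hf.nonneg
    (ne_top_of_le_ne_top ?_ (hf.norm_le _ continuous_const hc0 hc1))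
  rw [lkernelPotentialNorm_eq_ofReal hK (integrable_of_continuous continuous_const)
    (fun x => (hc0 x).le) (not_ae_eq_zero_of_forall_pos hc0)]
  exact ENNReal.ofReal_ne_top

lemma integral_mul_dualPotential_le (hf : IsPotentialMinimizer μ K p q f)
    (hK : IsPotentialKernel K) (hp : p ≠ 0) (hq : q < 0) (hg : Continuous g)
    (hg0 : ∀ x, 0 < g x) (hg1 : ∫ x, g x ^ p ∂μ = 1) :
    ∫ x, f x * dualPotential μ K q f x ∂μ ≤ ∫ x, g x * dualPotential μ K q f x ∂μ := by
  have hfi : Integrable f μ := hf.integrable hK hp hq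
  have hgi : Integrable g μ := integrable_of_continuous hg
  have hfne := hf.not_ae_eq_zero hp
  have := neZero_of_not_ae_eq_zero hfne
  have hgne : ¬ g =ᵐ[μ] 0 := not_ae_eq_zero_of_forall_pos hg0
  have hg0' := fun x => (hg0 x).le
  have hTf := kernelPotential_pos hK hfi hf.nonneg hfne
  have hTfc := continuous_kernelPotential_rpow hK hfi hf.nonneg hfne
  have hmax := (lkernelPotentialNorm_le_iff hK hq hfi hf.nonneg hfne hgi hg0' hgne).1
    (hf.norm_le g hg hg0 hg1)
  calc ∫ x, f x * dualPotential μ K q f x ∂μ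
      = ∫ x, kernelPotential μ K f x ^ (q - 1) * kernelPotential μ K f x ∂μ :=
        (integral_mul_kernelPotential_comm hK.continuous hK.symm hfi
          (integrable_of_continuous (hTfc (q - 1)))).symm
    _ = ∫ x, kernelPotential μ K f x ^ q ∂μ := by
        simp only [← Real.rpow_add_one (hTf _).ne', sub_add_cancel]
    _ ≤ ∫ x, kernelPotential μ K f x ^ (q - 1) * kernelPotential μ K g x ∂μ :=
        integral_rpow_le_integral_rpow_mul hq hTf (kernelPotential_pos hK hgi hg0' hgne)
          (integrable_of_continuous (hTfc q))
          (integrable_of_continuous (continuous_kernelPotential_rpow hK hgi hg0' hgne q))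
          (integrable_of_continuous
            ((hTfc (q - 1)).mul (continuous_kernelPotential hK.continuous hgi))) hmax
    _ = ∫ x, g x * dualPotential μ K q f x ∂μ :=
        integral_mul_kernelPotential_comm hK.continuous hK.symm hgi
          (integrable_of_continuous (hTfc (q - 1)))

lemma exists_ae_eq_and_rpow_sub_one_eq (hf : IsPotentialMinimizer μ K p q f)
    (hK : IsPotentialKernel K) (hp0 : 0 < p) (hp1 : p < 1) (hq : q < 0) :
    ∃ (a : ℝ) (g : X → ℝ), 0 < a ∧ Continuous g ∧ (∀ x, 0 < g x) ∧ f =ᵐ[μ] g ∧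
      ∀ x, g x ^ (p - 1) = a * dualPotential μ K q f x := by
  have hfi := hf.integrable hK hp0.ne' hq
  have hfne := hf.not_ae_eq_zero hp0.ne'
  have := neZero_of_not_ae_eq_zero hfne
  have hGc : Continuous (dualPotential μ K q f) :=
    continuous_dualPotential hK hfi hf.nonneg hfne
  obtain ⟨a, g, ha, hgc, hg0, hg1, hg⟩ := exists_integral_rpow_eq_one_and_rpow_sub_one_eq (μ := μ)
    hp0.ne' hp1.ne hGc (dualPotential_pos hK hfi hf.nonneg hfne)
  have hweight : ∀ h : X → ℝ, (fun x => g x ^ (p - 1) * h x)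
      = fun x => a * (h x * dualPotential μ K q f x) := fun h => by
    funext x
    rw [hg, mul_assoc, mul_comm (h x)]
  refine ⟨a, g, ha, hgc, hg0, ae_eq_of_integral_mul_rpow_le hp0 hp1 hf.nonneg hg0
    (.of_integral_ne_zero (hf.integral_rpow.trans_ne one_ne_zero))
    (integrable_rpow_of_continuous hgc hg0 p) ?_ (hg1.trans hf.integral_rpow.symm).le ?_, hg⟩
  · rw [hweight]
    exact (integrable_mul_of_continuous hfi hGc).const_mul a
  · calc ∫ x, g x ^ (p - 1) * f x ∂μ
        = a * ∫ x, f x * dualPotential μ K q f x ∂μ := by rw [hweight, integral_const_mul]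
      _ ≤ a * ∫ x, g x * dualPotential μ K q f x ∂μ := mul_le_mul_of_nonneg_left
          (hf.integral_mul_dualPotential_le hK hp0.ne' hq hgc hg0 hg1) ha.le
      _ = ∫ x, g x ^ (p - 1) * g x ∂μ := by rw [hweight, integral_const_mul]
      _ = ∫ x, g x ^ p ∂μ := by
          simp only [← Real.rpow_add_one (hg0 _).ne', sub_add_cancel]

end IsPotentialMinimizer

theorem minimizer_euler_lagrange_general {X : Type*} [TopologicalSpace X] [CompactSpace X]
    [SecondCountableTopology X] [MeasurableSpace X] [OpensMeasurableSpace X] {μ : Measure X}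
    [IsFiniteMeasure μ] [NullSingletonClass μ] {K : X → X → ℝ} {p q : ℝ} {f : X → ℝ}
    (hK : IsPotentialKernel K) (hp0 : 0 < p) (hp1 : p < 1) (hq : q < 0)
    (hf : IsPotentialMinimizer μ K p q f) :
    (∃ c₀ : ℝ, 0 < c₀ ∧ ∀ᵐ x ∂μ, c₀ ≤ f x) ∧
    (∃ c : ℝ, 0 < c ∧ ∀ᵐ x ∂μ, ENNReal.ofReal ((c * f x) ^ (p - 1)) =
      ∫⁻ y, lkernelPotential μ K (fun z => c * f z) y ^ (q - 1) * ENNReal.ofReal (K x y) ∂μ) := by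
  have hfi := hf.integrable hK hp0.ne' hq
  have hfne := hf.not_ae_eq_zero hp0.ne'
  obtain ⟨a, g, ha, hgc, hg0, hfg, hg⟩ := hf.exists_ae_eq_and_rpow_sub_one_eq hK hp0 hp1 hq
  constructor
  · obtain ⟨c₀, hc₀, hle⟩ := exists_pos_forall_le_of_continuous hgc hg0
    exact ⟨c₀, hc₀, hfg.mono fun x hx => hx ▸ hle x⟩
  · obtain ⟨c, hc, hscale⟩ := exists_pos_rpow_mul_eq_rpow ha (show q - 1 ≠ p - 1 by linarith)
    have hcf : ¬ (fun x => c * f x) =ᵐ[μ] 0 := fun h => hfne <| h.mono fun x hx =>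
      (mul_eq_zero.1 hx).resolve_left hc.ne'
    refine ⟨c, hc, hfg.mono fun x hx => ?_⟩
    rw [lintegral_lkernelPotential_rpow_mul_kernel hK (hfi.const_mul c)
        (fun x => mul_nonneg hc.le (hf.nonneg x)) hcf,
      dualPotential_const_mul hc.le fun x => (kernelPotential_pos hK hfi hf.nonneg hfne x).le,
      hx, Real.mul_rpow hc.le (hg0 x).le, hg, ← mul_assoc, hscale]

open scoped Pointwise in
/- The cone over a point lies in a line. -/
lemma nullSingletonClass_toSphere_s12 {E : Type*} [NormedAddCommGroup E] [NormedSpace ℝ E]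
    [MeasurableSpace E] [BorelSpace E] (μ : Measure E) [μ.IsAddHaarMeasure]
    (hE : 1 < Module.finrank ℝ E) : NullSingletonClass μ.toSphere where
  measure_singleton x := by
    have := Module.finite_of_finrank_pos (zero_lt_one.trans hE)
    have hspan : μ (Submodule.span ℝ {(x : E)}) = 0 :=
      Measure.addHaar_submodule μ _ fun htop => by
        have h := finrank_span_singleton (K := ℝ) (ne_zero_of_mem_unit_sphere x)
        rw [htop, finrank_top] at h
        exact hE.ne' h
    have hcone : Set.Ioo (0 : ℝ) 1 • ((↑) '' {x}) ⊆ (Submodule.span ℝ {(x : E)} : Set E) := by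
      rw [Set.image_singleton]
      rintro _ ⟨t, -, _, rfl, rfl⟩
      exact Submodule.smul_mem _ t (Submodule.mem_span_singleton_self _)
    rw [Measure.toSphere_apply' μ (measurableSet_singleton x), measure_mono_null hcone hspan,
      mul_zero]

/-- **Lower bound and Euler–Lagrange equation for minimizers** (Section 3.1): for
`1 ≤ n < α`, `p = 2n/(n+α)`, `q = 2n/(n-α)`, a nonnegative minimizer `F₀` of
`‖Ĩ_α F‖_{L^q(𝕊ⁿ)}` among nonnegative `F` with `‖F‖_{L^p(𝕊ⁿ)} = 1` is bounded below by
a positive constant, and, after multiplication by a suitable positive constant, is a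
positive weak solution of
`F₀(ξ)^(p-1) = ∫_{𝕊ⁿ} (Ĩ_α F₀(η))^(q-1) |ξ-η|^(α-n) dη`. -/
theorem minimizer_euler_lagrange (n : ℕ) (hn : 1 ≤ n) (α p q : ℝ)
    (hα : (n : ℝ) < α)
    (hp : p = 2 * n / ((n : ℝ) + α)) (hq : q = 2 * n / ((n : ℝ) - α))
    (F₀ : sphere (0 : EuclideanSpace ℝ (Fin (n + 1))) 1 → ℝ)
    (hF₀ : Measurable F₀) (hF₀pos : ∀ ξ, 0 ≤ F₀ ξ)
    (hF₀Lp : Integrable (fun ξ => |F₀ ξ| ^ p) (sphereMeasure n))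
    (hF₀norm : (∫ ξ, |F₀ ξ| ^ p ∂(sphereMeasure n)) ^ (1 / p) = 1)
    (hmin : ∀ F : sphere (0 : EuclideanSpace ℝ (Fin (n + 1))) 1 → ℝ,
      Measurable F → (∀ ξ, 0 ≤ F ξ) →
      Integrable (fun ξ => |F ξ| ^ p) (sphereMeasure n) →
      (∫ ξ, |F ξ| ^ p ∂(sphereMeasure n)) ^ (1 / p) = 1 →
      (∫⁻ ξ, (sphereRiesz n α F₀ ξ) ^ q ∂(sphereMeasure n)) ^ (1 / q) ≤
        (∫⁻ ξ, (sphereRiesz n α F ξ) ^ q ∂(sphereMeasure n)) ^ (1 / q)) :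
    (∃ c₀ : ℝ, 0 < c₀ ∧ ∀ᵐ ξ ∂(sphereMeasure n), c₀ ≤ F₀ ξ) ∧
    (∃ c : ℝ, 0 < c ∧ ∀ᵐ ξ ∂(sphereMeasure n),
      ENNReal.ofReal ((c * F₀ ξ) ^ (p - 1)) =
        ∫⁻ η, (sphereRiesz n α (fun ζ => c * F₀ ζ) η) ^ (q - 1) *
          ENNReal.ofReal (dist (ξ : EuclideanSpace ℝ (Fin (n + 1)))
            (η : EuclideanSpace ℝ (Fin (n + 1))) ^ (α - n)) ∂(sphereMeasure n)) := by
  have hn0 : (0 : ℝ) < n := Nat.cast_pos.2 hn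
  have hp0 : 0 < p := hp ▸ div_pos (by linarith) (by linarith)
  have hp1 : p < 1 := hp ▸ (div_lt_one (by linarith)).2 (by linarith)
  have hq0 : q < 0 := hq ▸ div_neg_of_pos_of_neg (by linarith) (by linarith)
  have : NullSingletonClass (sphereMeasure n) := nullSingletonClass_toSphere_s12 volume (by
    rw [finrank_euclideanSpace_fin]
    exact Nat.lt_add_one_of_le hn)
  have : IsFiniteMeasure (sphereMeasure n) := inferInstanceAs (IsFiniteMeasure volume.toSphere)
  refine minimizer_euler_lagrange_general (isPotentialKernel_dist_rpow (sub_pos.2 hα)) hp0 hp1 hq0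
    ⟨hF₀.aestronglyMeasurable, hF₀pos,
      (rpow_integral_abs_rpow_eq_one_iff hp0.ne' hF₀pos).1 hF₀norm, fun F hF hF0 hF1 => ?_⟩
  have hF0' := fun ξ => (hF0 ξ).le
  exact hmin F hF.measurable hF0'
    (by simpa only [abs_of_pos (hF0 _)] using integrable_rpow_of_continuous hF hF0 p)
    ((rpow_integral_abs_rpow_eq_one_iff hp0.ne' hF0').2 hF1)
end
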